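/- arXiv:1207.4990 — 2 statements merged into one kernel-verified Lean document; each statement's English description precedes it below -/
import Mathlib

section
/- Szegő's Strong Limit Theorem: Let φ be a positive function on the unit circle of class C^{1+ε} for some ε > 0 (i.e. φ, as a function of θ, is continuously differentiable with derivative Hölder continuous of exponent ε), and let (log φ)_k denote the k-th Fourier coefficient of log φ. Then D_n(φ)/exp(n·(log φ)_0) converges, as n → ∞, to exp(∑_{k=1}^{∞} k·|(log φ)_k|²). -/
/-!
The determinant `D_n(e^V)` is controlled by comparison with weights for which it is known exactly.

* For a Bernstein–Szegő weight `1 / |p|²` on the unit circle, with `p = ∏ (1 - a z)` and all `|a| < 1`,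
  Cauchy's formula computes the Gram matrix of a basis of polynomials adapted to the removal of one
  factor of `p`. This gives a recursion for the determinants (`toep_bs_step`) which matches the one
  for the energy `∑ k |V_k|²` of the exponent `V = -2 log |p|` (`energy_bsLog_cons`). Hence
  `D_n = exp (energy)` once `n ≥ deg p` (`tz_bsLog_eq`). Since `V` has mean zero, the Toeplitz matrix
  dominates the projection onto the constant term, so `D_n` increases with `n` and
  `D_n ≤ exp (energy)` for every `n` (`tz_bsLog_le`).
* The exponents `-2 log |p|` are, up to constants, dense in the periodic `C¹` functions
  (`PerC1.bsApprox`): high powers of `1 - u z^k` with `u` small approximate the characters, and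
  trigonometric polynomials are uniformly dense. The square root of the energy is a seminorm bounded
  by the supremum of `|V'|`, by Parseval's identity.
* `D_n` is monotone in the weight, so the upper bound `D_n(e^V) ≤ exp (n V_0 + energy V)` passes to
  every periodic `C¹` function `V` (`PerC1.tz_le`).
* `V ↦ D_n(e^V)` is midpoint log-convex (`tz_sq_le`). With a Bernstein–Szegő exponent `P` close to
  `V`, the inequality `D_n(e^P)² ≤ D_n(e^V) D_n(e^(2P - V))` and the upper bound for `2P - V` give the
  matching lower bound (`PerC1.le_tz`).
-/

open MeasureTheory Filter Topology

/-- The `ℓ`-th Fourier coefficient of a function `θ ↦ φ(e^{iθ})` on the unit circle. -/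
noncomputable def fourierCoeff' (φ : ℝ → ℂ) (ℓ : ℤ) : ℂ :=
  ((2 * Real.pi : ℝ) : ℂ)⁻¹ *
    ∫ θ in (-Real.pi)..Real.pi, Complex.exp (-Complex.I * (ℓ : ℂ) * (θ : ℂ)) * φ θ

/-- The Toeplitz determinant `D_n(φ) = det (φ_{j-k})_{0 ≤ j,k ≤ n-1}`. -/
noncomputable def toeplitzDet (φ : ℝ → ℂ) (n : ℕ) : ℂ :=
  (Matrix.of fun j k : Fin n => fourierCoeff' φ ((j : ℤ) - (k : ℤ))).det

namespace Szego

/-! ### Determinant inequalities for positive matrices -/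

section LinAlg

open scoped ComplexOrder MatrixOrder Matrix

variable {n : Type*} [Fintype n] [DecidableEq n]

lemma one_le_det_one_add {P : Matrix n n ℂ} (hP : P.PosSemidef) : 1 ≤ (1 + P).det := by
  have h1 : (Matrix.scalar n (-1 : ℂ) - P).det = ∏ i, (-1 - (hP.1.eigenvalues i : ℂ)) := by
    rw [← Matrix.eval_charpoly, hP.1.charpoly_eq, Polynomial.eval_prod]
    simp
  have h2 : Matrix.scalar n (-1 : ℂ) - P = -(1 + P) := by
    rw [map_neg, map_one]; abel
  have h3 : ∀ i, (-1 - (hP.1.eigenvalues i : ℂ)) = -((1 + hP.1.eigenvalues i : ℝ) : ℂ) := by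
    intro i; push_cast; ring
  rw [h2, Matrix.det_neg] at h1
  simp_rw [h3] at h1
  rw [Finset.prod_neg, Finset.card_univ] at h1
  have h4 := mul_left_cancel₀ (pow_ne_zero _ (by norm_num)) h1
  rw [h4, ← Complex.ofReal_prod]
  have : (1 : ℝ) ≤ ∏ i, (1 + hP.1.eigenvalues i) :=
    Finset.one_le_prod fun i _ => by linarith [hP.eigenvalues_nonneg i]
  exact_mod_cast this

/-- The determinant is monotone for the Loewner order. -/
lemma det_le_det_add {M S : Matrix n n ℂ} (hM : M.PosDef) (hS : S.PosSemidef) :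
    M.det ≤ (M + S).det := by
  set R := CFC.sqrt M with hR
  have hRM : R * R = M := CFC.sqrt_mul_sqrt_self M hM.posSemidef.nonneg
  have hRp : R.PosSemidef := Matrix.nonneg_iff_posSemidef.mp (CFC.sqrt_nonneg M)
  have hRdet : R.det ≠ 0 := fun h => hM.det_pos.ne' (by rw [← hRM, Matrix.det_mul, h, zero_mul])
  have hRu : IsUnit R.det := hRdet.isUnit
  have hRi : (R⁻¹)ᴴ = R⁻¹ := by rw [Matrix.conjTranspose_nonsing_inv, hRp.1.eq]
  have hP : (R⁻¹ * S * R⁻¹).PosSemidef := by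
    have := hS.conjTranspose_mul_mul_same R⁻¹
    rwa [hRi] at this
  have h : M + S = R * (1 + R⁻¹ * S * R⁻¹) * R := by
    rw [mul_add, add_mul, mul_one, hRM]
    congr 1
    rw [mul_assoc R, mul_assoc (R⁻¹ * S), Matrix.nonsing_inv_mul _ hRu, mul_one, ← mul_assoc,
      Matrix.mul_nonsing_inv _ hRu, one_mul]
  have h1 := one_le_det_one_add hP
  rw [h, Matrix.det_mul, Matrix.det_mul, mul_right_comm, ← Matrix.det_mul, hRM]
  exact le_mul_of_one_le_right hM.det_pos.le h1

/-- The determinantal Cauchy–Schwarz inequality for a positive `2 × 2` block matrix, in the case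
of a positive definite off-diagonal block. -/
lemma det_sq_le {A B C : Matrix n n ℂ} (hA : A.PosDef) (hB : B.PosDef)
    (h : (Matrix.fromBlocks A B Bᴴ C).PosSemidef) : B.det * B.det ≤ A.det * C.det := by
  have : Invertible A := hA.isUnit.invertible
  rw [Matrix.PosDef.fromBlocks₁₁ B C hA] at h
  have hM : (Bᴴ * A⁻¹ * B).PosDef :=
    hA.inv.conjTranspose_mul_mul_same (Matrix.mulVec_injective_of_isUnit hB.isUnit)
  have h1 := det_le_det_add hM h
  rw [add_sub_cancel, Matrix.det_mul, Matrix.det_mul, hB.1.eq] at h1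
  have h2 : A.det * A⁻¹.det = 1 := by
    rw [← Matrix.det_mul, Matrix.mul_nonsing_inv _ hA.det_pos.ne'.isUnit, Matrix.det_one]
  calc B.det * B.det = A.det * (B.det * A⁻¹.det * B.det) := by
        linear_combination -(B.det * B.det) * h2
    _ ≤ A.det * C.det := mul_le_mul_of_nonneg_left h1 hA.det_pos.le

/-- If `M` dominates the rank one projection onto the first coordinate, then deleting the first
row and column does not increase the determinant. -/
lemma det_minor_le {m : ℕ} {M : Matrix (Fin (m + 1)) (Fin (m + 1)) ℂ}
    (h : (M - Matrix.single 0 0 1).PosSemidef) :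
    (M.submatrix Fin.succ Fin.succ).det ≤ M.det := by
  have h0 := h.det_nonneg
  have : (M - Matrix.single 0 0 1).det = M.det - (M.submatrix Fin.succ Fin.succ).det := by
    rw [Matrix.det_succ_row_zero, Matrix.det_succ_row_zero M, Fin.sum_univ_succ,
      Fin.sum_univ_succ]
    have hs : ∀ k : Fin (m + 1), (M - Matrix.single 0 0 1).submatrix Fin.succ k.succAbove
        = M.submatrix Fin.succ k.succAbove := by
      intro k; ext i j
      simp [(Fin.succ_ne_zero i).symm]
    simp only [hs]
    have hk : ∀ k : Fin m, (M - Matrix.single 0 0 (1:ℂ) : Matrix _ _ ℂ) 0 k.succ = M 0 k.succ := by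
      intro k
      simp [(Fin.succ_ne_zero k).symm]
    simp only [hk]
    simp
    ring
  rw [this] at h0
  exact sub_nonneg.mp h0

end LinAlg
end Szego

namespace Szego

/-! ### Means over the circle and Toeplitz forms -/

open scoped ComplexOrder MatrixOrder Matrix ComplexConjugate

open Complex (I)

/-- The mean `(2π)⁻¹ ∫_{-π}^{π} f` of a complex function. -/
noncomputable def cmean (f : ℝ → ℂ) : ℂ :=
  ((2 * Real.pi : ℝ) : ℂ)⁻¹ * ∫ θ in (-Real.pi)..Real.pi, f θ

/-- The mean `(2π)⁻¹ ∫_{-π}^{π} f` of a real function. -/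
noncomputable def rmean (f : ℝ → ℝ) : ℝ :=
  (2 * Real.pi)⁻¹ * ∫ θ in (-Real.pi)..Real.pi, f θ

/-- The point `e^{iθ}` of the unit circle. -/
noncomputable def circ (θ : ℝ) : ℂ := Complex.exp (θ * I)

lemma continuous_circ : Continuous circ := by unfold circ; fun_prop

lemma norm_circ (θ : ℝ) : ‖circ θ‖ = 1 := Complex.norm_exp_ofReal_mul_I θ

lemma circ_mul_conj (θ : ℝ) : circ θ * conj (circ θ) = 1 := by
  rw [Complex.mul_conj, Complex.normSq_eq_norm_sq, norm_circ]; simp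

lemma cmean_ofReal (f : ℝ → ℝ) : cmean (fun θ => (f θ : ℂ)) = (rmean f : ℂ) := by
  simp [cmean, rmean, intervalIntegral.integral_ofReal]

lemma cmean_add {f g : ℝ → ℂ} (hf : Continuous f) (hg : Continuous g) :
    cmean (fun θ => f θ + g θ) = cmean f + cmean g := by
  simp only [cmean]
  rw [intervalIntegral.integral_add (hf.intervalIntegrable _ _) (hg.intervalIntegrable _ _),
    mul_add]

lemma cmean_const_mul (c : ℂ) (f : ℝ → ℂ) : cmean (fun θ => c * f θ) = c * cmean f := by
  simp only [cmean, intervalIntegral.integral_const_mul]; ring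

lemma cmean_sum {ι : Type*} (s : Finset ι) {f : ι → ℝ → ℂ} (hf : ∀ i ∈ s, Continuous (f i)) :
    cmean (fun θ => ∑ i ∈ s, f i θ) = ∑ i ∈ s, cmean (f i) := by
  simp only [cmean]
  rw [intervalIntegral.integral_finsetSum fun i hi => (hf i hi).intervalIntegrable _ _,
    Finset.mul_sum]

lemma cmean_conj (f : ℝ → ℂ) : cmean (fun θ => conj (f θ)) = conj (cmean f) := by
  simp only [cmean, map_mul, map_inv₀, Complex.conj_ofReal]
  congr 1
  rw [intervalIntegral.integral_of_le (by linarith [Real.pi_pos]),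
    intervalIntegral.integral_of_le (by linarith [Real.pi_pos]), integral_conj]

lemma rmean_nonneg {f : ℝ → ℝ} (hf : ∀ θ, 0 ≤ f θ) : 0 ≤ rmean f :=
  mul_nonneg (by positivity)
    (intervalIntegral.integral_nonneg (by linarith [Real.pi_pos]) fun θ _ => hf θ)

lemma rmean_const (c : ℝ) : rmean (fun _ => c) = c := by
  simp only [rmean, intervalIntegral.integral_const, smul_eq_mul]
  field_simp
  ring

lemma rmean_add {f g : ℝ → ℝ} (hf : Continuous f) (hg : Continuous g) :
    rmean (fun θ => f θ + g θ) = rmean f + rmean g := by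
  simp only [rmean]
  rw [intervalIntegral.integral_add (hf.intervalIntegrable _ _) (hg.intervalIntegrable _ _),
    mul_add]

lemma rmean_const_mul (c : ℝ) (f : ℝ → ℝ) : rmean (fun θ => c * f θ) = c * rmean f := by
  simp only [rmean, intervalIntegral.integral_const_mul]; ring

lemma fourierCoeff'_eq_cmean (φ : ℝ → ℂ) (ℓ : ℤ) :
    fourierCoeff' φ ℓ = cmean (fun θ => Complex.exp (-I * ℓ * θ) * φ θ) := rfl

/-- The Toeplitz matrix of a real symbol. -/
noncomputable def toep (w : ℝ → ℝ) (n : ℕ) : Matrix (Fin n) (Fin n) ℂ :=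
  Matrix.of fun j k : Fin n => fourierCoeff' (fun θ => (w θ : ℂ)) ((j : ℤ) - (k : ℤ))

/-- The restriction to the unit circle of the polynomial with coefficient vector `u`. -/
noncomputable def tpoly {n : ℕ} (u : Fin n → ℂ) (θ : ℝ) : ℂ := ∑ k, u k * circ θ ^ (k : ℕ)

lemma continuous_tpoly {n : ℕ} (u : Fin n → ℂ) : Continuous (tpoly u) :=
  continuous_finsetSum _ fun _ _ => continuous_const.mul (continuous_circ.pow _)

lemma exp_eq_circ (j k : ℕ) (θ : ℝ) :
    Complex.exp (-I * (((j : ℤ) - (k : ℤ) : ℤ) : ℂ) * θ) = conj (circ θ ^ j) * circ θ ^ k := by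
  rw [circ, map_pow, ← Complex.exp_conj, ← Complex.exp_nat_mul, ← Complex.exp_nat_mul,
    ← Complex.exp_add]
  congr 1
  simp only [map_mul, Complex.conj_ofReal, Complex.conj_I]
  push_cast
  ring

lemma toep_apply (w : ℝ → ℝ) (n : ℕ) (j k : Fin n) :
    toep w n j k = cmean (fun θ => conj (circ θ ^ (j : ℕ)) * circ θ ^ (k : ℕ) * (w θ : ℂ)) := by
  simp only [toep, Matrix.of_apply, fourierCoeff'_eq_cmean, exp_eq_circ]

/-- The sesquilinear form of a Toeplitz matrix is the weighted `L²` product of polynomials. -/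
lemma dotProduct_toep {w : ℝ → ℝ} (hw : Continuous w) {n : ℕ} (u v : Fin n → ℂ) :
    star u ⬝ᵥ (toep w n *ᵥ v) = cmean (fun θ => conj (tpoly u θ) * tpoly v θ * (w θ : ℂ)) := by
  have hc := continuous_circ
  have h : (fun θ => conj (tpoly u θ) * tpoly v θ * (w θ : ℂ)) = fun θ => ∑ j : Fin n,
      ∑ k : Fin n, (conj (u j) * v k) *
        (conj (circ θ ^ (j : ℕ)) * circ θ ^ (k : ℕ) * (w θ : ℂ)) := by
    ext θ
    rw [tpoly, tpoly, map_sum, Finset.sum_mul_sum, Finset.sum_mul]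
    refine Finset.sum_congr rfl fun j _ => ?_
    rw [Finset.sum_mul]
    refine Finset.sum_congr rfl fun k _ => ?_
    rw [map_mul]; ring
  rw [h, cmean_sum _ fun j _ => by fun_prop]
  simp only [dotProduct, Matrix.mulVec, Finset.mul_sum]
  refine Finset.sum_congr rfl fun j _ => ?_
  rw [cmean_sum _ fun j _ => by fun_prop]
  refine Finset.sum_congr rfl fun k _ => ?_
  rw [cmean_const_mul, toep_apply, Pi.star_apply, RCLike.star_def]
  ring

lemma toep_isHermitian (w : ℝ → ℝ) (n : ℕ) : (toep w n).IsHermitian := by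
  ext j k
  rw [Matrix.conjTranspose_apply, toep_apply, toep_apply, RCLike.star_def, ← cmean_conj]
  congr 1
  ext θ
  simp only [map_mul, Complex.conj_conj, Complex.conj_ofReal]
  ring

lemma star_dotProduct_toep {w : ℝ → ℝ} (hw : Continuous w) {n : ℕ} (u : Fin n → ℂ) :
    star u ⬝ᵥ (toep w n *ᵥ u) = ((rmean fun θ => ‖tpoly u θ‖ ^ 2 * w θ : ℝ) : ℂ) := by
  rw [dotProduct_toep hw, ← cmean_ofReal]
  congr 1; ext θ
  rw [mul_comm (conj _), Complex.mul_conj, Complex.normSq_eq_norm_sq]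
  push_cast; ring

lemma toep_posSemidef {w : ℝ → ℝ} (hw : Continuous w) (h0 : ∀ θ, 0 ≤ w θ) (n : ℕ) :
    (toep w n).PosSemidef := by
  refine .of_dotProduct_mulVec_nonneg (toep_isHermitian w n) fun u => ?_
  rw [star_dotProduct_toep hw]
  exact_mod_cast rmean_nonneg fun θ => mul_nonneg (by positivity) (h0 θ)

lemma toep_add {w v : ℝ → ℝ} (hw : Continuous w) (hv : Continuous v) (n : ℕ) :
    toep (fun θ => w θ + v θ) n = toep w n + toep v n := by
  have hc := continuous_circ
  ext j k
  rw [Matrix.add_apply, toep_apply, toep_apply, toep_apply, ← cmean_add (by fun_prop)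
    (by fun_prop)]
  congr 1; ext θ; push_cast; ring

lemma toep_const_mul (c : ℝ) (w : ℝ → ℝ) (n : ℕ) :
    toep (fun θ => c * w θ) n = (c : ℂ) • toep w n := by
  ext j k
  rw [Matrix.smul_apply, toep_apply, toep_apply, smul_eq_mul, ← cmean_const_mul]
  congr 1; ext θ; push_cast; ring

/-- Orthogonality of the characters. -/
lemma cmean_exp (ℓ : ℤ) : cmean (fun θ => Complex.exp (-I * ℓ * θ)) = if ℓ = 0 then 1 else 0 := by
  split_ifs with h
  · have : (fun θ : ℝ => Complex.exp (-I * ℓ * θ)) = fun θ => ((1 : ℝ) : ℂ) := by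
      ext θ; simp [h]
    rw [this, cmean_ofReal (fun _ => 1), rmean_const]; simp
  · rw [cmean, integral_exp_mul_complex (by simp [h])]
    have : Complex.exp (-I * ℓ * (Real.pi : ℝ)) = Complex.exp (-I * ℓ * ((-Real.pi : ℝ) : ℂ)) := by
      rw [Complex.exp_eq_exp_iff_exists_int]
      exact ⟨-ℓ, by push_cast; ring⟩
    rw [this]; simp

lemma toep_one (n : ℕ) : toep (fun _ => 1) n = 1 := by
  ext j k
  rw [toep, Matrix.of_apply, fourierCoeff'_eq_cmean]
  simp only [Complex.ofReal_one, mul_one]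
  rw [cmean_exp, Matrix.one_apply]
  simp [sub_eq_zero, Fin.ext_iff]

/-- A continuous weight that is positive on a period has a positive definite Toeplitz matrix. -/
lemma toep_posDef {w : ℝ → ℝ} (hw : Continuous w) {c : ℝ} (hc : 0 < c) (h0 : ∀ θ, c ≤ w θ)
    (n : ℕ) : (toep w n).PosDef := by
  have h1 : w = fun θ => c * 1 + (w θ - c) := by ext θ; ring
  rw [h1, toep_add (by fun_prop) (by fun_prop), toep_const_mul c (fun _ => 1), toep_one]
  refine Matrix.PosDef.add_posSemidef ?_ (toep_posSemidef (by fun_prop)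
    (fun θ => by linarith [h0 θ]) n)
  exact Matrix.PosDef.one.smul (by exact_mod_cast hc)

/-- Pointwise Cauchy–Schwarz gives a positive block matrix of Toeplitz matrices. -/
lemma toep_block_posSemidef {a b : ℝ → ℝ} (ha : Continuous a) (hb : Continuous b) (n : ℕ) :
    (Matrix.fromBlocks (toep (fun θ => a θ * a θ) n) (toep (fun θ => a θ * b θ) n)
      (toep (fun θ => a θ * b θ) n)ᴴ (toep (fun θ => b θ * b θ) n)).PosSemidef := by
  refine .of_dotProduct_mulVec_nonneg
    (Matrix.IsHermitian.fromBlocks (toep_isHermitian _ n) rfl (toep_isHermitian _ n)) fun x => ?_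
  obtain ⟨u, v, rfl⟩ : ∃ u v : Fin n → ℂ, x = Sum.elim u v :=
    ⟨x ∘ Sum.inl, x ∘ Sum.inr, by simp⟩
  rw [(toep_isHermitian _ n).eq, Matrix.fromBlocks_mulVec]
  have hs : star (Sum.elim u v) = Sum.elim (star u) (star v) := by
    ext i; cases i <;> rfl
  rw [hs, sumElim_dotProduct_sumElim]
  simp only [Sum.elim_comp_inl, Sum.elim_comp_inr, dotProduct_add]
  have hu := continuous_tpoly u
  have hv := continuous_tpoly v
  rw [dotProduct_toep (by fun_prop), dotProduct_toep (by fun_prop), dotProduct_toep (by fun_prop),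
    dotProduct_toep (by fun_prop), ← cmean_add (by fun_prop) (by fun_prop),
    ← cmean_add (by fun_prop) (by fun_prop), ← cmean_add (by fun_prop) (by fun_prop)]
  have : (0 : ℝ) ≤ rmean (fun θ => ‖a θ * tpoly u θ + b θ * tpoly v θ‖ ^ 2) :=
    rmean_nonneg fun θ => by positivity
  convert Complex.zero_le_real.mpr this using 1
  rw [← cmean_ofReal]
  congr 1; ext θ
  rw [← Complex.normSq_eq_norm_sq, ← Complex.mul_conj]
  simp only [map_add, map_mul, Complex.conj_ofReal, Complex.ofReal_mul]
  ring

end Szego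

namespace Szego

/-! ### Toeplitz determinants of exponentials -/

open scoped ComplexOrder MatrixOrder Matrix ComplexConjugate

open Complex (I)

/-- The Toeplitz determinant `D_n(e^V)` of a real exponent `V`, as a real number. -/
noncomputable def tz (V : ℝ → ℝ) (n : ℕ) : ℝ := (toep (fun θ => Real.exp (V θ)) n).det.re

/-- `2π`-periodic functions of class `C¹`. -/
structure PerC1 (V : ℝ → ℝ) : Prop where
  contDiff : ContDiff ℝ 1 V
  periodic : Function.Periodic V (2 * Real.pi)

lemma PerC1.continuous {V : ℝ → ℝ} (hV : PerC1 V) : Continuous V := hV.contDiff.continuous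

lemma PerC1.add {V W : ℝ → ℝ} (hV : PerC1 V) (hW : PerC1 W) : PerC1 (fun θ => V θ + W θ) :=
  ⟨hV.contDiff.add hW.contDiff, fun θ => by simp only [hV.periodic θ, hW.periodic θ]⟩

lemma PerC1.const_mul {V : ℝ → ℝ} (hV : PerC1 V) (c : ℝ) : PerC1 (fun θ => c * V θ) :=
  ⟨contDiff_const.mul hV.contDiff, fun θ => by simp only [hV.periodic θ]⟩

lemma PerC1.sub {V W : ℝ → ℝ} (hV : PerC1 V) (hW : PerC1 W) : PerC1 (fun θ => V θ - W θ) :=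
  ⟨hV.contDiff.sub hW.contDiff, fun θ => by simp only [hV.periodic θ, hW.periodic θ]⟩

lemma perC1_const (c : ℝ) : PerC1 (fun _ => c) := ⟨contDiff_const, fun _ => rfl⟩

lemma PerC1.exp_posDef {V : ℝ → ℝ} (hV : PerC1 V) (n : ℕ) :
    (toep (fun θ => Real.exp (V θ)) n).PosDef := by
  have hb := hV.periodic.isBounded_of_continuous (by positivity) hV.continuous
  obtain ⟨c, hc⟩ := hb.bddBelow
  exact toep_posDef (Real.continuous_exp.comp hV.continuous) (Real.exp_pos c)
    (fun θ => Real.exp_le_exp.mpr (hc ⟨θ, rfl⟩)) n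

lemma PerC1.det_eq {V : ℝ → ℝ} (hV : PerC1 V) (n : ℕ) :
    (toep (fun θ => Real.exp (V θ)) n).det = (tz V n : ℂ) := by
  have h := (hV.exp_posDef n).det_pos
  rw [Complex.lt_def] at h
  exact Complex.ext rfl (by simpa using h.2.symm)

lemma PerC1.tz_pos {V : ℝ → ℝ} (hV : PerC1 V) (n : ℕ) : 0 < tz V n := by
  have h := (hV.exp_posDef n).det_pos
  rwa [hV.det_eq, Complex.zero_lt_real] at h

lemma tz_mono {V W : ℝ → ℝ} (hV : PerC1 V) (hW : PerC1 W) (h : ∀ θ, V θ ≤ W θ) (n : ℕ) :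
    tz V n ≤ tz W n := by
  have hVc := hV.continuous
  have hWc := hW.continuous
  have h1 := det_le_det_add (hV.exp_posDef n)
    (toep_posSemidef (w := fun θ => Real.exp (W θ) - Real.exp (V θ)) (by fun_prop)
      (fun θ => sub_nonneg.mpr (Real.exp_le_exp.mpr (h θ))) n)
  rw [← toep_add (by fun_prop) (by fun_prop)] at h1
  simp only [add_sub_cancel] at h1
  rwa [hV.det_eq, hW.det_eq, Complex.real_le_real] at h1

lemma tz_add_const {V : ℝ → ℝ} (hV : PerC1 V) (c : ℝ) (n : ℕ) :
    tz (fun θ => V θ + c) n = Real.exp (n * c) * tz V n := by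
  have h : (fun θ => Real.exp (V θ + c)) = fun θ => Real.exp c * Real.exp (V θ) := by
    ext θ; rw [Real.exp_add, mul_comm]
  rw [tz, h, toep_const_mul, Matrix.det_smul, hV.det_eq, Fintype.card_fin, Real.exp_nat_mul,
    ← Complex.ofReal_pow, ← Complex.ofReal_mul, Complex.ofReal_re]

/-- Midpoint log-convexity of `V ↦ D_n(e^V)`. -/
lemma tz_sq_le {P V : ℝ → ℝ} (hP : PerC1 P) (hV : PerC1 V) (n : ℕ) :
    tz P n ^ 2 ≤ tz V n * tz (fun θ => 2 * P θ - V θ) n := by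
  have hPc := hP.continuous
  have hVc := hV.continuous
  have h := toep_block_posSemidef (a := fun θ => Real.exp (V θ / 2))
    (b := fun θ => Real.exp (P θ - V θ / 2)) (by fun_prop) (by fun_prop) n
  simp only [← Real.exp_add] at h
  have e1 : ∀ θ, V θ / 2 + V θ / 2 = V θ := fun θ => by ring
  have e2 : ∀ θ, V θ / 2 + (P θ - V θ / 2) = P θ := fun θ => by ring
  have e3 : ∀ θ, P θ - V θ / 2 + (P θ - V θ / 2) = 2 * P θ - V θ := fun θ => by ring
  simp only [e1, e2, e3] at h
  have h1 := det_sq_le (hV.exp_posDef n) (hP.exp_posDef n) h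
  rw [hV.det_eq, hP.det_eq, ((hP.const_mul 2).sub hV).det_eq] at h1
  rw [sq]
  exact_mod_cast h1

end Szego

namespace Szego

/-! ### The energy functional -/

open scoped ComplexConjugate

open Complex (I)

/-- The Fourier coefficients of a real function. -/
noncomputable def fc (V : ℝ → ℝ) (ℓ : ℤ) : ℂ := fourierCoeff' (fun θ => (V θ : ℂ)) ℓ

/-- The energy `∑_{k ≥ 1} k |V_k|²`; the summation index is shifted by one. -/
noncomputable def energy (V : ℝ → ℝ) : ℝ := ∑' k : ℕ, ((k + 1 : ℕ) : ℝ) * ‖fc V ((k : ℤ) + 1)‖ ^ 2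

lemma fourierCoeff'_eq_fourierCoeffOn (φ : ℝ → ℂ) (ℓ : ℤ) :
    fourierCoeff' φ ℓ = fourierCoeffOn (neg_lt_self Real.pi_pos) φ ℓ := by
  rw [fourierCoeffOn_eq_integral, fourierCoeff', Complex.real_smul]
  congr 1
  · push_cast; rw [one_div]; congr 1; ring
  · congr 1; ext θ
    rw [fourier_coe_apply, smul_eq_mul]
    congr 2
    have : (Real.pi : ℂ) ≠ 0 := by exact_mod_cast Real.pi_ne_zero
    push_cast
    field_simp
    ring

lemma energy_term_nonneg (V : ℝ → ℝ) (k : ℕ) :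
    0 ≤ ((k + 1 : ℕ) : ℝ) * ‖fc V ((k : ℤ) + 1)‖ ^ 2 := by positivity

lemma energy_nonneg (V : ℝ → ℝ) : 0 ≤ energy V := tsum_nonneg (energy_term_nonneg V)

lemma PerC1.norm_fc {V : ℝ → ℝ} (hV : PerC1 V) {ℓ : ℤ} (hℓ : ℓ ≠ 0) :
    ‖(ℓ : ℂ)‖ * ‖fc V ℓ‖ = ‖fc (deriv V) ℓ‖ := by
  have hd : ∀ x, HasDerivAt (fun θ => (V θ : ℂ)) ((deriv V x : ℝ) : ℂ) x := fun x =>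
    ((hV.contDiff.differentiable (by simp)) x).hasDerivAt.ofReal_comp
  have hc : Continuous (deriv V) := hV.contDiff.continuous_deriv le_rfl
  have h := fourierCoeffOn_of_hasDerivAt (neg_lt_self Real.pi_pos) hℓ (fun x _ => hd x)
    ((Complex.continuous_ofReal.comp hc).intervalIntegrable _ _)
  have hp : V Real.pi = V (-Real.pi) := by
    rw [← hV.periodic (-Real.pi)]; congr 1; ring
  have hpi : (Real.pi : ℂ) ≠ 0 := by exact_mod_cast Real.pi_ne_zero
  have hℓ' : (ℓ : ℂ) ≠ 0 := by exact_mod_cast hℓ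
  rw [fc, fc, fourierCoeff'_eq_fourierCoeffOn, fourierCoeff'_eq_fourierCoeffOn, h, hp, sub_self,
    mul_zero, zero_sub, ← norm_mul]
  have : ∀ z : ℂ, (ℓ : ℂ) * (1 / (-2 * Real.pi * I * ℓ) *
      -(((Real.pi : ℝ) - ((-Real.pi : ℝ) : ℂ)) * z)) = -I * z := by
    intro z
    push_cast
    field_simp
    rw [Complex.I_sq]; ring
  rw [this, norm_mul, norm_neg, Complex.norm_I, one_mul]

/-- Parseval for `V'` bounds the energy of `V`. -/
lemma PerC1.energy_aux {V : ℝ → ℝ} (hV : PerC1 V) {δ : ℝ} (hδ : ∀ θ, |deriv V θ| ≤ δ) :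
    (Summable fun k : ℕ => ((k + 1 : ℕ) : ℝ) * ‖fc V ((k : ℤ) + 1)‖ ^ 2) ∧ energy V ≤ δ ^ 2 := by
  have hc : Continuous (fun θ => ((deriv V θ : ℝ) : ℂ)) :=
    Complex.continuous_ofReal.comp (hV.contDiff.continuous_deriv le_rfl)
  have hL : MemLp (fun θ => ((deriv V θ : ℝ) : ℂ)) 2
      (volume.restrict (Set.Ioc (-Real.pi) Real.pi)) :=
    MemLp.of_bound hc.aestronglyMeasurable δ (ae_of_all _ fun θ => by
      rw [Complex.norm_real]; exact hδ θ)
  have hs := hasSum_sq_fourierCoeffOn (neg_lt_self Real.pi_pos) hL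
  simp only [← fourierCoeff'_eq_fourierCoeffOn] at hs
  have hinj : Function.Injective (fun k : ℕ => (k : ℤ) + 1) := fun a b h => by
    simpa using h
  have hs1 : Summable fun k : ℕ => ‖fc (deriv V) ((k : ℤ) + 1)‖ ^ 2 :=
    hs.summable.comp_injective hinj
  have hle : ∀ k : ℕ, ((k + 1 : ℕ) : ℝ) * ‖fc V ((k : ℤ) + 1)‖ ^ 2
      ≤ ‖fc (deriv V) ((k : ℤ) + 1)‖ ^ 2 := by
    intro k
    have h1 : ‖(((k : ℤ) + 1 : ℤ) : ℂ)‖ = (k : ℝ) + 1 := by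
      have : (((k : ℤ) + 1 : ℤ) : ℂ) = ((k + 1 : ℕ) : ℂ) := by push_cast; ring
      rw [this, Complex.norm_natCast]; push_cast; ring
    rw [← hV.norm_fc (by omega), h1, mul_pow]
    push_cast
    gcongr
    nlinarith [(Nat.cast_nonneg k : (0 : ℝ) ≤ k)]
  have hs2 := Summable.of_nonneg_of_le (energy_term_nonneg V) hle hs1
  refine ⟨hs2, ?_⟩
  calc energy V ≤ ∑' k : ℕ, ‖fc (deriv V) ((k : ℤ) + 1)‖ ^ 2 := hs2.tsum_le_tsum hle hs1
    _ ≤ ∑' ℓ : ℤ, ‖fc (deriv V) ℓ‖ ^ 2 :=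
        tsum_comp_le_tsum_of_inj hs.summable (fun _ => by positivity) hinj
    _ = (Real.pi - -Real.pi)⁻¹ • ∫ θ in (-Real.pi)..Real.pi, ‖((deriv V θ : ℝ) : ℂ)‖ ^ 2 :=
        hs.tsum_eq
    _ ≤ (Real.pi - -Real.pi)⁻¹ • ∫ θ in (-Real.pi)..Real.pi, δ ^ 2 := by
        rw [smul_eq_mul, smul_eq_mul]
        refine mul_le_mul_of_nonneg_left ?_ (by rw [sub_neg_eq_add]; positivity)
        refine intervalIntegral.integral_mono_on (by linarith [Real.pi_pos])
          ((by fun_prop : Continuous fun θ => ‖((deriv V θ : ℝ) : ℂ)‖ ^ 2).intervalIntegrable _ _)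
          (by simp) fun θ _ => ?_
        rw [Complex.norm_real]
        exact pow_le_pow_left₀ (abs_nonneg _) (hδ θ) 2
    _ = δ ^ 2 := by
        rw [intervalIntegral.integral_const, smul_eq_mul, smul_eq_mul, ← mul_assoc,
          inv_mul_cancel₀, one_mul]
        linarith [Real.pi_pos]

lemma PerC1.summable {V : ℝ → ℝ} (hV : PerC1 V) :
    Summable fun k : ℕ => ((k + 1 : ℕ) : ℝ) * ‖fc V ((k : ℤ) + 1)‖ ^ 2 := by
  have hp : Function.Periodic (deriv V) (2 * Real.pi) := fun θ => by
    have h : (fun x => V (x + 2 * Real.pi)) = V := funext hV.periodic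
    rw [← deriv_comp_add_const, h]
  obtain ⟨C, hC⟩ := (hp.isBounded_of_continuous (by positivity)
    (hV.contDiff.continuous_deriv le_rfl)).exists_norm_le
  exact (hV.energy_aux fun θ => hC _ ⟨θ, rfl⟩).1

lemma fc_add {V W : ℝ → ℝ} (hV : Continuous V) (hW : Continuous W) (ℓ : ℤ) :
    fc (fun θ => V θ + W θ) ℓ = fc V ℓ + fc W ℓ := by
  simp only [fc, fourierCoeff'_eq_cmean]
  rw [← cmean_add (by fun_prop) (by fun_prop)]
  congr 1; ext θ; push_cast; ring

/-- The square root of the energy is subadditive. -/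
lemma sqrt_energy_add_le {V W : ℝ → ℝ} (hV : PerC1 V) (hW : PerC1 W) :
    √(energy (fun θ => V θ + W θ)) ≤ √(energy V) + √(energy W) := by
  have key : ∀ (U : ℝ → ℝ) (k : ℕ), (√((k + 1 : ℕ) : ℝ) * ‖fc U ((k : ℤ) + 1)‖) ^ (2 : ℝ)
      = ((k + 1 : ℕ) : ℝ) * ‖fc U ((k : ℤ) + 1)‖ ^ 2 := by
    intro U k
    rw [Real.rpow_two, mul_pow, Real.sq_sqrt (by positivity)]
  have h := Real.Lp_add_le_tsum_of_nonneg (p := 2) (by norm_num)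
    (f := fun k : ℕ => √((k + 1 : ℕ) : ℝ) * ‖fc V ((k : ℤ) + 1)‖)
    (g := fun k : ℕ => √((k + 1 : ℕ) : ℝ) * ‖fc W ((k : ℤ) + 1)‖)
    (fun k => by positivity) (fun k => by positivity)
    (by simp only [key]; exact hV.summable) (by simp only [key]; exact hW.summable)
  simp only [key, ← Real.sqrt_eq_rpow] at h
  refine le_trans (Real.sqrt_le_sqrt ?_) h.2
  refine (hV.add hW).summable.tsum_le_tsum (fun k => ?_) h.1
  rw [← key, ← mul_add]
  refine Real.rpow_le_rpow (by positivity) ?_ (by norm_num)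
  rw [fc_add hV.continuous hW.continuous]
  gcongr
  exact norm_add_le _ _

lemma sqrt_energy_le_of_deriv {V : ℝ → ℝ} (hV : PerC1 V) {δ : ℝ} (h0 : 0 ≤ δ)
    (hδ : ∀ θ, |deriv V θ| ≤ δ) : √(energy V) ≤ δ :=
  (Real.sqrt_le_left h0).mpr (hV.energy_aux hδ).2

end Szego

namespace Szego

/-! ### Bernstein–Szegő weights -/

open scoped ComplexOrder MatrixOrder Matrix ComplexConjugate

open Complex (I)

/-- The polynomial `∏ (1 - a z)`, the product running over a list of parameters `a`. -/
noncomputable def bs (l : List ℂ) (z : ℂ) : ℂ := (l.map fun a => 1 - a * z).prod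

/-- The exponent `-2 log |p|` of the Bernstein–Szegő weight `1 / |p|²`, where `p = ∏ (1 - a z)`. -/
noncomputable def bsLog (l : List ℂ) (θ : ℝ) : ℝ := -2 * Real.log ‖bs l (circ θ)‖

lemma bs_cons (a : ℂ) (l : List ℂ) (z : ℂ) : bs (a :: l) z = (1 - a * z) * bs l z := by
  simp [bs]

lemma one_sub_mul_ne_zero {a z : ℂ} (ha : ‖a‖ < 1) (hz : ‖z‖ ≤ 1) : 1 - a * z ≠ 0 := by
  intro h
  have h1 : ‖a * z‖ = 1 := by rw [← sub_eq_zero.mp h, norm_one]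
  rw [norm_mul] at h1
  nlinarith [norm_nonneg a, norm_nonneg z]

lemma bs_ne_zero {l : List ℂ} (hl : ∀ a ∈ l, ‖a‖ < 1) {z : ℂ} (hz : ‖z‖ ≤ 1) : bs l z ≠ 0 := by
  refine List.prod_ne_zero fun h => ?_
  obtain ⟨a, ha, h0⟩ := List.mem_map.mp h
  exact one_sub_mul_ne_zero (hl a ha) hz h0

lemma differentiable_bs (l : List ℂ) : Differentiable ℂ (bs l) := by
  induction l with
  | nil =>
    have : bs [] = fun _ => 1 := funext fun z => by simp [bs]
    rw [this]; fun_prop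
  | cons a l ih =>
    have : bs (a :: l) = fun z => (1 - a * z) * bs l z := funext (bs_cons a l)
    rw [this]; fun_prop

lemma contDiff_bs_circ (l : List ℂ) : ContDiff ℝ 1 (fun θ => bs l (circ θ)) := by
  have hc : ContDiff ℝ 1 circ := by
    unfold circ
    exact (Complex.ofRealCLM.contDiff.mul contDiff_const).cexp
  induction l with
  | nil => simp only [bs, List.map_nil, List.prod_nil]; exact contDiff_const
  | cons a l ih =>
    simp only [bs_cons]
    exact (contDiff_const.sub (contDiff_const.mul hc)).mul ih

lemma periodic_circ : Function.Periodic circ (2 * Real.pi) := by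
  intro θ
  rw [circ, circ, Complex.exp_eq_exp_iff_exists_int]
  exact ⟨1, by push_cast; ring⟩

lemma bsLog_perC1 {l : List ℂ} (hl : ∀ a ∈ l, ‖a‖ < 1) : PerC1 (bsLog l) where
  contDiff := by
    have hne : ∀ θ, bs l (circ θ) ≠ 0 := fun θ => bs_ne_zero hl (norm_circ θ).le
    exact contDiff_const.mul (((contDiff_bs_circ l).norm ℝ hne).log fun θ => norm_ne_zero_iff.mpr
      (hne θ))
  periodic := fun θ => by rw [bsLog, bsLog, periodic_circ θ]

lemma exp_bsLog {l : List ℂ} (hl : ∀ a ∈ l, ‖a‖ < 1) (θ : ℝ) :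
    ((Real.exp (bsLog l θ) : ℝ) : ℂ) = (bs l (circ θ))⁻¹ * conj (bs l (circ θ))⁻¹ := by
  have hne := bs_ne_zero hl (norm_circ θ).le
  rw [bsLog, neg_mul, Real.exp_neg, ← Nat.cast_two, Real.exp_nat_mul,
    Real.exp_log (norm_pos_iff.mpr hne), Complex.mul_conj, Complex.normSq_eq_norm_sq, norm_inv,
    inv_pow]

/-- Cauchy's formula as a reproducing property for the mean over the unit circle. -/
lemma cmean_cauchy {g : ℂ → ℂ} (hg : DiffContOnCl ℂ g (Metric.ball 0 1)) {b : ℂ} (hb : ‖b‖ < 1) :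
    cmean (fun θ => g (circ θ) * (1 - b * conj (circ θ))⁻¹) = g b := by
  have h := hg.circleIntegral_sub_inv_smul (w := b) (by simpa using hb)
  have hcm : ∀ θ, circleMap 0 1 θ = circ θ := fun θ => by simp [circleMap, circ]
  have hpt : ∀ θ : ℝ, deriv (circleMap 0 1) θ • ((circleMap 0 1 θ - b)⁻¹ • g (circleMap 0 1 θ))
      = I * (g (circ θ) * (1 - b * conj (circ θ))⁻¹) := by
    intro θ
    rw [deriv_circleMap, hcm, smul_eq_mul, smul_eq_mul]
    have h1 : circ θ - b = circ θ * (1 - b * conj (circ θ)) := by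
      linear_combination b * circ_mul_conj θ
    have h0 : circ θ ≠ 0 := norm_ne_zero_iff.mp (by rw [norm_circ]; exact one_ne_zero)
    rw [h1, mul_inv]
    field_simp
  simp only [circleIntegral, hpt] at h
  rw [intervalIntegral.integral_const_mul, smul_eq_mul] at h
  have hper : Function.Periodic (fun θ => g (circ θ) * (1 - b * conj (circ θ))⁻¹)
      (2 * Real.pi) := fun θ => by simp only [periodic_circ θ]
  have h2 := hper.intervalIntegral_add_eq 0 (-Real.pi)
  rw [zero_add, show -Real.pi + 2 * Real.pi = Real.pi by ring] at h2
  rw [h2] at h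
  rw [cmean]
  have hpi : (Real.pi : ℂ) ≠ 0 := by exact_mod_cast Real.pi_ne_zero
  have h3 : (∫ θ in (-Real.pi)..Real.pi, g (circ θ) * (1 - b * conj (circ θ))⁻¹)
      = 2 * Real.pi * g b := by
    have := mul_left_cancel₀ Complex.I_ne_zero (h.trans (by ring :
      2 * Real.pi * I * g b = I * (2 * Real.pi * g b)))
    exact this
  rw [h3]
  push_cast
  field_simp

/-- Coefficients of `∏ (1 - a z)`. -/
lemma exists_coeff (l : List ℂ) :
    ∃ q : Fin (l.length + 1) → ℂ, ∀ z, ∑ k, q k * z ^ (k : ℕ) = bs l z := by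
  obtain ⟨p, hd, hp⟩ : ∃ p : Polynomial ℂ, p.natDegree < l.length + 1 ∧ ∀ z, p.eval z = bs l z := by
    induction l with
    | nil => exact ⟨1, by simp, by simp [bs]⟩
    | cons a l ih =>
      obtain ⟨p, hd, hp⟩ := ih
      refine ⟨(1 - Polynomial.C a * Polynomial.X) * p, ?_, fun z => by simp [hp, bs_cons]⟩
      have h1 : (1 - Polynomial.C a * Polynomial.X : Polynomial ℂ).natDegree ≤ 1 := by
        compute_degree
      have := Polynomial.natDegree_mul_le (p := (1 - Polynomial.C a * Polynomial.X)) (q := p)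
      rw [List.length_cons]
      omega
  refine ⟨fun k => p.coeff k, fun z => ?_⟩
  rw [← hp, Polynomial.eval_eq_sum_range' hd, Finset.sum_range]

/-- The change of basis from the monomials to the polynomial `q` followed by the polynomials
`(z - x) z^j`. -/
def stepMatrix {n : ℕ} (q : Fin (n + 1) → ℂ) (x : ℂ) : Matrix (Fin (n + 1)) (Fin (n + 1)) ℂ :=
  Matrix.of (Fin.cons q fun j k => if k = j.succ then 1 else if k = j.castSucc then -x else 0)

lemma sum_stepMatrix_succ {n : ℕ} (q : Fin (n + 1) → ℂ) (x z : ℂ) (j : Fin n) :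
    ∑ k, stepMatrix q x j.succ k * z ^ (k : ℕ) = (z - x) * z ^ (j : ℕ) := by
  have h : ∀ k : Fin (n + 1), stepMatrix q x j.succ k * z ^ (k : ℕ)
      = (if k = j.succ then z ^ (k : ℕ) else 0)
        + (if k = j.castSucc then -x * z ^ (k : ℕ) else 0) := by
    intro k
    simp only [stepMatrix, Matrix.of_apply, Fin.cons_succ]
    by_cases h1 : k = j.succ
    · subst h1
      have : j.succ ≠ j.castSucc := by simp [Fin.ext_iff]
      simp [this]
    · by_cases h2 : k = j.castSucc
      · subst h2; simp [h1]
      · simp [h1, h2]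
  simp only [h, Finset.sum_add_distrib, Finset.sum_ite_eq', Finset.mem_univ, if_true,
    Fin.val_succ, Fin.val_castSucc]
  ring

/-- All rows of the step matrix but the first vanish at `x`, so its determinant is `q(x)`. -/
lemma det_stepMatrix {n : ℕ} (q : Fin (n + 1) → ℂ) (x : ℂ) :
    (stepMatrix q x).det = ∑ k, q k * x ^ (k : ℕ) := by
  set M : Matrix (Fin (n + 1)) (Fin (n + 1)) ℂ :=
    Matrix.of fun i j => if j = 0 then x ^ (i : ℕ) else if i = j then 1 else 0 with hM
  have hMd : M.det = 1 := by
    rw [Matrix.det_of_isLowerTriangular]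
    · refine Finset.prod_eq_one fun i _ => ?_
      by_cases h : i = 0 <;> simp [hM, h]
    · intro i j hij
      have h1 : i < j := by simpa using hij
      have hj : j ≠ 0 := (Fin.zero_le i).trans_lt h1 |>.ne'
      simp [hM, hj, h1.ne]
  have h0 : ∀ i, (stepMatrix q x * M) i 0 = ∑ k, stepMatrix q x i k * x ^ (k : ℕ) := by
    intro i; simp [Matrix.mul_apply, hM]
  have h1 : ∀ i (k : Fin n), (stepMatrix q x * M) i k.succ = stepMatrix q x i k.succ := by
    intro i k; simp [Matrix.mul_apply, hM]
  have h2 : (stepMatrix q x * M).det = ∑ k, q k * x ^ (k : ℕ) := by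
    rw [Matrix.det_succ_column_zero, Fin.sum_univ_succ, Finset.sum_eq_zero, add_zero]
    · have hsub : ((stepMatrix q x * M).submatrix (Fin.succAbove 0) Fin.succ).det = 1 := by
        rw [Matrix.det_of_isLowerTriangular]
        · refine Finset.prod_eq_one fun i _ => ?_
          rw [Matrix.submatrix_apply, h1]
          simp [stepMatrix]
        · intro i j hij
          have hlt : i < j := by simpa using hij
          rw [Matrix.submatrix_apply, h1]
          have e1 : j ≠ i := hlt.ne'
          have e2 : j.succ ≠ i.castSucc := by
            intro h; rw [Fin.ext_iff] at h; simp at h; omega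
          simp [stepMatrix, e1, e2]
      rw [hsub, h0]
      simp [stepMatrix]
    · intro i _
      rw [h0, sum_stepMatrix_succ]; simp
  rw [← h2, Matrix.det_mul, hMd, mul_one]

/-- Removing one parameter from a Bernstein–Szegő weight. The polynomials of degree at most `n`
vanishing at `conj a` are, up to a unimodular factor, those for the smaller weight, and the
reproducing kernel at `conj a` spans their orthogonal complement. -/
lemma toep_bs_step {a : ℂ} {l : List ℂ} (ha : ‖a‖ < 1) (hl : ∀ b ∈ l, ‖b‖ < 1) :
    ((‖bs l (conj a)‖ ^ 2 : ℝ) : ℂ) *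
      (toep (fun θ => Real.exp (bsLog (a :: l) θ)) (l.length + 1)).det
      = (1 - a * conj a)⁻¹ * (toep (fun θ => Real.exp (bsLog l θ)) l.length).det := by
  have hal : ∀ b ∈ a :: l, ‖b‖ < 1 := by simpa using ⟨ha, hl⟩
  obtain ⟨q, hq⟩ := exists_coeff l
  set T := toep (fun θ => Real.exp (bsLog (a :: l) θ)) (l.length + 1) with hT
  set x := conj a with hx
  have hxn : ‖x‖ < 1 := by rw [hx, RCLike.norm_conj]; exact ha
  set C := stepMatrix q x with hC
  set G := C.map star * (T * Cᵀ) with hG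
  have hw : Continuous fun θ => Real.exp (bsLog (a :: l) θ) :=
    Real.continuous_exp.comp (bsLog_perC1 hal).continuous
  have hGa : ∀ i j, G i j = cmean (fun θ => conj (tpoly (C i) θ) * tpoly (C j) θ *
      ((bs (a :: l) (circ θ))⁻¹ * conj (bs (a :: l) (circ θ))⁻¹)) := by
    intro i j
    have : G i j = star (C i) ⬝ᵥ (T *ᵥ C j) := rfl
    rw [this, dotProduct_toep hw]
    simp only [exp_bsLog hal]
  have ht0 : ∀ θ, tpoly (C 0) θ = bs l (circ θ) := fun θ => hq _
  have hts : ∀ (j : Fin l.length) θ, tpoly (C j.succ) θ = (circ θ - x) * circ θ ^ (j : ℕ) :=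
    fun j θ => sum_stepMatrix_succ q x _ j
  have hn1 : ∀ θ, 1 - a * circ θ ≠ 0 := fun θ => one_sub_mul_ne_zero ha (norm_circ θ).le
  have hn2 : ∀ θ, bs l (circ θ) ≠ 0 := fun θ => bs_ne_zero hl (norm_circ θ).le
  have hn3 : ∀ θ, 1 - x * conj (circ θ) ≠ 0 := fun θ => by
    have := (map_ne_zero (starRingEnd ℂ)).mpr (hn1 θ)
    simpa [hx] using this
  have hn4 : ∀ θ, conj (bs l (circ θ)) ≠ 0 := fun θ => (map_ne_zero (starRingEnd ℂ)).mpr (hn2 θ)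
  have hcl : ∀ z ∈ closure (Metric.ball (0 : ℂ) 1), ‖z‖ ≤ 1 := fun z hz => by
    simpa using Metric.closure_ball_subset_closedBall hz
  have G00 : G 0 0 = (1 - a * conj a)⁻¹ := by
    have hg : DiffContOnCl ℂ (fun z => (1 - a * z)⁻¹) (Metric.ball 0 1) := by
      refine DifferentiableOn.diffContOnCl fun z hz => ?_
      exact DifferentiableAt.differentiableWithinAt
        (by fun_prop (disch := exact one_sub_mul_ne_zero ha (hcl z hz)))
    rw [hGa, ← hx, ← cmean_cauchy hg hxn]
    congr 1; ext θ
    have e : conj (1 - a * circ θ) = 1 - x * conj (circ θ) := by simp [hx]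
    rw [ht0, bs_cons, mul_inv, map_mul, map_inv₀, map_inv₀, e]
    have := hn1 θ; have := hn2 θ; have := hn3 θ; have := hn4 θ
    field_simp
  have G0s : ∀ j : Fin l.length, G 0 j.succ = 0 := by
    intro j
    have hg : DiffContOnCl ℂ (fun z => (z - x) * z ^ (j : ℕ) * (bs (a :: l) z)⁻¹)
        (Metric.ball 0 1) := by
      refine DifferentiableOn.diffContOnCl fun z hz => ?_
      have := (differentiable_bs (a :: l)) z
      exact DifferentiableAt.differentiableWithinAt
        (by fun_prop (disch := exact bs_ne_zero hal (hcl z hz)))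
    have h0 := cmean_cauchy hg hxn
    rw [sub_self, zero_mul, zero_mul] at h0
    rw [hGa, ← h0]
    congr 1; ext θ
    have e : conj (1 - a * circ θ) = 1 - x * conj (circ θ) := by simp [hx]
    rw [ht0, hts, bs_cons, mul_inv, map_mul, map_inv₀, map_inv₀, e]
    have := hn1 θ; have := hn2 θ; have := hn3 θ; have := hn4 θ
    field_simp
  have Gss : G.submatrix Fin.succ (Fin.succAbove 0)
      = toep (fun θ => Real.exp (bsLog l θ)) l.length := by
    ext i j
    rw [Matrix.submatrix_apply, Fin.succAbove_zero, hGa, toep_apply]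
    congr 1; ext θ
    have e : conj (1 - a * circ θ) = 1 - x * conj (circ θ) := by simp [hx]
    -- On the circle `z - x` and `1 - a z` have the same modulus.
    have e1 : circ θ - x = circ θ * (1 - x * conj (circ θ)) := by
      linear_combination x * circ_mul_conj θ
    have e2 : conj (circ θ - x) = conj (circ θ) * (1 - a * circ θ) := by
      rw [map_sub, hx, Complex.conj_conj]
      linear_combination a * circ_mul_conj θ
    rw [hts, hts, exp_bsLog hl, bs_cons, mul_inv, map_mul, map_mul, map_inv₀, map_inv₀, e, e2, e1]
    have h1 := hn1 θ; have h2 := hn2 θ; have h3 := hn3 θ; have h4 := hn4 θ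
    have hz := circ_mul_conj θ
    generalize conj (circ θ ^ (i : ℕ)) = p
    generalize circ θ ^ (j : ℕ) = r
    generalize 1 - a * circ θ = v at *
    generalize 1 - x * conj (circ θ) = u at *
    generalize conj (bs l (circ θ)) = s at *
    generalize bs l (circ θ) = t at *
    generalize conj (circ θ) = w at *
    field_simp
    linear_combination (p * r) * hz
  have hdet : G.det = (1 - a * conj a)⁻¹ * (toep (fun θ => Real.exp (bsLog l θ)) l.length).det := by
    rw [Matrix.det_succ_row_zero, Fin.sum_univ_succ, Finset.sum_eq_zero, add_zero, Gss, G00]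
    · simp
    · intro j _; rw [G0s]; simp
  rw [← hdet, hG, Matrix.det_mul, Matrix.det_mul, Matrix.det_transpose]
  have hCd : C.det = bs l x := by rw [hC, det_stepMatrix, hq]
  have hCs : (C.map star).det = conj (bs l x) := by
    rw [← hCd]
    exact ((starRingEnd ℂ).map_det C).symm
  rw [hCs, hCd, ← Complex.normSq_eq_norm_sq, ← Complex.mul_conj]
  ring

end Szego

namespace Szego

/-! ### Determinants and energies of Bernstein–Szegő weights -/

open scoped ComplexOrder MatrixOrder Matrix ComplexConjugate

open Complex (I)

lemma one_sub_mul_mem_slitPlane {a z : ℂ} (ha : ‖a‖ < 1) (hz : ‖z‖ ≤ 1) :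
    1 - a * z ∈ Complex.slitPlane := by
  have h : ‖-(a * z)‖ < 1 := by
    rw [norm_neg, norm_mul]
    nlinarith [norm_nonneg a, norm_nonneg z]
  simpa only [sub_eq_add_neg] using Complex.mem_slitPlane_of_norm_lt_one h

/-- The mean value property on the unit circle. -/
lemma cmean_circ {g : ℂ → ℂ} (hg : DiffContOnCl ℂ g (Metric.ball 0 1)) :
    cmean (fun θ => g (circ θ)) = g 0 := by
  simpa using cmean_cauchy hg (b := 0) (by simp)

lemma norm_le_of_mem_closure {z : ℂ} (hz : z ∈ closure (Metric.ball (0 : ℂ) 1)) : ‖z‖ ≤ 1 := by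
  simpa using Metric.closure_ball_subset_closedBall hz

lemma diffContOnCl_log {a : ℂ} (ha : ‖a‖ < 1) (k : ℕ) :
    DiffContOnCl ℂ (fun z => z ^ k * Complex.log (1 - a * z)) (Metric.ball 0 1) := by
  refine DifferentiableOn.diffContOnCl fun z hz => ?_
  have := one_sub_mul_mem_slitPlane ha (norm_le_of_mem_closure hz)
  exact DifferentiableAt.differentiableWithinAt (by fun_prop (disch := exact this))

lemma continuous_log_circ {a : ℂ} (ha : ‖a‖ < 1) :
    Continuous fun θ => Complex.log (1 - a * circ θ) := by
  refine Continuous.clog ?_ fun θ => one_sub_mul_mem_slitPlane ha (norm_circ θ).le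
  have := continuous_circ
  fun_prop

lemma cmean_conj_pow_mul_log {a : ℂ} (ha : ‖a‖ < 1) (k : ℕ) :
    cmean (fun θ => conj (circ θ ^ (k + 1)) * -Complex.log (1 - a * circ θ))
      = a ^ (k + 1) / (k + 1) := by
  have hc := continuous_circ
  set F : ℕ → ℝ → ℂ := fun j θ =>
    a ^ (j + 1) / (j + 1) * (conj (circ θ ^ (k + 1)) * circ θ ^ (j + 1)) with hF
  have hnorm : ∀ j θ, ‖F j θ‖ ≤ ‖a‖ ^ (j + 1) := by
    intro j θ
    have h1 : ‖((j : ℂ) + 1)‖ = (j : ℝ) + 1 := by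
      rw [← Nat.cast_succ, Complex.norm_natCast]; push_cast; ring
    simp only [hF, norm_mul, norm_div, norm_pow, RCLike.norm_conj, norm_circ, one_pow, mul_one, h1]
    exact div_le_self (by positivity) (by linarith [Nat.cast_nonneg (α := ℝ) j])
  have hs : Summable fun j : ℕ => ‖a‖ ^ (j + 1) :=
    (summable_geometric_of_lt_one (norm_nonneg a) ha).comp_injective (add_left_injective 1)
  have hsum : HasSum (fun j => ∫ θ in (-Real.pi)..Real.pi, F j θ)
      (∫ θ in (-Real.pi)..Real.pi, conj (circ θ ^ (k + 1)) * -Complex.log (1 - a * circ θ)) := by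
    refine intervalIntegral.hasSum_integral_of_dominated_convergence (fun j _ => ‖a‖ ^ (j + 1))
      (fun j => ?_) (fun j => ae_of_all _ fun θ _ => hnorm j θ) (ae_of_all _ fun θ _ => hs) ?_
      (ae_of_all _ fun θ _ => ?_)
    · have : Continuous (F j) := by simp only [hF]; fun_prop
      exact this.aestronglyMeasurable
    · exact continuous_const.intervalIntegrable _ _
    · have hz : ‖a * circ θ‖ < 1 := by rw [norm_mul, norm_circ, mul_one]; exact ha
      refine ((Complex.hasSum_taylorSeries_neg_log' hz).mul_left (conj (circ θ ^ (k + 1)))).congr_fun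
        fun j => ?_
      simp only [hF, mul_pow]
      ring
  have hmean : ∀ j, cmean (F j) = if j = k then a ^ (k + 1) / (k + 1) else 0 := by
    intro j
    simp only [hF]
    rw [cmean_const_mul]
    simp only [← exp_eq_circ]
    rw [cmean_exp]
    by_cases h : j = k
    · subst h; simp
    · have : ¬ (((k + 1 : ℕ) : ℤ) - ((j + 1 : ℕ) : ℤ) = 0) := by omega
      rw [if_neg this, if_neg h, mul_zero]
  have h2 : HasSum (fun j => cmean (F j))
      (cmean (fun θ => conj (circ θ ^ (k + 1)) * -Complex.log (1 - a * circ θ))) :=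
    hsum.mul_left _
  simp only [hmean] at h2
  exact h2.unique (hasSum_ite_eq k _)

lemma bsLog_single (a : ℂ) (θ : ℝ) : ((bsLog [a] θ : ℝ) : ℂ)
    = -Complex.log (1 - a * circ θ) + conj (-Complex.log (1 - a * circ θ)) := by
  rw [Complex.add_conj, Complex.neg_re, Complex.log_re]
  simp [bsLog, bs]

lemma bsLog_nil : bsLog [] = fun _ => 0 := by
  ext θ; simp [bsLog, bs]

lemma bsLog_cons {a : ℂ} {l : List ℂ} (ha : ‖a‖ < 1) (hl : ∀ b ∈ l, ‖b‖ < 1) :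
    bsLog (a :: l) = fun θ => bsLog [a] θ + bsLog l θ := by
  ext θ
  have h1 := one_sub_mul_ne_zero ha (norm_circ θ).le
  have h2 := bs_ne_zero hl (norm_circ θ).le
  simp only [bsLog, bs_cons, norm_mul]
  rw [Real.log_mul (norm_ne_zero_iff.mpr h1) (norm_ne_zero_iff.mpr h2)]
  simp [bs]
  ring

lemma rmean_bsLog {l : List ℂ} (hl : ∀ a ∈ l, ‖a‖ < 1) : rmean (bsLog l) = 0 := by
  induction l with
  | nil => rw [bsLog_nil, rmean_const]
  | cons a l ih =>
    obtain ⟨ha, hl⟩ := List.forall_mem_cons.mp hl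
    have ha1 : ∀ b ∈ [a], ‖b‖ < 1 := by simpa using ha
    rw [bsLog_cons ha hl, rmean_add (bsLog_perC1 ha1).continuous (bsLog_perC1 hl).continuous, ih hl,
      add_zero]
    have hc := continuous_log_circ ha
    have h0 : cmean (fun θ => -Complex.log (1 - a * circ θ)) = 0 := by
      have h := cmean_circ (diffContOnCl_log ha 0)
      have h1 := cmean_const_mul (-1) fun θ => Complex.log (1 - a * circ θ)
      simp only [pow_zero, one_mul, mul_zero, sub_zero, Complex.log_one] at h
      rw [h, mul_zero] at h1
      simpa using h1
    have h : cmean (fun θ => ((bsLog [a] θ : ℝ) : ℂ)) = 0 := by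
      simp only [bsLog_single]
      rw [cmean_add (by fun_prop) (by fun_prop), cmean_conj, h0]
      simp
    rw [cmean_ofReal] at h
    exact_mod_cast h

/-- The Fourier coefficients of positive order are normalised power sums of the parameters. -/
lemma fc_bsLog {l : List ℂ} (hl : ∀ a ∈ l, ‖a‖ < 1) (k : ℕ) :
    fc (bsLog l) ((k : ℤ) + 1) = (l.map fun a => a ^ (k + 1)).sum / (k + 1) := by
  induction l with
  | nil => rw [bsLog_nil, fc, fourierCoeff'_eq_cmean]; simp [cmean]
  | cons a l ih =>
    obtain ⟨ha, hl⟩ := List.forall_mem_cons.mp hl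
    have ha1 : ∀ b ∈ [a], ‖b‖ < 1 := by simpa using ha
    rw [bsLog_cons ha hl, fc_add (bsLog_perC1 ha1).continuous (bsLog_perC1 hl).continuous, ih hl,
      List.map_cons, List.sum_cons, add_div]
    congr 1
    have hc := continuous_log_circ ha
    have hc0 := continuous_circ
    have h0 : cmean (fun θ => circ θ ^ (k + 1) * -Complex.log (1 - a * circ θ)) = 0 := by
      have h := cmean_circ (diffContOnCl_log ha (k + 1))
      have h1 := cmean_const_mul (-1) fun θ => circ θ ^ (k + 1) * Complex.log (1 - a * circ θ)
      rw [h] at h1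
      simpa using h1
    have he : ∀ θ : ℝ, Complex.exp (-I * (((k : ℤ) + 1 : ℤ) : ℂ) * θ) = conj (circ θ ^ (k + 1)) := by
      intro θ
      simpa using exp_eq_circ (k + 1) 0 θ
    rw [fc, fourierCoeff'_eq_cmean]
    simp only [he, bsLog_single, mul_add]
    rw [cmean_add (by fun_prop) (by fun_prop), cmean_conj_pow_mul_log ha]
    have h1 : cmean (fun θ => conj (circ θ ^ (k + 1)) * conj (-Complex.log (1 - a * circ θ))) = 0 := by
      simp only [← map_mul]
      rw [cmean_conj, h0, map_zero]
    rw [h1, add_zero]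

lemma hasSum_log_bs {l : List ℂ} (hl : ∀ a ∈ l, ‖a‖ < 1) {z : ℂ} (hz : ‖z‖ ≤ 1) :
    HasSum (fun k : ℕ => ((l.map fun a => a ^ (k + 1)).sum * z ^ (k + 1)).re / (k + 1))
      (-Real.log ‖bs l z‖) := by
  induction l with
  | nil => simp [bs]
  | cons a l ih =>
    obtain ⟨ha, hl⟩ := List.forall_mem_cons.mp hl
    have haz : ‖a * z‖ < 1 := by
      rw [norm_mul]; nlinarith [norm_nonneg a, norm_nonneg z]
    have h1 := Complex.hasSum_re (Complex.hasSum_taylorSeries_neg_log' haz)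
    have h := h1.add (ih hl)
    rw [bs_cons, norm_mul, Real.log_mul (norm_ne_zero_iff.mpr (one_sub_mul_ne_zero ha hz))
      (norm_ne_zero_iff.mpr (bs_ne_zero hl hz)), neg_add]
    rw [Complex.neg_re, Complex.log_re] at h
    refine h.congr_fun fun k => ?_
    have e : ((a * z) ^ (k + 1) / ((k : ℂ) + 1)).re = (a ^ (k + 1) * z ^ (k + 1)).re / (k + 1) := by
      rw [← mul_pow, ← Nat.cast_succ, Complex.div_natCast_re]
      push_cast; rfl
    rw [e, List.map_cons, List.sum_cons, add_mul, Complex.add_re, add_div]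

lemma energy_bsLog_nil : energy (bsLog []) = 0 := by
  have : ∀ k : ℕ, fc (bsLog []) ((k : ℤ) + 1) = 0 := fun k => by
    rw [fc_bsLog (by simp)]; simp
  simp [energy, this]

lemma energy_bsLog_cons {a : ℂ} {l : List ℂ} (ha : ‖a‖ < 1) (hl : ∀ b ∈ l, ‖b‖ < 1) :
    energy (bsLog (a :: l))
      = energy (bsLog l) - 2 * Real.log ‖bs l (conj a)‖ - Real.log (1 - ‖a‖ ^ 2) := by
  have hal : ∀ b ∈ a :: l, ‖b‖ < 1 := by simpa using ⟨ha, hl⟩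
  have h1 := (bsLog_perC1 hl).summable.hasSum
  have h2 := (hasSum_log_bs hl (z := conj a) (by rw [RCLike.norm_conj]; exact ha.le)).mul_left 2
  have h3 := Real.hasSum_pow_div_log_of_abs_lt_one (x := ‖a‖ ^ 2) (by
    rw [abs_of_nonneg (by positivity)]; nlinarith [norm_nonneg a])
  have h := (h1.add h2).add h3
  have e : energy (bsLog (a :: l)) = _ := (HasSum.congr_fun h fun k => ?_).tsum_eq
  · rw [e]; simp only [energy]; ring
  · rw [fc_bsLog hal, fc_bsLog hl, List.map_cons, List.sum_cons]
    generalize (List.map (fun a => a ^ (k + 1)) l).sum = s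
    have ha2 : (‖a‖ ^ 2) ^ (k + 1) = ‖a ^ (k + 1)‖ ^ 2 := by
      rw [norm_pow, ← pow_mul, ← pow_mul, mul_comm]
    rw [← map_pow, ha2]
    generalize a ^ (k + 1) = p
    have hk : ‖((k : ℂ) + 1)‖ = (k : ℝ) + 1 := by
      rw [← Nat.cast_succ, Complex.norm_natCast]; push_cast; ring
    have hp : ‖p + s‖ ^ 2 = ‖s‖ ^ 2 + 2 * (s * conj p).re + ‖p‖ ^ 2 := by
      rw [← Complex.normSq_eq_norm_sq, ← Complex.normSq_eq_norm_sq, ← Complex.normSq_eq_norm_sq,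
        add_comm p, Complex.normSq_add]
      ring
    rw [norm_div, norm_div, hk, div_pow, div_pow, hp]
    have : (k : ℝ) + 1 ≠ 0 := by positivity
    push_cast
    field_simp

lemma tz_bsLog_length {l : List ℂ} (hl : ∀ a ∈ l, ‖a‖ < 1) :
    tz (bsLog l) l.length = Real.exp (energy (bsLog l)) := by
  induction l with
  | nil => rw [energy_bsLog_nil]; simp [tz]
  | cons a l ih =>
    have hal := hl
    obtain ⟨ha, hl⟩ := List.forall_mem_cons.mp hl
    have h := toep_bs_step ha hl
    rw [(bsLog_perC1 hal).det_eq, (bsLog_perC1 hl).det_eq, Complex.mul_conj,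
      Complex.normSq_eq_norm_sq] at h
    have h : ‖bs l (conj a)‖ ^ 2 * tz (bsLog (a :: l)) (l.length + 1)
      = (1 - ‖a‖ ^ 2)⁻¹ * tz (bsLog l) l.length := by exact_mod_cast h
    have hb : 0 < ‖bs l (conj a)‖ :=
      norm_pos_iff.mpr (bs_ne_zero hl (by rw [RCLike.norm_conj]; exact ha.le))
    have ha2 : 0 < 1 - ‖a‖ ^ 2 := by nlinarith [norm_nonneg a]
    rw [ih hl] at h
    rw [List.length_cons, energy_bsLog_cons ha hl, Real.exp_sub, Real.exp_sub, Real.exp_log ha2,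
      ← Nat.cast_two, Real.exp_nat_mul, Real.exp_log hb]
    field_simp at h ⊢
    linarith

/-- For `n` at least the degree, the determinant is the exponential of the energy: vanishing
parameters may be appended to the list. -/
lemma tz_bsLog_eq {l : List ℂ} (hl : ∀ a ∈ l, ‖a‖ < 1) {n : ℕ} (hn : l.length ≤ n) :
    tz (bsLog l) n = Real.exp (energy (bsLog l)) := by
  have hbs : bsLog (l ++ List.replicate (n - l.length) 0) = bsLog l := by
    ext θ; simp [bsLog, bs]
  have h := tz_bsLog_length (l := l ++ List.replicate (n - l.length) 0) (by
    intro a ha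
    rcases List.mem_append.mp ha with h | h
    · exact hl a h
    · rw [List.eq_of_mem_replicate h, norm_zero]; exact one_pos)
  rwa [hbs, List.length_append, List.length_replicate, Nat.add_sub_cancel' hn] at h

/-- Cauchy–Schwarz for the mean over the circle. -/
lemma sq_norm_cmean_le {f : ℝ → ℂ} (hf : Continuous f) :
    ‖cmean f‖ ^ 2 ≤ rmean fun θ => ‖f θ‖ ^ 2 := by
  obtain ⟨c, hc⟩ : ∃ c, cmean f = c := ⟨_, rfl⟩
  rw [hc]
  have h1 : rmean (fun θ => (conj c * f θ).re) = ‖c‖ ^ 2 := by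
    have h2 : cmean (fun θ => ((2 * (conj c * f θ).re : ℝ) : ℂ)) = 2 * ‖c‖ ^ 2 := by
      simp only [← Complex.add_conj]
      rw [cmean_add (by fun_prop) (by fun_prop), cmean_conj, cmean_const_mul, hc,
        mul_comm, Complex.mul_conj, Complex.normSq_eq_norm_sq, Complex.conj_ofReal]
      push_cast; ring
    rw [cmean_ofReal, rmean_const_mul] at h2
    have h3 : 2 * rmean (fun θ => (conj c * f θ).re) = 2 * ‖c‖ ^ 2 := by
      exact_mod_cast h2
    linarith
  have h4 := rmean_nonneg (f := fun θ => ‖f θ - c‖ ^ 2) fun θ => by positivity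
  have h5 : ∀ θ, ‖f θ - c‖ ^ 2 = ‖f θ‖ ^ 2 + (-2 * (conj c * f θ).re + ‖c‖ ^ 2) := by
    intro θ
    rw [← Complex.normSq_eq_norm_sq, ← Complex.normSq_eq_norm_sq, ← Complex.normSq_eq_norm_sq,
      Complex.normSq_sub, mul_comm (conj _)]
    ring
  simp only [h5] at h4
  rw [rmean_add (by fun_prop) (by fun_prop), rmean_add (by fun_prop) (by fun_prop),
    rmean_const_mul, rmean_const, h1] at h4
  linarith

/-- The mean value property bounds the value at the origin of `u / p` by the quadratic form, so the
Toeplitz matrix dominates the projection onto the constant term. -/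
lemma tz_bsLog_le_succ {l : List ℂ} (hl : ∀ a ∈ l, ‖a‖ < 1) (n : ℕ) :
    tz (bsLog l) n ≤ tz (bsLog l) (n + 1) := by
  have hV := bsLog_perC1 hl
  have hw : Continuous fun θ => Real.exp (bsLog l θ) := Real.continuous_exp.comp hV.continuous
  have hT := toep_isHermitian (fun θ => Real.exp (bsLog l θ)) (n + 1)
  have hpsd : (toep (fun θ => Real.exp (bsLog l θ)) (n + 1)
      - Matrix.single 0 0 1).PosSemidef := by
    refine .of_dotProduct_mulVec_nonneg (hT.sub ?_) fun u => ?_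
    · ext i j
      simp [Matrix.single_apply, and_comm, apply_ite]
    · set g : ℂ → ℂ := fun z => (∑ k, u k * z ^ (k : ℕ)) * (bs l z)⁻¹ with hg
      have hgd : ∀ z : ℂ, ‖z‖ ≤ 1 → DifferentiableAt ℂ g z := fun z hz => by
        have := differentiable_bs l z
        have h2 := bs_ne_zero hl hz
        simp only [hg]
        fun_prop (disch := exact h2)
      have hdc : DiffContOnCl ℂ g (Metric.ball 0 1) := DifferentiableOn.diffContOnCl fun z hz =>
        (hgd z (norm_le_of_mem_closure hz)).differentiableWithinAt
      have hcont : Continuous fun θ => g (circ θ) := continuous_iff_continuousAt.mpr fun θ =>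
        ContinuousAt.comp (hgd _ (norm_circ θ).le).continuousAt continuous_circ.continuousAt
      have h0 : g 0 = u 0 := by
        simp [hg, bs, Fin.sum_univ_succ]
      have hle := sq_norm_cmean_le hcont
      rw [cmean_circ hdc] at hle
      have hpt : ∀ θ, ‖g (circ θ)‖ ^ 2 = ‖tpoly u θ‖ ^ 2 * Real.exp (bsLog l θ) := by
        intro θ
        have h1 := exp_bsLog hl θ
        rw [Complex.mul_conj, Complex.normSq_eq_norm_sq] at h1
        rw [Complex.ofReal_injective h1, ← mul_pow, ← norm_mul]
        rfl
      simp only [hpt, h0] at hle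
      rw [Matrix.sub_mulVec, dotProduct_sub, star_dotProduct_toep hw]
      have hs : star u ⬝ᵥ (Matrix.single 0 0 1 *ᵥ u) = ((‖u 0‖ ^ 2 : ℝ) : ℂ) := by
        rw [← Complex.normSq_eq_norm_sq, Complex.normSq_eq_conj_mul_self]
        simp [dotProduct, Fin.sum_univ_succ, Matrix.mulVec, Matrix.single_apply,
          (Fin.succ_ne_zero _).symm]
      rw [hs, ← Complex.ofReal_sub]
      exact_mod_cast sub_nonneg.mpr hle
  have h := det_minor_le hpsd
  have hsub : (toep (fun θ => Real.exp (bsLog l θ)) (n + 1)).submatrix Fin.succ Fin.succ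
      = toep (fun θ => Real.exp (bsLog l θ)) n := by
    ext i j
    simp [toep]
  rw [hsub, hV.det_eq, hV.det_eq] at h
  exact_mod_cast h

lemma tz_bsLog_le {l : List ℂ} (hl : ∀ a ∈ l, ‖a‖ < 1) (n : ℕ) :
    tz (bsLog l) n ≤ Real.exp (energy (bsLog l)) := by
  rw [← tz_bsLog_eq hl (le_max_right n l.length)]
  exact monotone_nat_of_le_succ (tz_bsLog_le_succ hl) (le_max_left _ _)

end Szego

namespace Szego

/-! ### Density of Bernstein–Szegő exponents -/

open scoped ComplexConjugate

open Complex (I)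

/-- Uniform approximability by derivatives of Bernstein–Szegő exponents. -/
def BSApprox (f : ℝ → ℝ) : Prop :=
  ∀ δ > 0, ∃ l : List ℂ, (∀ a ∈ l, ‖a‖ < 1) ∧ ∀ θ, |f θ - deriv (bsLog l) θ| ≤ δ

lemma bs_append (l₁ l₂ : List ℂ) (z : ℂ) : bs (l₁ ++ l₂) z = bs l₁ z * bs l₂ z := by
  simp [bs]

lemma bsLog_append {l₁ l₂ : List ℂ} (h₁ : ∀ a ∈ l₁, ‖a‖ < 1) (h₂ : ∀ a ∈ l₂, ‖a‖ < 1) :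
    bsLog (l₁ ++ l₂) = fun θ => bsLog l₁ θ + bsLog l₂ θ := by
  ext θ
  simp only [bsLog, bs_append, norm_mul]
  rw [Real.log_mul (norm_ne_zero_iff.mpr (bs_ne_zero h₁ (norm_circ θ).le))
    (norm_ne_zero_iff.mpr (bs_ne_zero h₂ (norm_circ θ).le))]
  ring

lemma PerC1.differentiable {V : ℝ → ℝ} (hV : PerC1 V) : Differentiable ℝ V :=
  hV.contDiff.differentiable (by simp)

lemma BSApprox.add {f g : ℝ → ℝ} (hf : BSApprox f) (hg : BSApprox g) :
    BSApprox fun θ => f θ + g θ := by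
  intro δ hδ
  obtain ⟨l₁, h₁, h₁'⟩ := hf (δ / 2) (by positivity)
  obtain ⟨l₂, h₂, h₂'⟩ := hg (δ / 2) (by positivity)
  refine ⟨l₁ ++ l₂, fun a ha => (List.mem_append.mp ha).elim (h₁ a) (h₂ a), fun θ => ?_⟩
  rw [bsLog_append h₁ h₂, deriv_fun_add ((bsLog_perC1 h₁).differentiable θ)
    ((bsLog_perC1 h₂).differentiable θ), add_sub_add_comm]
  linarith [abs_add_le (f θ - deriv (bsLog l₁) θ) (g θ - deriv (bsLog l₂) θ), h₁' θ, h₂' θ]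

/-- The polynomial `1 - u z^k` is of Bernstein–Szegő form, its parameters being the `k`-th roots
of `u`. -/
lemma exists_bs_pow {u : ℂ} (hu : ‖u‖ < 1) {k : ℕ} (hk : 0 < k) (m : ℕ) :
    ∃ l : List ℂ, (∀ a ∈ l, ‖a‖ < 1) ∧ ∀ z, bs l z = (1 - u * z ^ k) ^ m := by
  obtain ⟨b, hb⟩ := IsAlgClosed.exists_pow_nat_eq u hk
  induction m with
  | zero => exact ⟨[], by simp, fun z => by simp [bs]⟩
  | succ m ih =>
    obtain ⟨l, hl, hl'⟩ := ih
    refine ⟨(Polynomial.nthRootsFinset k (1 : ℂ)).toList.map (fun ζ => ζ * b) ++ l, ?_, fun z => ?_⟩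
    · intro a ha
      rcases List.mem_append.mp ha with h | h
      · obtain ⟨ζ, hζ, rfl⟩ := List.mem_map.mp h
        have hζ1 : ζ ^ k = 1 := (Polynomial.mem_nthRootsFinset hk 1).mp (Finset.mem_toList.mp hζ)
        have h1 : ‖ζ * b‖ ^ k < 1 := by
          rw [← norm_pow, mul_pow, hζ1, hb, one_mul]; exact hu
        exact (pow_lt_one_iff_of_nonneg (norm_nonneg _) hk.ne').mp h1
      · exact hl a h
    · have h := (Complex.isPrimitiveRoot_exp k hk.ne').pow_sub_pow_eq_prod_sub_mul 1 (b * z) hk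
      rw [bs_append, hl', bs, List.map_map, pow_succ', Finset.prod_map_toList
        (f := (fun a => 1 - a * z) ∘ fun ζ => ζ * b)]
      congr 1
      rw [one_pow, mul_pow, hb] at h
      rw [h]
      exact Finset.prod_congr rfl fun ζ _ => by simp only [Function.comp]; ring

lemma hasDerivAt_circ_pow (k : ℕ) (θ : ℝ) :
    HasDerivAt (fun θ => circ θ ^ k) (I * k * circ θ ^ k) θ := by
  have h : (fun θ => circ θ ^ k) = fun θ : ℝ => Complex.exp ((θ : ℂ) * (I * k)) := by
    ext θ; rw [circ, ← Complex.exp_nat_mul]; congr 1; ring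
  rw [h]
  have h1 := ((hasDerivAt_id θ).ofReal_comp.mul_const (I * (k : ℂ))).cexp
  refine h1.congr_deriv ?_
  rw [show circ θ ^ k = _ from congrFun h θ]
  simp only [id, Complex.ofReal_one, one_mul]
  ring

/-- The exponent attached to `(1 - u z^k)^m` has derivative close to a pure character when `u` is
small. -/
lemma deriv_bsLog_pow {l : List ℂ} {u : ℂ} {k m : ℕ} (hu : ‖u‖ < 1)
    (hl : ∀ z, bs l z = (1 - u * z ^ k) ^ m) (θ : ℝ) :
    deriv (bsLog l) θ = (2 * I * k * (m * u) * circ θ ^ k * (1 - u * circ θ ^ k)⁻¹).re := by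
  have hfun : bsLog l = fun θ => (-2 * m * Complex.log (1 - u * circ θ ^ k)).re := by
    ext θ
    have h1 : (-2 * m * Complex.log (1 - u * circ θ ^ k))
        = ((-2 * m : ℝ) : ℂ) * Complex.log (1 - u * circ θ ^ k) := by push_cast; ring
    rw [bsLog, hl, norm_pow, Real.log_pow, h1, Complex.re_ofReal_mul, Complex.log_re]
    ring
  have hz : ‖circ θ ^ k‖ ≤ 1 := by rw [norm_pow, norm_circ, one_pow]
  have hd : HasDerivAt (fun θ => -2 * m * Complex.log (1 - u * circ θ ^ k))
      (-2 * m * (-(u * (I * k * circ θ ^ k)) / (1 - u * circ θ ^ k))) θ :=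
    ((((hasDerivAt_circ_pow k θ).const_mul u).const_sub 1).clog_real
      (one_sub_mul_mem_slitPlane hu hz)).const_mul _
  have h2 := (Complex.reCLM.hasFDerivAt.comp_hasDerivAt θ hd).deriv
  rw [hfun]
  refine h2.trans ?_
  rw [Complex.reCLM_apply]
  congr 1
  rw [div_eq_mul_inv]
  ring

lemma bsApprox_pow (α : ℂ) {k : ℕ} (hk : 0 < k) : BSApprox fun θ => (α * circ θ ^ k).re := by
  intro δ hδ
  set w : ℂ := α / (2 * I * k) with hw
  have hk0 : (k : ℂ) ≠ 0 := by exact_mod_cast hk.ne'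
  have hα : 2 * I * k * w = α := by rw [hw]; field_simp
  obtain ⟨m, hm⟩ := exists_nat_gt (max (2 * ‖w‖) (2 * ‖α‖ * ‖w‖ / δ))
  have hm1 : 2 * ‖w‖ < m := (le_max_left _ _).trans_lt hm
  have hm2 : 2 * ‖α‖ * ‖w‖ / δ < m := (le_max_right _ _).trans_lt hm
  have hm0 : (0 : ℝ) < m := lt_of_le_of_lt (by positivity) hm1
  set u : ℂ := w / m with hu
  have hun : ‖u‖ = ‖w‖ / m := by rw [hu, norm_div, Complex.norm_natCast]
  have hu2 : ‖u‖ ≤ 1 / 2 := by rw [hun, div_le_iff₀ hm0]; linarith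
  have hu1 : ‖u‖ < 1 := by linarith
  have hmu : (m : ℂ) * u = w := by
    have : (m : ℂ) ≠ 0 := by exact_mod_cast hm0.ne'
    rw [hu]; field_simp
  obtain ⟨l, hl, hlz⟩ := exists_bs_pow hu1 hk m
  refine ⟨l, hl, fun θ => ?_⟩
  rw [deriv_bsLog_pow hu1 hlz, hmu, hα, ← Complex.sub_re]
  have hz : ‖circ θ ^ k‖ = 1 := by rw [norm_pow, norm_circ, one_pow]
  generalize circ θ ^ k = z at hz
  have hne := one_sub_mul_ne_zero hu1 hz.le
  have e : α * z - α * z * (1 - u * z)⁻¹ = -(α * z * (u * z)) * (1 - u * z)⁻¹ := by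
    have h4 := mul_inv_cancel₀ hne
    linear_combination (-(α * z)) * h4
  have hlow : 1 / 2 ≤ ‖1 - u * z‖ := by
    have := norm_sub_norm_le 1 (u * z)
    rw [norm_one, norm_mul, hz] at this
    linarith
  refine (Complex.abs_re_le_norm _).trans ?_
  rw [e, norm_mul, norm_inv, norm_neg, norm_mul, norm_mul, norm_mul, hz, mul_one, mul_one,
    ← div_eq_mul_inv, div_le_iff₀ (by linarith)]
  have h3 : ‖α‖ * ‖u‖ ≤ δ / 2 := by
    rw [hun, ← mul_div_assoc, div_le_iff₀ hm0]
    rw [div_lt_iff₀ hδ] at hm2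
    linarith
  nlinarith

/-- Approximability of every real multiple of `t - c` for a suitable constant `c`, a property
linear in `t`. -/
def CApprox (t : ℝ → ℂ) : Prop := ∃ c : ℂ, ∀ α : ℂ, BSApprox fun θ => (α * (t θ - c)).re

lemma bsApprox_zero : BSApprox fun _ => 0 := by
  intro δ hδ
  exact ⟨[], by simp, fun θ => by simpa [bsLog_nil] using hδ.le⟩

instance : Fact (0 < 2 * Real.pi) := ⟨Real.two_pi_pos⟩

lemma fourier_two_pi (n : ℤ) (θ : ℝ) :
    fourier n ((θ : ℝ) : AddCircle (2 * Real.pi)) = Complex.exp (n * (θ * I)) := by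
  rw [fourier_coe_apply]
  congr 1
  have : (Real.pi : ℂ) ≠ 0 := by exact_mod_cast Real.pi_ne_zero
  push_cast
  field_simp

lemma cApprox_fourier (n : ℤ) :
    CApprox fun θ => fourier n ((θ : ℝ) : AddCircle (2 * Real.pi)) := by
  simp only [fourier_two_pi]
  obtain ⟨k, rfl | rfl⟩ := n.eq_nat_or_neg
  · rcases Nat.eq_zero_or_pos k with rfl | hk
    · exact ⟨1, fun α => by simpa using bsApprox_zero⟩
    · refine ⟨0, fun α => ?_⟩
      have := bsApprox_pow α hk
      simp only [circ, ← Complex.exp_nat_mul] at this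
      simpa using this
  · rcases Nat.eq_zero_or_pos k with rfl | hk
    · exact ⟨1, fun α => by simpa using bsApprox_zero⟩
    · refine ⟨0, fun α => ?_⟩
      have := bsApprox_pow (conj α) hk
      convert this using 2 with θ
      rw [sub_zero, ← Complex.conj_re, map_mul, ← Complex.exp_conj, circ, ← Complex.exp_nat_mul]
      simp

lemma cApprox_of_mem_span {g : C(AddCircle (2 * Real.pi), ℂ)}
    (hg : g ∈ Submodule.span ℂ (Set.range (@fourier (2 * Real.pi)))) :
    CApprox fun θ => g ((θ : ℝ) : AddCircle (2 * Real.pi)) := by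
  induction hg using Submodule.span_induction with
  | mem x h =>
    obtain ⟨n, rfl⟩ := h
    exact cApprox_fourier n
  | zero => exact ⟨0, fun α => by simpa using bsApprox_zero⟩
  | add x y _ _ hx hy =>
    obtain ⟨c, hc⟩ := hx
    obtain ⟨d, hd⟩ := hy
    refine ⟨c + d, fun α => ?_⟩
    convert (hc α).add (hd α) using 2 with θ
    simp only [← Complex.add_re, ContinuousMap.add_apply]
    congr 1; ring
  | smul s x _ hx =>
    obtain ⟨c, hc⟩ := hx
    refine ⟨s * c, fun α => ?_⟩
    convert hc (α * s) using 2 with θ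
    simp only [ContinuousMap.smul_apply, smul_eq_mul]
    congr 1; ring

lemma PerC1.periodic_deriv {V : ℝ → ℝ} (hV : PerC1 V) :
    Function.Periodic (deriv V) (2 * Real.pi) := fun θ => by
  have h : (fun x => V (x + 2 * Real.pi)) = V := funext hV.periodic
  rw [← deriv_comp_add_const, h]

/-- Bernstein–Szegő exponents are dense, up to constants, among periodic `C¹` functions. -/
lemma PerC1.bsApprox {V : ℝ → ℝ} (hV : PerC1 V) : BSApprox (deriv V) := by
  intro δ hδ
  have hper : Function.Periodic (fun θ => ((deriv V θ : ℝ) : ℂ)) (2 * Real.pi) := fun θ => by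
    simp only [hV.periodic_deriv θ]
  have hcont : Continuous fun θ => ((deriv V θ : ℝ) : ℂ) :=
    Complex.continuous_ofReal.comp (hV.contDiff.continuous_deriv le_rfl)
  let F : C(AddCircle (2 * Real.pi), ℂ) := ⟨hper.lift, hcont.quotient_liftOn' _⟩
  have hF : F ∈ (Submodule.span ℂ (Set.range (@fourier (2 * Real.pi)))).topologicalClosure := by
    rw [span_fourier_closure_eq_top]; trivial
  obtain ⟨g, hg, hFg⟩ := Metric.mem_closure_iff.mp hF (δ / 4) (by positivity)
  obtain ⟨c, hc⟩ := cApprox_of_mem_span hg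
  obtain ⟨l, hl, hl'⟩ := hc 1 (δ / 4) (by positivity)
  have h1 : ∀ θ, |deriv V θ - (g ((θ : ℝ) : AddCircle (2 * Real.pi))).re| ≤ δ / 4 := by
    intro θ
    have h := (F.dist_apply_le_dist (g := g) ((θ : ℝ) : AddCircle (2 * Real.pi))).trans hFg.le
    rw [Complex.dist_eq] at h
    exact (Complex.abs_re_le_norm (((deriv V θ : ℝ) : ℂ) - _)).trans h
  have h2 : ∀ θ, |deriv V θ - deriv (bsLog l) θ - c.re| ≤ δ / 2 := by
    intro θ
    have h3 := hl' θ
    simp only [one_mul, Complex.sub_re] at h3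
    have h4 := h1 θ
    rw [abs_le] at *
    constructor <;> linarith
  -- The constant is small because the derivative of a periodic function vanishes somewhere.
  obtain ⟨θ₀, -, h0⟩ := exists_deriv_eq_zero (f := fun θ => V θ - bsLog l θ) Real.two_pi_pos
    (hV.sub (bsLog_perC1 hl)).continuous.continuousOn
    (by simpa using ((hV.sub (bsLog_perC1 hl)).periodic 0).symm)
  rw [deriv_fun_sub (hV.differentiable θ₀) ((bsLog_perC1 hl).differentiable θ₀)] at h0
  have h5 := h2 θ₀
  rw [h0] at h5
  refine ⟨l, hl, fun θ => ?_⟩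
  have h6 := h2 θ
  rw [abs_le] at *
  constructor <;> linarith

end Szego

namespace Szego

/-! ### Two-sided bounds -/

lemma rmean_mono {f g : ℝ → ℝ} (hf : Continuous f) (hg : Continuous g) (h : ∀ θ, f θ ≤ g θ) :
    rmean f ≤ rmean g := by
  have h1 := rmean_nonneg (f := fun θ => g θ + -1 * f θ) fun θ => by linarith [h θ]
  rw [rmean_add hg (by fun_prop), rmean_const_mul] at h1
  linarith

lemma rmean_sub {f g : ℝ → ℝ} (hf : Continuous f) (hg : Continuous g) :
    rmean (fun θ => f θ - g θ) = rmean f - rmean g := by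
  have h1 := rmean_add hf (g := fun θ => -1 * g θ) (by fun_prop)
  rw [rmean_const_mul] at h1
  rw [show (fun θ => f θ - g θ) = fun θ => f θ + -1 * g θ by ext θ; ring, h1]
  ring

/-- A periodic function with small derivative is close to its value at `0`. -/
lemma PerC1.abs_sub_le {U : ℝ → ℝ} (hU : PerC1 U) {δ : ℝ} (h : ∀ θ, |deriv U θ| ≤ δ) (θ : ℝ) :
    |U θ - U 0| ≤ 2 * Real.pi * δ := by
  have hδ : 0 ≤ δ := (abs_nonneg _).trans (h 0)
  obtain ⟨y, hy, hyθ⟩ := hU.periodic.exists_mem_Ico₀ Real.two_pi_pos θ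
  have h1 := Convex.norm_image_sub_le_of_norm_deriv_le (s := Set.univ) (x := 0) (y := y)
    (fun x _ => hU.differentiable x) (fun x _ => h x) convex_univ trivial trivial
  rw [sub_zero, Real.norm_eq_abs, Real.norm_eq_abs, abs_of_nonneg hy.1] at h1
  rw [hyθ]
  nlinarith [hy.2]

lemma PerC1.abs_deriv_sub_le {V W : ℝ → ℝ} (hV : PerC1 V) (hW : PerC1 W) {δ : ℝ}
    (h : ∀ θ, |deriv V θ - deriv W θ| ≤ δ) (θ : ℝ) : |deriv (fun x => V x - W x) θ| ≤ δ := by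
  rw [deriv_fun_sub (hV.differentiable θ) (hW.differentiable θ)]
  exact h θ

lemma sqrt_energy_le {V W : ℝ → ℝ} (hV : PerC1 V) (hW : PerC1 W) {δ : ℝ} (h0 : 0 ≤ δ)
    (h : ∀ θ, |deriv V θ - deriv W θ| ≤ δ) : √(energy V) ≤ √(energy W) + δ := by
  have h1 := sqrt_energy_add_le hW (hV.sub hW)
  have h2 := sqrt_energy_le_of_deriv (hV.sub hW) h0 (hV.abs_deriv_sub_le hW h)
  rw [show (fun θ => W θ + (V θ - W θ)) = V by ext θ; ring] at h1
  linarith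

/-- The upper bound holds for every `n`: it is the one for Bernstein–Szegő weights, transported by
monotonicity of the determinant. -/
lemma PerC1.tz_le {V : ℝ → ℝ} (hV : PerC1 V) (n : ℕ) :
    tz V n ≤ Real.exp (n * rmean V + energy V) := by
  have key : ∀ δ > 0, tz V n
      ≤ Real.exp (n * (rmean V + 4 * Real.pi * δ) + (√(energy V) + δ) ^ 2) := by
    intro δ hδ
    obtain ⟨l, hl, hd⟩ := hV.bsApprox δ hδ
    have hB := bsLog_perC1 hl
    have hsup := (hV.sub hB).abs_sub_le (hV.abs_deriv_sub_le hB hd)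
    set c := V 0 - bsLog l 0 with hc
    have hmean : c ≤ rmean V + 2 * Real.pi * δ := by
      have h := rmean_mono (f := fun _ => c - 2 * Real.pi * δ) (by fun_prop)
        (hV.sub hB).continuous fun θ => by linarith [(abs_le.mp (hsup θ)).1]
      rw [rmean_const, rmean_sub hV.continuous hB.continuous, rmean_bsLog hl] at h
      linarith
    have h1 := tz_mono hV (hB.add (perC1_const (c + 2 * Real.pi * δ)))
      (fun θ => by linarith [(abs_le.mp (hsup θ)).2]) n
    rw [tz_add_const hB] at h1
    have h2 : energy (bsLog l) ≤ (√(energy V) + δ) ^ 2 := by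
      rw [← Real.sq_sqrt (energy_nonneg (bsLog l))]
      exact pow_le_pow_left₀ (Real.sqrt_nonneg _)
        (sqrt_energy_le hB hV hδ.le fun θ => by rw [abs_sub_comm]; exact hd θ) 2
    calc tz V n ≤ Real.exp (n * (c + 2 * Real.pi * δ)) * Real.exp (energy (bsLog l)) :=
          h1.trans (mul_le_mul_of_nonneg_left (tz_bsLog_le hl n) (Real.exp_pos _).le)
      _ = Real.exp (n * (c + 2 * Real.pi * δ) + energy (bsLog l)) := (Real.exp_add _ _).symm
      _ ≤ _ := by
          rw [Real.exp_le_exp]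
          refine add_le_add (mul_le_mul_of_nonneg_left ?_ (Nat.cast_nonneg n)) h2
          linarith
  have hcont : Continuous fun δ : ℝ =>
      Real.exp (n * (rmean V + 4 * Real.pi * δ) + (√(energy V) + δ) ^ 2) := by fun_prop
  have hlim := (hcont.tendsto 0).mono_left (nhdsWithin_le_nhds (s := Set.Ioi 0))
  rw [mul_zero, add_zero, add_zero, Real.sq_sqrt (energy_nonneg V)] at hlim
  exact ge_of_tendsto hlim (eventually_mem_nhdsWithin.mono fun δ hδ => key δ hδ)

/-- The lower bound follows from the upper bound for the reflected function `2 B - V`, where `B` is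
a Bernstein–Szegő exponent close to `V`, and midpoint log-convexity. -/
lemma PerC1.le_tz {V : ℝ → ℝ} (hV : PerC1 V) {δ : ℝ} (hδ : 0 < δ) :
    ∀ᶠ n : ℕ in atTop, Real.exp (energy V - 4 * √(energy V) * δ - 6 * δ ^ 2)
      ≤ tz V n * Real.exp (-(n * rmean V)) := by
  obtain ⟨l, hl, hd⟩ := hV.bsApprox δ hδ
  filter_upwards [eventually_ge_atTop l.length] with n hn
  have hB := bsLog_perC1 hl
  have hR : PerC1 fun θ => 2 * bsLog l θ - V θ := (hB.const_mul 2).sub hV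
  have h1 := tz_sq_le hB hV n
  have h2 := hR.tz_le n
  have hm : rmean (fun θ => 2 * bsLog l θ - V θ) = -rmean V := by
    rw [rmean_sub (hB.const_mul 2).continuous hV.continuous, rmean_const_mul, rmean_bsLog hl]
    ring
  rw [hm] at h2
  rw [tz_bsLog_eq hl hn, ← Real.exp_nat_mul] at h1
  have h3 : √(energy fun θ => 2 * bsLog l θ - V θ) ≤ √(energy (bsLog l)) + δ := by
    refine sqrt_energy_le hR hB hδ.le fun θ => ?_
    rw [deriv_fun_sub ((hB.const_mul 2).differentiable θ) (hV.differentiable θ),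
      deriv_const_mul _ (hB.differentiable θ), abs_sub_comm]
    convert hd θ using 2
    ring
  have h4 := sqrt_energy_le hV hB hδ.le hd
  have h5 := sqrt_energy_le hB hV hδ.le fun θ => by rw [abs_sub_comm]; exact hd θ
  have e1 := Real.sq_sqrt (energy_nonneg V)
  have e2 := Real.sq_sqrt (energy_nonneg (bsLog l))
  have e3 := Real.sq_sqrt (energy_nonneg fun θ => 2 * bsLog l θ - V θ)
  have p1 := Real.sqrt_nonneg (energy V)
  have p2 := Real.sqrt_nonneg (energy (bsLog l))
  have p3 := Real.sqrt_nonneg (energy fun θ => 2 * bsLog l θ - V θ)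
  have h6 : energy V - 4 * √(energy V) * δ - 6 * δ ^ 2
      ≤ 2 * energy (bsLog l) - energy fun θ => 2 * bsLog l θ - V θ := by
    have q1 := pow_le_pow_left₀ p1 h4 2
    have q3 := pow_le_pow_left₀ p3 h3 2
    rw [e1] at q1
    rw [e3] at q3
    nlinarith
  have h7 := h1.trans (mul_le_mul_of_nonneg_left h2 (hV.tz_pos n).le)
  calc _ ≤ Real.exp (2 * energy (bsLog l) - energy fun θ => 2 * bsLog l θ - V θ) :=
        Real.exp_le_exp.mpr h6
    _ ≤ _ := by
        rw [Real.exp_sub, div_le_iff₀ (Real.exp_pos _), mul_assoc, ← Real.exp_add]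
        rw [show (n : ℝ) * -rmean V = -(n * rmean V) by ring] at h7
        exact_mod_cast h7

lemma PerC1.tendsto_tz {V : ℝ → ℝ} (hV : PerC1 V) :
    Tendsto (fun n : ℕ => tz V n * Real.exp (-(n * rmean V))) atTop
      (𝓝 (Real.exp (energy V))) := by
  have hup : ∀ n : ℕ, tz V n * Real.exp (-(n * rmean V)) ≤ Real.exp (energy V) := by
    intro n
    refine (mul_le_mul_of_nonneg_right (hV.tz_le n) (Real.exp_pos _).le).trans_eq ?_
    rw [← Real.exp_add]
    congr 1; ring
  rw [tendsto_order]
  refine ⟨fun x hx => ?_, fun x hx => .of_forall fun n => (hup n).trans_lt hx⟩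
  have hcont : Continuous fun δ : ℝ =>
      Real.exp (energy V - 4 * √(energy V) * δ - 6 * δ ^ 2) := by fun_prop
  have hlim := (hcont.tendsto 0).mono_left (nhdsWithin_le_nhds (s := Set.Ioi 0))
  simp only [mul_zero, sub_zero, ne_eq, OfNat.ofNat_ne_zero, not_false_eq_true, zero_pow] at hlim
  obtain ⟨δ, hδ, hδ0⟩ := ((hlim.eventually_const_lt hx).and eventually_mem_nhdsWithin).exists
  filter_upwards [hV.le_tz hδ0] with n hn
  exact hδ.trans_le hn

end Szego

/-- **Szegő's Strong Limit Theorem.** For a positive symbol `φ` of class `C^{1+ε}`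
(continuously differentiable with `ε`-Hölder derivative), one has
`D_n(φ)/exp(n (log φ)_0) → exp (∑_{k≥1} k |(log φ)_k|²)`. -/
theorem strong_szego_limit_theorem
    (φ : ℝ → ℝ) (ε : NNReal) (hε : 0 < ε) (C : NNReal)
    (hper : Function.Periodic φ (2 * Real.pi)) (hpos : ∀ θ : ℝ, 0 < φ θ)
    (hsm : ContDiff ℝ 1 φ) (hhold : HolderWith C ε (deriv φ)) :
    Tendsto (fun n : ℕ =>
        toeplitzDet (fun θ => (φ θ : ℂ)) n /
          Complex.exp ((n : ℂ) * fourierCoeff' (fun θ => (Real.log (φ θ) : ℂ)) 0))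
      atTop
      (𝓝 ((Real.exp (∑' k : ℕ,
          ((k + 1 : ℕ) : ℝ) *
            ‖fourierCoeff' (fun θ => (Real.log (φ θ) : ℂ)) ((k : ℤ) + 1)‖ ^ 2) : ℝ))) := by
  have hV : Szego.PerC1 fun θ => Real.log (φ θ) :=
    ⟨hsm.log fun θ => (hpos θ).ne', fun θ => by simp only [hper θ]⟩
  have h0 : fourierCoeff' (fun θ => (Real.log (φ θ) : ℂ)) 0
      = (Szego.rmean fun θ => Real.log (φ θ) : ℂ) := by
    rw [Szego.fourierCoeff'_eq_cmean, ← Szego.cmean_ofReal]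
    simp
  have hdet : ∀ n, toeplitzDet (fun θ => (φ θ : ℂ)) n
      = (Szego.tz (fun θ => Real.log (φ θ)) n : ℂ) := by
    intro n
    rw [← hV.det_eq]
    simp only [Real.exp_log (hpos _)]
    rfl
  have h := (Complex.continuous_ofReal.tendsto _).comp hV.tendsto_tz
  refine h.congr fun n => ?_
  rw [hdet, h0, div_eq_mul_inv, ← Complex.exp_neg]
  simp
end

section
/- Johansson's Strong Szegő Limit Theorem for complex symbols: Let V be a (possibly complex-valued) integrable function on the unit circle whose Fourier coefficients (V_k)_{k∈ℤ} satisfy ∑_{k=-∞}^{∞} |k|·|V_k|² < ∞. Then the series ∑_{k=1}^{∞} k·V_k·V_{-k} converges absolutely, and D_n(e^V)/exp(n·V_0) converges, as n → ∞, to exp(∑_{k=1}^{∞} k·V_k·V_{-k}). -/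
open MeasureTheory Filter Topology

/-! ### Andréief's identity -/

/-- A finite product of absolutely convergent series, expanded as one absolutely convergent series
indexed by all the choices of one term from each. -/
theorem hasSum_prod_pi {n : ℕ} (f : Fin n → ℕ → ℂ) (hf : ∀ i, Summable fun k => ‖f i k‖) :
    HasSum (fun S : Fin n → ℕ => ∏ i, f i (S i)) (∏ i, ∑' k, f i k) ∧
      Summable fun S : Fin n → ℕ => ‖∏ i, f i (S i)‖ := by
  induction n with
  | zero => exact ⟨by simp [hasSum_unique],
      Summable.of_finite⟩
  | succ n ih =>
    obtain ⟨h1, h2⟩ := ih (fun i => f i.succ) (fun i => hf i.succ)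
    have h3 := (hf 0).mul_norm h2
    have h4 : HasSum (fun p : ℕ × (Fin n → ℕ) => f 0 p.1 * ∏ i, f (Fin.succ i) (p.2 i))
        ((∑' k, f 0 k) * ∏ i : Fin n, ∑' k, f i.succ k)  := by
      have h5 : Summable fun p : ℕ × (Fin n → ℕ) => f 0 p.1 * ∏ i, f (Fin.succ i) (p.2 i) :=
        Summable.of_norm h3
      exact HasSum.mul (f := f 0) (g := fun S : Fin n → ℕ => ∏ i, f (Fin.succ i) (S i))
        (hf 0).of_norm.hasSum h1 h5
    let e := Fin.consEquiv (fun _ : Fin (n + 1) => ℕ)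
    constructor
    · rw [← e.hasSum_iff, Fin.prod_univ_succ]
      convert h4 using 2 with p
      simp [e, Fin.consEquiv, Fin.prod_univ_succ]
    · rw [← e.summable_iff]
      convert h3 using 2 with p
      simp [e, Fin.consEquiv, Fin.prod_univ_succ]

/-- **Andréief's identity** for the counting measure on `ℕ`, i.e. the Cauchy–Binet formula for
the product of an `n × ∞` and an `∞ × n` matrix. Summing over all maps `Fin n → ℕ` rather than
over the `n`-element subsets of `ℕ` accounts for the factor `n!`. -/
theorem andreief {n : ℕ} (A B : ℕ → Fin n → ℂ)
    (hAB : ∀ j k, Summable fun s => ‖A s k * star (B s j)‖) :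
    HasSum (fun S : Fin n → ℕ => (Matrix.of fun i j => A (S i) j).det *
        star (Matrix.of fun i j => B (S i) j).det)
      (n.factorial * (Matrix.of fun j k => ∑' s, A s k * star (B s j)).det) := by
  set T : Matrix (Fin n) (Fin n) ℂ := Matrix.of fun j k => ∑' s, A s k * star (B s j) with hT
  have key : ∀ σ τ : Equiv.Perm (Fin n),
      HasSum (fun S : Fin n → ℕ => ((Equiv.Perm.sign σ : ℤ) : ℂ) * ((Equiv.Perm.sign τ : ℤ) : ℂ) *
          ∏ i, (A (S i) (σ i) * star (B (S i) (τ i))))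
        (((Equiv.Perm.sign σ : ℤ) : ℂ) * ((Equiv.Perm.sign τ : ℤ) : ℂ) * ∏ i, T (τ i) (σ i)) := by
    intro σ τ
    exact (hasSum_prod_pi (fun i s => A s (σ i) * star (B s (τ i)))
      (fun i => hAB (τ i) (σ i))).1.mul_left _
  have h := hasSum_sum (s := Finset.univ) fun τ _ =>
    hasSum_sum (s := Finset.univ) fun σ _ => key σ τ
  convert h using 1
  · ext S
    rw [← Matrix.det_transpose, ← Matrix.det_transpose (Matrix.of fun i j => B (S i) j),
      Matrix.det_apply', Matrix.det_apply', star_sum, Finset.sum_mul_sum, Finset.sum_comm]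
    refine Finset.sum_congr rfl fun τ _ => Finset.sum_congr rfl fun σ _ => ?_
    simp only [Matrix.transpose_apply, Matrix.of_apply, Finset.prod_mul_distrib, star_mul',
      star_prod, star_intCast]
    ring
  · have : ∀ τ : Equiv.Perm (Fin n), ∑ σ : Equiv.Perm (Fin n), ((Equiv.Perm.sign σ : ℤ) : ℂ) *
        ((Equiv.Perm.sign τ : ℤ) : ℂ) * ∏ i, T (τ i) (σ i) = T.det := by
      intro τ
      have h1 := Matrix.det_permute τ T
      rw [← Matrix.det_transpose, Matrix.det_apply'] at h1
      simp only [Matrix.transpose_apply, Matrix.submatrix_apply, id] at h1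
      have h2 : (((Equiv.Perm.sign τ : ℤ) : ℂ)) * ((Equiv.Perm.sign τ : ℤ) : ℂ) = 1 := by
        rcases Int.units_eq_one_or (Equiv.Perm.sign τ) with h | h <;> simp [h]
      calc _ = ((Equiv.Perm.sign τ : ℤ) : ℂ) *
            ∑ σ : Equiv.Perm (Fin n), ((Equiv.Perm.sign σ : ℤ) : ℂ) * ∏ i, T (τ i) (σ i) := by
            rw [Finset.mul_sum]; refine Finset.sum_congr rfl fun σ _ => by ring
        _ = _ := by rw [h1, ← mul_assoc, h2, one_mul]
    simp [this, Finset.card_univ, Fintype.card_perm]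

/-! ### Power series on the unit circle and Gessel's identity -/

/-- The point `e^{iθ}` of the unit circle. -/
noncomputable def circ (θ : ℝ) : ℂ := Complex.exp (Complex.I * θ)

theorem norm_circ (θ : ℝ) : ‖circ θ‖ = 1 := by
  rw [circ, mul_comm]; exact Complex.norm_exp_ofReal_mul_I θ

theorem continuous_circ : Continuous circ := by unfold circ; fun_prop

theorem circ_mul_star (θ : ℝ) : circ θ * star (circ θ) = 1 := by
  have := Complex.mul_conj' (circ θ)
  rw [norm_circ] at this
  simpa using this

theorem star_circ (θ : ℝ) : star (circ θ) = (circ θ)⁻¹ :=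
  (eq_inv_of_mul_eq_one_right (circ_mul_star θ))

theorem circ_ne_zero (θ : ℝ) : circ θ ≠ 0 := Complex.exp_ne_zero _

theorem exp_eq_circ_zpow (ℓ : ℤ) (θ : ℝ) :
    Complex.exp (-Complex.I * (ℓ : ℂ) * (θ : ℂ)) = circ θ ^ (-ℓ) := by
  rw [circ, ← Complex.exp_int_mul]; congr 1; push_cast; ring

theorem fourierCoeff'_eq (φ : ℝ → ℂ) (ℓ : ℤ) : fourierCoeff' φ ℓ =
    ((2 * Real.pi : ℝ) : ℂ)⁻¹ * ∫ θ in (-Real.pi)..Real.pi, circ θ ^ (-ℓ) * φ θ := by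
  simp only [fourierCoeff', exp_eq_circ_zpow]

theorem integral_circ_zpow (m : ℤ) :
    ((2 * Real.pi : ℝ) : ℂ)⁻¹ * ∫ θ in (-Real.pi)..Real.pi, circ θ ^ m =
      if m = 0 then 1 else 0 := by
  have hpi : ((2 * Real.pi : ℝ) : ℂ) ≠ 0 := by
    exact_mod_cast (by positivity : (2 * Real.pi : ℝ) ≠ 0)
  split_ifs with h
  · subst h
    simp only [zpow_zero, intervalIntegral.integral_const, sub_neg_eq_add]
    rw [← two_mul, Complex.real_smul, mul_one, inv_mul_cancel₀ hpi]
  · have hc : (Complex.I * m) ≠ 0 := mul_ne_zero Complex.I_ne_zero (by exact_mod_cast h)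
    have : ∀ θ : ℝ, circ θ ^ m = Complex.exp (Complex.I * m * θ) := by
      intro θ; rw [circ, ← Complex.exp_int_mul]; congr 1; ring
    simp only [this]
    rw [integral_exp_mul_complex hc]
    have : Complex.exp (Complex.I * m * (Real.pi : ℝ)) =
        Complex.exp (Complex.I * m * ((-Real.pi : ℝ) : ℂ)) := by
      rw [Complex.exp_eq_exp_iff_exists_int]
      exact ⟨m, by push_cast; ring⟩
    rw [this, sub_self, zero_div, mul_zero]

/-- Termwise integration of an absolutely convergent power series on the unit circle. -/
theorem integral_series_mul (α : ℕ → ℂ) (hα : Summable fun s => ‖α s‖) (g G : ℝ → ℂ)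
    (hg : ∀ θ, HasSum (fun s => α s * circ θ ^ s) (g θ)) (hG : Continuous G) :
    HasSum (fun s => α s * (((2 * Real.pi : ℝ) : ℂ)⁻¹ *
        ∫ θ in (-Real.pi)..Real.pi, circ θ ^ s * G θ))
      (((2 * Real.pi : ℝ) : ℂ)⁻¹ * ∫ θ in (-Real.pi)..Real.pi, g θ * G θ) := by
  have h := intervalIntegral.hasSum_integral_of_dominated_convergence (μ := volume)
    (a := -Real.pi) (b := Real.pi)
    (F := fun s θ => α s * circ θ ^ s * G θ) (f := fun θ => g θ * G θ)
    (fun s θ => ‖α s‖ * ‖G θ‖)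
    (fun s => (by
      have := continuous_circ
      exact Continuous.aestronglyMeasurable (by fun_prop)))
    (fun s => Eventually.of_forall fun θ _ => by simp [norm_circ])
    (Eventually.of_forall fun θ _ => hα.mul_right _)
    (by
      simp only [tsum_mul_right]
      exact Continuous.intervalIntegrable (by fun_prop) _ _)
    (Eventually.of_forall fun θ _ => (hg θ).mul_right _)
  refine (h.mul_left ((2 * Real.pi : ℝ) : ℂ)⁻¹).congr_fun fun s => ?_
  have : ∀ θ, α s * circ θ ^ s * G θ = α s * (circ θ ^ s * G θ) := fun θ => mul_assoc _ _ _
  simp only [this, intervalIntegral.integral_const_mul]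
  ring

/-- Parseval's identity for absolutely convergent power series on the unit circle. -/
theorem integral_series_mul_star (α β : ℕ → ℂ) (hα : Summable fun s => ‖α s‖)
    (hβ : Summable fun s => ‖β s‖) (g h : ℝ → ℂ)
    (hg : ∀ θ, HasSum (fun s => α s * circ θ ^ s) (g θ))
    (hh : ∀ θ, HasSum (fun s => β s * circ θ ^ s) (h θ)) (hhc : Continuous h) :
    HasSum (fun s => α s * star (β s))
      (((2 * Real.pi : ℝ) : ℂ)⁻¹ * ∫ θ in (-Real.pi)..Real.pi, g θ * star (h θ)) := by
  convert integral_series_mul α hα g (fun θ => star (h θ)) hg (hhc.star) using 3 with s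
  have h1 := integral_series_mul β hβ h (fun θ => star (circ θ ^ s)) hh
    ((continuous_circ.pow s).star)
  have h2 : ∀ r : ℕ, ((2 * Real.pi : ℝ) : ℂ)⁻¹ *
      ∫ θ in (-Real.pi)..Real.pi, circ θ ^ r * star (circ θ ^ s) = if r = s then 1 else 0 := by
    intro r
    have := integral_circ_zpow ((r : ℤ) - s)
    simp only [sub_eq_zero, Nat.cast_inj] at this
    rw [← this]
    congr 2; ext θ
    rw [zpow_sub₀ (circ_ne_zero θ), star_pow, star_circ, zpow_natCast, zpow_natCast, div_eq_mul_inv,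
      inv_pow]
  simp only [h2, mul_ite, mul_one, mul_zero] at h1
  have h3 := h1.unique (hasSum_single (f := fun r => if r = s then β r else 0) s
    (by simp +contextual))
  simp only [if_true] at h3
  rw [← h3]
  change starRingEnd ℂ _ = _
  rw [map_mul, ← intervalIntegral.intervalIntegral_conj, ← Complex.ofReal_inv, Complex.conj_ofReal]
  simp [mul_comm]

theorem continuous_of_series (α : ℕ → ℂ) (hα : Summable fun s => ‖α s‖) (g : ℝ → ℂ)
    (hg : ∀ θ, HasSum (fun s => α s * circ θ ^ s) (g θ)) : Continuous g := by
  have : g = fun θ => ∑' s, α s * circ θ ^ s := funext fun θ => (hg θ).tsum_eq.symm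
  rw [this]
  have := continuous_circ
  exact continuous_tsum (fun s => by fun_prop) hα (fun s θ => by simp [norm_circ])

/-- The points of `l` lie in the open unit disk. -/
def InDisk (l : List ℂ) : Prop := ∀ x ∈ l, ‖x‖ < 1

theorem InDisk.tail {x : ℂ} {l : List ℂ} (h : InDisk (x :: l)) : InDisk l :=
  fun y hy => h y (List.mem_cons_of_mem _ hy)

theorem InDisk.head {x : ℂ} {l : List ℂ} (h : InDisk (x :: l)) : ‖x‖ < 1 :=
  h x List.mem_cons_self

/-- The reciprocal `w ↦ ∏_{x ∈ l} (1 - x w)⁻¹` of a polynomial without zeros in the closed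
unit disk (when `l` lies in the open disk). -/
noncomputable def recip (l : List ℂ) (w : ℂ) : ℂ := (l.map fun x => (1 - x * w)⁻¹).prod

/-- The Taylor coefficients of `recip l`: the complete homogeneous symmetric polynomials
evaluated at the points of `l`. -/
noncomputable def taylor : List ℂ → ℕ → ℂ
  | [] => fun n => if n = 0 then 1 else 0
  | x :: l => fun n => ∑ p ∈ Finset.HasAntidiagonal.antidiagonal n, x ^ p.1 * taylor l p.2

theorem taylor_zero (l : List ℂ) : taylor l 0 = 1 := by
  induction l with
  | nil => simp [taylor]
  | cons x l ih => simp [taylor, ih]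

theorem summable_taylor {l : List ℂ} (hl : InDisk l) : Summable fun s => ‖taylor l s‖ := by
  induction l with
  | nil => exact summable_of_hasFiniteSupport (by
      refine (Set.finite_singleton 0).subset fun n hn => ?_
      by_contra h
      simp_all [taylor])
  | cons x l ih =>
    have h1 : Summable fun n : ℕ => ‖x ^ n‖ := by
      simpa using summable_geometric_of_lt_one (norm_nonneg x) hl.head
    exact summable_norm_sum_mul_antidiagonal_of_summable_norm h1 (ih hl.tail)

theorem hasSum_taylor {l : List ℂ} (hl : InDisk l) {w : ℂ} (hw : ‖w‖ ≤ 1) :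
    HasSum (fun s => taylor l s * w ^ s) (recip l w) := by
  induction l with
  | nil =>
    convert hasSum_ite_eq 0 (1 : ℂ) using 2 with s
    · by_cases hs : s = 0 <;> simp [taylor, hs]
    · simp [recip]
  | cons x l ih =>
    have h1 : ‖x * w‖ < 1 := by
      rw [norm_mul]
      exact lt_of_le_of_lt (mul_le_of_le_one_right (norm_nonneg x) hw) hl.head
    have h2 : Summable fun n : ℕ => ‖(x * w) ^ n‖ := by
      simpa using summable_geometric_of_lt_one (norm_nonneg (x * w)) h1
    have h3 : Summable fun s => ‖taylor l s * w ^ s‖ := by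
      refine (summable_taylor hl.tail).of_nonneg_of_le (fun _ => norm_nonneg _) fun s => ?_
      rw [norm_mul, norm_pow]
      exact mul_le_of_le_one_right (norm_nonneg _) (pow_le_one₀ (norm_nonneg _) hw)
    have h4 := summable_norm_sum_mul_antidiagonal_of_summable_norm h2 h3
    have h5 := tsum_mul_tsum_eq_tsum_sum_antidiagonal_of_summable_norm h2 h3
    have h6 := h4.of_norm.hasSum
    rw [← h5, (ih hl.tail).tsum_eq, tsum_geometric_of_norm_lt_one h1] at h6
    have h7 : recip (x :: l) w = (1 - x * w)⁻¹ * recip l w := by simp [recip]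
    rw [h7]
    refine h6.congr_fun fun s => ?_
    rw [taylor, Finset.sum_mul]
    refine Finset.sum_congr rfl fun p hp => ?_
    rw [← Finset.HasAntidiagonal.mem_antidiagonal.1 hp, pow_add]; ring

/-- The Toeplitz determinant of `e^{iθ} ↦ recip x (e^{iθ}) * conj (recip y (e^{iθ}))`. -/
noncomputable def recipDet (n : ℕ) (x y : List ℂ) : ℂ :=
  toeplitzDet (fun θ => recip x (circ θ) * star (recip y (circ θ))) n

/-- The entry `(s, k)` of the lower triangular Toeplitz matrix with symbol `recip l`. -/
noncomputable def lowerEntry (l : List ℂ) (s k : ℕ) : ℂ := if k ≤ s then taylor l (s - k) else 0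

theorem summable_lowerEntry {l : List ℂ} (hl : InDisk l) (k : ℕ) :
    Summable fun s => ‖lowerEntry l s k‖ := by
  rw [← summable_nat_add_iff k]
  simpa [lowerEntry] using summable_taylor hl

theorem hasSum_lowerEntry {l : List ℂ} (hl : InDisk l) (k : ℕ) {w : ℂ} (hw : ‖w‖ ≤ 1) :
    HasSum (fun s => lowerEntry l s k * w ^ s) (recip l w * w ^ k) := by
  have h : HasSum (fun s => lowerEntry l (s + k) k * w ^ (s + k)) (recip l w * w ^ k) := by
    simpa [lowerEntry, pow_add, mul_assoc] using (hasSum_taylor hl hw).mul_right (w ^ k)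
  rw [hasSum_nat_add_iff (f := fun s => lowerEntry l s k * w ^ s) k] at h
  rwa [Finset.sum_eq_zero, add_zero] at h
  intro i hi
  simp [lowerEntry, Finset.mem_range.1 hi]

theorem continuous_recip_circ {l : List ℂ} (hl : InDisk l) :
    Continuous fun θ => recip l (circ θ) :=
  continuous_of_series _ (summable_taylor hl) _ fun θ => hasSum_taylor hl (norm_circ θ).le

/-- The Toeplitz matrix of `recip x * conj (recip y)` is the product of an upper and a lower
triangular infinite Toeplitz matrix. -/
theorem hasSum_lowerEntry_mul_star {x y : List ℂ} (hx : InDisk x) (hy : InDisk y) (j k : ℕ) :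
    HasSum (fun s => lowerEntry x s k * star (lowerEntry y s j))
      (fourierCoeff' (fun θ => recip x (circ θ) * star (recip y (circ θ))) ((j : ℤ) - k)) := by
  have h := integral_series_mul_star _ _ (summable_lowerEntry hx k) (summable_lowerEntry hy j)
    _ _ (fun θ => hasSum_lowerEntry hx k (norm_circ θ).le)
    (fun θ => hasSum_lowerEntry hy j (norm_circ θ).le)
    ((continuous_recip_circ hy).mul (continuous_circ.pow j))
  rw [fourierCoeff'_eq]
  convert h using 3
  refine funext fun θ => ?_
  simp only [neg_sub, star_mul, star_pow, star_circ, zpow_sub₀ (circ_ne_zero θ), zpow_natCast,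
    div_eq_mul_inv, inv_pow]
  ring

theorem summable_mul_star {α β : ℕ → ℂ} (hα : Summable fun s => ‖α s‖)
    (hβ : Summable fun s => ‖β s‖) : Summable fun s => ‖α s * star (β s)‖ := by
  obtain ⟨C, hC⟩ := hβ.tendsto_atTop_zero.bddAbove_range
  refine (hα.mul_right C).of_nonneg_of_le (fun _ => norm_nonneg _) fun s => ?_
  rw [norm_mul, norm_star]
  exact mul_le_mul_of_nonneg_left (hC ⟨s, rfl⟩) (norm_nonneg _)

/-- The minor of the lower triangular Toeplitz matrix with symbol `recip l` given by the rows `S`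
and the first `n` columns (a Schur polynomial in the points of `l`, up to sign, if the rows
are distinct). -/
noncomputable def minor (n : ℕ) (l : List ℂ) (S : Fin n → ℕ) : ℂ :=
  (Matrix.of fun i j : Fin n => lowerEntry l (S i) j).det

/-- **Gessel's identity**: a Toeplitz determinant, times `n!`, is the inner product of the families
of minors of the two triangular factors. -/
theorem hasSum_minor {x y : List ℂ} (hx : InDisk x) (hy : InDisk y) (n : ℕ) :
    HasSum (fun S => minor n x S * star (minor n y S)) (n.factorial * recipDet n x y) := by
  have h := andreief (n := n) (fun s k => lowerEntry x s k) (fun s k => lowerEntry y s k)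
    (fun j k => summable_mul_star (summable_lowerEntry hx k) (summable_lowerEntry hy j))
  have h2 : recipDet n x y =
      (Matrix.of fun j k : Fin n => ∑' s, lowerEntry x s k * star (lowerEntry y s j)).det := by
    unfold recipDet toeplitzDet
    congr 1
    ext j k
    exact (hasSum_lowerEntry_mul_star hx hy j k).tsum_eq.symm
  rw [h2]
  exact h

/-! ### Monotonicity of the vectors of minors -/

/-- Prepending the row `0` and shifting the other rows by one does not change a minor, up to sign:
the row `0` of the unipotent lower triangular matrix is the first basis vector. -/
theorem minor_insertNth (n : ℕ) (l : List ℂ) (i : Fin (n + 1)) (S : Fin n → ℕ) :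
    minor (n + 1) l (i.insertNth (α := fun _ => ℕ) 0 fun j => S j + 1) =
      (-1) ^ (i : ℕ) * minor n l S := by
  rw [minor, Matrix.det_succ_row _ i, Fin.sum_univ_succ, Finset.sum_eq_zero, add_zero]
  · simp only [Matrix.of_apply, Fin.insertNth_apply_same, Fin.val_zero, add_zero]
    rw [show lowerEntry l 0 0 = 1 by simp [lowerEntry, taylor_zero], mul_one, minor]
    congr 2
    ext j k
    simp [lowerEntry]
  · intro j _
    simp [lowerEntry]

theorem insertNth_injective (n : ℕ) : Function.Injective fun p : Fin (n + 1) × (Fin n → ℕ) =>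
    (p.1.insertNth (α := fun _ => ℕ) 0 fun j => p.2 j + 1 : Fin (n + 1) → ℕ) := by
  rintro ⟨i, S⟩ ⟨i', S'⟩ h
  simp only at h
  have hi : i = i' := by
    by_contra hne
    obtain ⟨j, hj⟩ := Fin.exists_succAbove_eq hne
    have := congrFun h i
    rw [Fin.insertNth_apply_same, ← hj, Fin.insertNth_apply_succAbove] at this
    omega
  subst hi
  have : S = S' := by
    funext j
    have := congrFun h (i.succAbove j)
    simp only [Fin.insertNth_apply_succAbove] at this
    omega
  rw [this]

theorem memℓp_minor {l : List ℂ} (hl : InDisk l) (n : ℕ) : Memℓp (minor n l) 2 := by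
  apply memℓp_gen
  have h := (hasSum_minor hl hl n).summable.norm
  simpa [sq] using h

/-- The vector of all `n × n` minors with the first `n` columns. Each set of rows occurs in all its
`n!` orders, whence the normalisation by `1 / √n!`. -/
noncomputable def minorVec (n : ℕ) {l : List ℂ} (hl : InDisk l) :
    lp (fun _ : Fin n → ℕ => ℂ) 2 :=
  (((√(n.factorial : ℝ))⁻¹ : ℝ) : ℂ) • ⟨minor n l, memℓp_minor hl n⟩

theorem minorVec_apply (n : ℕ) {l : List ℂ} (hl : InDisk l) (S : Fin n → ℕ) :
    minorVec n hl S = (((√(n.factorial : ℝ))⁻¹ : ℝ) : ℂ) * minor n l S := rfl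

/-- The determinants `recipDet n x y` form a positive definite kernel: they are the inner products
of the vectors of minors. -/
theorem inner_minorVec (n : ℕ) {x y : List ℂ} (hx : InDisk x) (hy : InDisk y) :
    inner ℂ (minorVec n hy) (minorVec n hx) = recipDet n x y := by
  refine (lp.hasSum_inner (minorVec n hy) (minorVec n hx)).unique ?_
  have h := (hasSum_minor hx hy n).mul_left (((n.factorial : ℝ)⁻¹ : ℝ) : ℂ)
  have h0 : (n.factorial : ℂ) ≠ 0 := by exact_mod_cast n.factorial_ne_zero
  have h1 : (((n.factorial : ℝ)⁻¹ : ℝ) : ℂ) * (n.factorial * recipDet n x y) =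
      recipDet n x y := by
    push_cast
    field_simp
  rw [h1] at h
  refine h.congr_fun fun S => ?_
  rw [minorVec_apply, minorVec_apply]
  have : ((√(n.factorial : ℝ))⁻¹ : ℝ) * ((√(n.factorial : ℝ))⁻¹ : ℝ) = (n.factorial : ℝ)⁻¹ := by
    rw [← mul_inv, Real.mul_self_sqrt (by positivity)]
  rw [← this]
  simp only [RCLike.inner_apply, map_mul, Complex.conj_ofReal, Complex.ofReal_mul, Complex.star_def]
  ring

theorem lp_norm_sq {ι : Type*} (f : lp (fun _ : ι => ℂ) 2) :
    HasSum (fun i => ‖f i‖ ^ 2) (‖f‖ ^ 2) := by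
  simpa using lp.hasSum_norm (p := 2) (by norm_num) f

/-- Repeating a nonnegative family `n + 1` times with weight `1 / (n + 1)` does not change its sum. -/
theorem hasSum_average {ι : Type*} {g : ι → ℝ} {c : ℝ} (n : ℕ) (hg : HasSum g c)
    (h0 : ∀ i, 0 ≤ g i) :
    HasSum (fun p : Fin (n + 1) × ι => ((n : ℝ) + 1)⁻¹ * g p.2) c := by
  have h1 : Summable fun p : Fin (n + 1) × ι => ((n : ℝ) + 1)⁻¹ * g p.2 :=
    Summable.mul_of_nonneg (f := fun _ : Fin (n + 1) => ((n : ℝ) + 1)⁻¹) (g := g)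
      Summable.of_finite hg.summable (fun _ => by positivity) h0
  have h2 : HasSum (fun p : Fin (n + 1) × ι => ((n : ℝ) + 1)⁻¹ * g p.2)
      ((∑ _ : Fin (n + 1), ((n : ℝ) + 1)⁻¹) * c) :=
    HasSum.mul (f := fun _ : Fin (n + 1) => ((n : ℝ) + 1)⁻¹) (g := g) (hasSum_fintype _) hg h1
  have h3 : ∑ _ : Fin (n + 1), ((n : ℝ) + 1)⁻¹ = 1 := by
    simp only [Finset.sum_const, Finset.card_univ, Fintype.card_fin, nsmul_eq_mul]
    push_cast
    exact mul_inv_cancel₀ (by positivity)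
  rwa [h3, one_mul] at h2

/-- The norm of a linear combination of two vectors of minors is nondecreasing in `n`: by
`minor_insertNth`, the minors of size `n + 1` that use the row `0` exactly once are, up to sign,
the minors of size `n`. -/
theorem norm_minorVec_mono (n : ℕ) {x y : List ℂ} (hx : InDisk x) (hy : InDisk y) (α β : ℂ) :
    ‖α • minorVec n hx + β • minorVec n hy‖ ≤
      ‖α • minorVec (n + 1) hx + β • minorVec (n + 1) hy‖ := by
  set f := α • minorVec n hx + β • minorVec n hy with hf
  set g := α • minorVec (n + 1) hx + β • minorVec (n + 1) hy with hg
  have hfg : ∀ (i : Fin (n + 1)) (S : Fin n → ℕ),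
      ‖g (i.insertNth (α := fun _ => ℕ) 0 fun j => S j + 1)‖ ^ 2 =
        ((n : ℝ) + 1)⁻¹ * ‖f S‖ ^ 2 := by
    intro i S
    have h1 : g (i.insertNth (α := fun _ => ℕ) 0 fun j => S j + 1) =
        (((√((n + 1).factorial : ℝ))⁻¹ : ℝ) : ℂ) *
          ((-1) ^ (i : ℕ) * (α * minor n x S + β * minor n y S)) := by
      simp only [hg, lp.coeFn_add, lp.coeFn_smul, Pi.add_apply, Pi.smul_apply, smul_eq_mul,
        minorVec_apply, minor_insertNth]
      ring
    have h2 : f S = (((√(n.factorial : ℝ))⁻¹ : ℝ) : ℂ) *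
          (α * minor n x S + β * minor n y S) := by
      simp only [hf, lp.coeFn_add, lp.coeFn_smul, Pi.add_apply, Pi.smul_apply, smul_eq_mul,
        minorVec_apply]
      ring
    rw [h1, h2]
    simp only [norm_mul, norm_pow, norm_neg, norm_one, one_pow, one_mul, Complex.norm_real,
      Real.norm_eq_abs, mul_pow, sq_abs, inv_pow]
    rw [Real.sq_sqrt (by positivity), Real.sq_sqrt (by positivity), Nat.factorial_succ]
    push_cast
    rw [mul_inv]; ring
  have hF := lp_norm_sq f
  have hG := lp_norm_sq g
  have h1 : HasSum (fun p : Fin (n + 1) × (Fin n → ℕ) => ((n : ℝ) + 1)⁻¹ * ‖f p.2‖ ^ 2)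
      (‖f‖ ^ 2) := hasSum_average n hF fun _ => by positivity
  have h2 : ‖f‖ ^ 2 ≤ ‖g‖ ^ 2 := by
    rw [← hG.tsum_eq, ← h1.tsum_eq]
    refine Summable.tsum_le_tsum_of_inj _ (insertNth_injective n) (fun _ _ => by positivity)
      (fun p => (hfg p.1 p.2).symm.le) h1.summable hG.summable
  exact (sq_le_sq₀ (norm_nonneg _) (norm_nonneg _)).1 h2

/-! ### Exact evaluation -/

/-- One step of the exact evaluation. If `c'` and `c` are the coefficients of `φ / (1 - x z)` and
`φ`, and `q (1/z) φ`, `q (1/z) φ / (1 - x z)` have the same coefficients at all powers `z ^ (-k)`,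
`k ≥ 0`, for a polynomial `q` of degree at most `N` with `q 0 = 1`, then the determinants of size
`N + 1` differ exactly by the factor `q x`. -/
theorem toeplitz_step (N m : ℕ) (hm : m ≤ N) (q : ℕ → ℂ) (hq : q 0 = 1) (x : ℂ) (c c' : ℤ → ℂ)
    (hc : ∀ ℓ, c' ℓ = x * c' (ℓ - 1) + c ℓ)
    (hd : ∀ k : ℕ, ∑ b ∈ Finset.range (m + 1), q b * c (b - k) =
      ∑ b ∈ Finset.range (m + 1), q b * c' (b - k)) :
    (∑ b ∈ Finset.range (m + 1), q b * x ^ b) *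
        (Matrix.of fun j k : Fin (N + 1) => c' ((j : ℤ) - k)).det =
      (Matrix.of fun j k : Fin (N + 1) => c ((j : ℤ) - k)).det := by
  set T := Matrix.of fun j k : Fin (N + 1) => c ((j : ℤ) - k) with hT
  set Q := ∑ b ∈ Finset.range (m + 1), q b * x ^ b with hQ
  let r : Fin (N + 1) → ℂ := fun k => c' (-(k : ℤ))
  -- Row operations turn all rows but the first one into those of `T`.
  have h1 : (Matrix.of fun j k : Fin (N + 1) => c' ((j : ℤ) - k)).det = (T.updateRow 0 r).det := by
    refine Matrix.det_eq_of_forall_row_eq_smul_add_pred (fun _ => x) (fun j => ?_) (fun i j => ?_)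
    · simp [r]
    · rw [Matrix.updateRow_ne (Fin.succ_ne_zero i)]
      simp only [Matrix.of_apply, hT]
      rw [hc, add_comm]
      congr 3
      · simp; ring
  have tele : ∀ (k b : ℕ), c' ((b : ℤ) - k) =
      x ^ b * c' (-(k : ℤ)) + ∑ i ∈ Finset.range b, x ^ (b - 1 - i) * c (((i + 1 : ℕ) : ℤ) - k) := by
    intro k b
    induction b with
    | zero => simp
    | succ b ih =>
      rw [hc, show ((b + 1 : ℕ) : ℤ) - k - 1 = (b : ℤ) - k by push_cast; ring, ih,
        Finset.sum_range_succ, mul_add, Finset.mul_sum, ← mul_assoc, ← pow_succ', add_assoc]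
      congr 2
      · refine Finset.sum_congr rfl fun i hi => ?_
        have hi := Finset.mem_range.1 hi
        rw [← mul_assoc, ← pow_succ']
        congr 2; omega
      · simp
  let γ : ℕ → ℂ := fun j => ∑ b ∈ Finset.range (m + 1),
    q b * ((if j = b then 1 else 0) - (if 1 ≤ j ∧ j ≤ b then x ^ (b - j) else 0))
  have hγ0 : γ 0 = 1 := by
    have : ∀ b, q b * ((if 0 = b then 1 else 0) - (if 1 ≤ 0 ∧ 0 ≤ b then x ^ (b - 0) else 0)) =
        if 0 = b then 1 else 0 := by
      intro b
      by_cases hb : 0 = b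
      · subst hb; simp [hq]
      · simp [hb]
    simp only [γ, this]
    simp
  -- Modulo the other rows of `T`, the row `r` is `Q⁻¹` times the first one.
  have h2 : Q • r = ∑ j : Fin (N + 1), γ j • T j := by
    ext k
    simp only [Pi.smul_apply, smul_eq_mul, Finset.sum_apply, hT, Matrix.of_apply, r]
    rw [Fin.sum_univ_eq_sum_range (fun j => γ j * c ((j : ℤ) - k)) (N + 1)]
    have e1 : ∀ b ∈ Finset.range (m + 1), ∑ j ∈ Finset.range (N + 1),
        ((if j = b then 1 else 0) - (if 1 ≤ j ∧ j ≤ b then x ^ (b - j) else 0)) *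
          c ((j : ℤ) - k) =
        c ((b : ℤ) - k) - ∑ i ∈ Finset.range b, x ^ (b - 1 - i) * c (((i + 1 : ℕ) : ℤ) - k) := by
      intro b hb
      have hb := Finset.mem_range.1 hb
      simp only [sub_mul, Finset.sum_sub_distrib, ite_mul, one_mul, zero_mul]
      congr 1
      · rw [Finset.sum_ite_eq', if_pos (Finset.mem_range.2 (by omega))]
      · rw [Finset.sum_range_succ']
        rw [if_neg (by omega), add_zero]
        rw [← Finset.sum_subset (Finset.range_mono (show b ≤ N by omega))]
        · refine Finset.sum_congr rfl fun i hi => ?_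
          have hi := Finset.mem_range.1 hi
          rw [if_pos ⟨by omega, by omega⟩]
          congr 2; omega
        · intro i _ hi
          rw [if_neg]
          simp only [Finset.mem_range] at hi
          omega
    have e2 : ∑ j ∈ Finset.range (N + 1), γ j * c ((j : ℤ) - k) =
        ∑ b ∈ Finset.range (m + 1), q b * (c ((b : ℤ) - k) -
          ∑ i ∈ Finset.range b, x ^ (b - 1 - i) * c (((i + 1 : ℕ) : ℤ) - k)) := by
      simp only [γ, Finset.sum_mul]
      rw [Finset.sum_comm]
      refine Finset.sum_congr rfl fun b hb => ?_
      rw [← e1 b hb, Finset.mul_sum]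
      exact Finset.sum_congr rfl fun j _ => mul_assoc _ _ _
    rw [e2]
    simp only [mul_sub, Finset.sum_sub_distrib]
    rw [hd k, hQ, Finset.sum_mul, ← Finset.sum_sub_distrib]
    refine Finset.sum_congr rfl fun b _ => ?_
    rw [tele k b]; ring
  rw [h1, ← Matrix.det_updateRow_smul, h2, Matrix.det_updateRow_sum]
  simp [hγ0]

/-- The polynomial `∏_{y ∈ l} (1 - conj y * X)`. On the unit circle, `denom l` evaluated at `1/z` is
the inverse of `conj (recip l z)`. -/
noncomputable def denom (l : List ℂ) : Polynomial ℂ :=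
  (l.map fun y => 1 - Polynomial.C (star y) * Polynomial.X).prod

theorem natDegree_denom (l : List ℂ) : (denom l).natDegree ≤ l.length := by
  induction l with
  | nil => simp [denom]
  | cons y l ih =>
    have : denom (y :: l) = (1 - Polynomial.C (star y) * Polynomial.X) * denom l := by simp [denom]
    rw [this, List.length_cons, add_comm]
    refine Polynomial.natDegree_mul_le.trans (add_le_add ?_ ih)
    compute_degree

theorem eval_denom (l : List ℂ) (w : ℂ) :
    (denom l).eval w = (l.map fun y => 1 - star y * w).prod := by
  induction l with
  | nil => simp [denom]
  | cons y l ih =>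
    have : denom (y :: l) = (1 - Polynomial.C (star y) * Polynomial.X) * denom l := by simp [denom]
    simp [this, ih]

theorem one_sub_mul_ne_zero {x w : ℂ} (hx : ‖x‖ < 1) (hw : ‖w‖ ≤ 1) : 1 - x * w ≠ 0 := by
  intro h
  have h1 : x * w = 1 := (sub_eq_zero.1 h).symm
  have h2 : ‖x * w‖ < 1 := by
    rw [norm_mul]
    exact lt_of_le_of_lt (mul_le_of_le_one_right (norm_nonneg x) hw) hx
  rw [h1, norm_one] at h2
  exact lt_irrefl _ h2

theorem eval_denom_mul_star_recip {l : List ℂ} (hl : InDisk l) {w : ℂ} (hw : ‖w‖ ≤ 1) :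
    (denom l).eval (star w) * star (recip l w) = 1 := by
  rw [eval_denom]
  induction l with
  | nil => simp [recip]
  | cons y l ih =>
    have h1 : 1 - star y * star w ≠ 0 :=
      one_sub_mul_ne_zero (by simpa using hl.head) (by simpa using hw)
    have h2 : star (recip (y :: l) w) = (1 - star y * star w)⁻¹ * star (recip l w) := by
      simp [recip]
    rw [h2, List.map_cons, List.prod_cons]
    calc _ = ((1 - star y * star w) * (1 - star y * star w)⁻¹) *
        ((l.map fun y => 1 - star y * star w).prod * star (recip l w)) := by ring
      _ = 1 := by rw [ih hl.tail, mul_inv_cancel₀ h1, one_mul]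

/-- Multiplying `recip x * conj (recip y)` by `denom y (1/z)` leaves `recip x`, which is analytic with
constant term `1`: the coefficient at `z ^ (-k)` is `1` for `k = 0` and `0` for `k > 0`. -/
theorem sum_denom_coeff {x y : List ℂ} (hx : InDisk x) (hy : InDisk y) (k : ℕ) :
    ∑ b ∈ Finset.range (y.length + 1), (denom y).coeff b *
      fourierCoeff' (fun θ => recip x (circ θ) * star (recip y (circ θ))) (b - k) =
      if k = 0 then 1 else 0 := by
  have hnil : InDisk [] := by simp [InDisk]
  have h1 : fourierCoeff' (fun θ => recip x (circ θ) * star (recip [] (circ θ)))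
      (((0 : ℕ) : ℤ) - k) =
      if k = 0 then 1 else 0 := by
    refine (hasSum_lowerEntry_mul_star hx hnil 0 k).unique ?_
    have : (if k = 0 then 1 else 0 : ℂ) = lowerEntry x 0 k * star (lowerEntry [] 0 0) := by
      by_cases hk : k = 0 <;> simp [lowerEntry, taylor_zero, hk]
    rw [this]
    refine hasSum_single 0 fun s hs => ?_
    simp [lowerEntry, taylor, hs]
  rw [← h1]
  simp only [fourierCoeff'_eq]
  simp only [mul_left_comm _ (((2 * Real.pi : ℝ) : ℂ)⁻¹), ← Finset.mul_sum]
  congr 1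
  simp only [← intervalIntegral.integral_const_mul]
  have hcont := continuous_recip_circ hx
  have hcont' := continuous_recip_circ hy
  have hz : ∀ m : ℤ, Continuous fun θ => circ θ ^ m := fun m =>
    continuous_circ.zpow₀ m fun θ => Or.inl (circ_ne_zero θ)
  rw [← intervalIntegral.integral_finsetSum]
  · refine intervalIntegral.integral_congr fun θ _ => ?_
    have h2 := eval_denom_mul_star_recip hy (norm_circ θ).le
    rw [Polynomial.eval_eq_sum_range' (Nat.lt_succ_of_le (natDegree_denom y)), star_circ] at h2
    have h3 : star (recip [] (circ θ)) = 1 := by simp [recip]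
    simp only [h3, ← h2, Finset.sum_mul, Finset.mul_sum]
    refine Finset.sum_congr rfl fun b _ => ?_
    rw [Nat.cast_zero, zero_sub, neg_neg, neg_sub, zpow_sub₀ (circ_ne_zero θ), zpow_natCast,
      zpow_natCast, div_eq_mul_inv, inv_pow]
    ring
  · intro b _
    exact Continuous.intervalIntegrable
      (continuous_const.mul ((hz _).mul (hcont.mul hcont'.star))) _ _

/-- **Exact evaluation**: `recipDet n x y` is `∏ (1 - a * conj b)⁻¹`, over `a ∈ x` and `b ∈ y`, as soon
as `n` exceeds the number of points of `y`. -/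
theorem recipDet_eq {x y : List ℂ} (hx : InDisk x) (hy : InDisk y) {n : ℕ} (hn : y.length < n) :
    recipDet n x y = (x.map fun a => ((denom y).eval a)⁻¹).prod := by
  obtain ⟨N, rfl⟩ : ∃ N, n = N + 1 := ⟨n - 1, by omega⟩
  induction x with
  | nil =>
    simp only [List.map_nil, List.prod_nil]
    have hnil : InDisk [] := by simp [InDisk]
    have h : ∀ j k : ℕ, k ≤ j → fourierCoeff'
        (fun θ => recip [] (circ θ) * star (recip y (circ θ))) ((j : ℤ) - k) =
          if j = k then 1 else 0 := by
      intro j k hjk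
      refine (hasSum_lowerEntry_mul_star hnil hy j k).unique ?_
      have : (if j = k then 1 else 0 : ℂ) = lowerEntry [] k k * star (lowerEntry y k j) := by
        by_cases h : j = k
        · simp [lowerEntry, taylor_zero, h]
        · have : ¬ j ≤ k := by omega
          simp [lowerEntry, h, this]
      rw [this]
      refine hasSum_single k fun s hs => ?_
      by_cases h : k ≤ s
      · have : s - k ≠ 0 := by omega
        simp [lowerEntry, taylor, this]
      · simp [lowerEntry, h]
    unfold recipDet toeplitzDet
    rw [Matrix.det_of_isUpperTriangular]
    · refine Finset.prod_eq_one fun i _ => ?_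
      rw [Matrix.of_apply, h i i le_rfl, if_pos rfl]
    · intro i j hij
      have hij' : (j : ℕ) < i := hij
      rw [Matrix.of_apply, h i j hij'.le, if_neg (by omega)]
  | cons a x ih =>
    have hq0 : (denom y).coeff 0 = 1 := by
      rw [Polynomial.coeff_zero_eq_eval_zero, eval_denom]
      simp
    have hQ : (denom y).eval a ≠ 0 := by
      rw [eval_denom]
      refine List.prod_ne_zero ?_
      simp only [List.mem_map, not_exists, not_and]
      intro b hb
      exact one_sub_mul_ne_zero (by simpa using hy b hb) hx.head.le
    have hstep := toeplitz_step N y.length (by omega) (denom y).coeff hq0 a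
      (fourierCoeff' (fun θ => recip x (circ θ) * star (recip y (circ θ))))
      (fourierCoeff' (fun θ => recip (a :: x) (circ θ) * star (recip y (circ θ))))
      (by
        intro ℓ
        simp only [fourierCoeff'_eq]
        rw [mul_left_comm, ← mul_add]
        congr 1
        rw [← intervalIntegral.integral_const_mul, ← intervalIntegral.integral_add]
        · refine intervalIntegral.integral_congr fun θ _ => ?_
          have h1 := one_sub_mul_ne_zero hx.head (norm_circ θ).le
          have h2 : recip (a :: x) (circ θ) = (1 - a * circ θ)⁻¹ * recip x (circ θ) := by
            simp [recip]
          have h3 : circ θ ^ (-(ℓ - 1)) = circ θ ^ (-ℓ) * circ θ := by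
            rw [← zpow_add_one₀ (circ_ne_zero θ)]; congr 1; ring
          simp only [h2, h3]
          field_simp
          ring
        all_goals
          have hcont := continuous_recip_circ hx
          have hcont' := continuous_recip_circ hx.tail
          have hcont'' := (continuous_recip_circ hy).star
          have hz : ∀ m : ℤ, Continuous fun θ => circ θ ^ m := fun m =>
            continuous_circ.zpow₀ m fun θ => Or.inl (circ_ne_zero θ)
          refine Continuous.intervalIntegrable ?_ _ _
        · exact continuous_const.mul ((hz _).mul (hcont.mul hcont''))
        · exact (hz _).mul (hcont'.mul hcont''))
      (fun k => by rw [sum_denom_coeff hx.tail hy, sum_denom_coeff hx hy])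
    rw [← Polynomial.eval_eq_sum_range' (Nat.lt_succ_of_le (natDegree_denom y))] at hstep
    have ih' := ih hx.tail
    unfold recipDet toeplitzDet at ih' ⊢
    rw [List.map_cons, List.prod_cons, ← ih', ← hstep, inv_mul_cancel_left₀ hQ]

/-! ### Logarithms of the symbols -/

/-- The power sum `∑_{x ∈ l} x ^ (j + 1)`. -/
noncomputable def psum (l : List ℂ) (j : ℕ) : ℂ := (l.map fun x => x ^ (j + 1)).sum

/-- A logarithm of `recip l`, on the closed unit disk. -/
noncomputable def logRecip (l : List ℂ) (w : ℂ) : ℂ :=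
  (l.map fun x => -Complex.log (1 - x * w)).sum

theorem psum_cons (x : ℂ) (l : List ℂ) (j : ℕ) : psum (x :: l) j = x ^ (j + 1) + psum l j := by
  simp [psum]

theorem psum_append (l l' : List ℂ) (j : ℕ) : psum (l ++ l') j = psum l j + psum l' j := by
  simp [psum]

theorem exp_logRecip {l : List ℂ} (hl : InDisk l) {w : ℂ} (hw : ‖w‖ ≤ 1) :
    Complex.exp (logRecip l w) = recip l w := by
  induction l with
  | nil => simp [logRecip, recip]
  | cons x l ih =>
    have h1 : logRecip (x :: l) w = -Complex.log (1 - x * w) + logRecip l w := by simp [logRecip]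
    have h2 : recip (x :: l) w = (1 - x * w)⁻¹ * recip l w := by simp [recip]
    rw [h1, h2, Complex.exp_add, ih hl.tail, Complex.exp_neg,
      Complex.exp_log (one_sub_mul_ne_zero hl.head hw)]

theorem summable_psum {l : List ℂ} (hl : InDisk l) : Summable fun j => ‖psum l j‖ := by
  induction l with
  | nil => simp [psum]
  | cons x l ih =>
    have h1 : Summable fun j : ℕ => ‖x‖ ^ (j + 1) :=
      (summable_nat_add_iff 1).2 (summable_geometric_of_lt_one (norm_nonneg x) hl.head)
    refine (h1.add (ih hl.tail)).of_nonneg_of_le (fun _ => norm_nonneg _) fun j => ?_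
    rw [psum_cons, ← norm_pow]
    exact norm_add_le _ _

theorem hasSum_logRecip {l : List ℂ} (hl : InDisk l) {w : ℂ} (hw : ‖w‖ ≤ 1) :
    HasSum (fun j : ℕ => psum l j / ((j + 1 : ℕ) : ℂ) * w ^ (j + 1)) (logRecip l w) := by
  induction l with
  | nil => simp [psum, logRecip]
  | cons x l ih =>
    have hxw : ‖x * w‖ < 1 := by
      rw [norm_mul]
      exact lt_of_le_of_lt (mul_le_of_le_one_right (norm_nonneg x) hw) hl.head
    have h1 : logRecip (x :: l) w = -Complex.log (1 - x * w) + logRecip l w := by simp [logRecip]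
    rw [h1]
    have h2 := (hasSum_nat_add_iff' 1).2 (Complex.hasSum_taylorSeries_neg_log hxw)
    simp only [Finset.range_one, Finset.sum_singleton, pow_zero, Nat.cast_zero, div_zero,
      sub_zero] at h2
    refine (h2.add (ih hl.tail)).congr_fun fun j => ?_
    rw [psum_cons, mul_pow]; ring

theorem norm_weight_psum_le (l : List ℂ) (j : ℕ) :
    ‖((√((j : ℝ) + 1))⁻¹ : ℝ) * psum l j‖ ≤ ‖psum l j‖ := by
  rw [norm_mul, Complex.norm_real, Real.norm_of_nonneg (by positivity)]
  refine mul_le_of_le_one_left (norm_nonneg _) (inv_le_one_of_one_le₀ ?_)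
  rw [Real.one_le_sqrt]
  linarith [(Nat.cast_nonneg j : (0 : ℝ) ≤ j)]

theorem memℓp_psum {l : List ℂ} (hl : InDisk l) :
    Memℓp (fun j : ℕ => (((√((j : ℝ) + 1))⁻¹ : ℝ) : ℂ) * psum l j) 2 := by
  have h1 : Memℓp (fun j : ℕ => (((√((j : ℝ) + 1))⁻¹ : ℝ) : ℂ) * psum l j) 1 := by
    refine memℓp_gen ?_
    simpa using (summable_psum hl).of_nonneg_of_le (fun _ => norm_nonneg _)
      (norm_weight_psum_le l)
  exact h1.of_exponent_ge (by norm_num)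

/-- The vector of the coefficients `p_k / k` of `logRecip l`, with weights `√k`: the inner
product of two such vectors is the exponent in Szegő's theorem. The index `j` stands for
`k = j + 1`. -/
noncomputable def logVec {l : List ℂ} (hl : InDisk l) : lp (fun _ : ℕ => ℂ) 2 :=
  ⟨fun j => (((√((j : ℝ) + 1))⁻¹ : ℝ) : ℂ) * psum l j, memℓp_psum hl⟩

theorem logVec_apply {l : List ℂ} (hl : InDisk l) (j : ℕ) :
    logVec hl j = (((√((j : ℝ) + 1))⁻¹ : ℝ) : ℂ) * psum l j := rfl

theorem logVec_nil (h : InDisk []) : logVec h = 0 := by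
  ext j; simp [logVec_apply, psum]

theorem InDisk.append {l l' : List ℂ} (hl : InDisk l) (hl' : InDisk l') : InDisk (l ++ l') := by
  intro x hx
  rcases List.mem_append.1 hx with h | h
  exacts [hl x h, hl' x h]

theorem logVec_append {l l' : List ℂ} (hl : InDisk l) (hl' : InDisk l') :
    logVec (hl.append hl') = logVec hl + logVec hl' := by
  ext j; simp [logVec_apply, psum_append, mul_add]

theorem InDisk.star {l : List ℂ} (hl : InDisk l) : InDisk (l.map star) := by
  intro x hx
  obtain ⟨y, hy, rfl⟩ := List.mem_map.1 hx
  simpa using hl y hy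

theorem psum_star (l : List ℂ) (j : ℕ) : psum (l.map star) j = star (psum l j) := by
  induction l with
  | nil => simp [psum]
  | cons x l ih => rw [List.map_cons, psum_cons, ih, psum_cons, star_add, star_pow]

/-- The logarithm of the exact value of the determinants is an inner product. -/
theorem sum_logRecip {x y : List ℂ} (hx : InDisk x) (hy : InDisk y) :
    (x.map fun a => logRecip (y.map star) a).sum = inner ℂ (logVec hy) (logVec hx) := by
  have h1 : HasSum (fun j : ℕ => star (psum y j) / ((j + 1 : ℕ) : ℂ) * psum x j)
      (x.map fun a => logRecip (y.map star) a).sum := by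
    induction x with
    | nil => simp [psum]
    | cons a x ih =>
      rw [List.map_cons, List.sum_cons]
      refine ((hasSum_logRecip hy.star hx.head.le).add (ih hx.tail)).congr_fun fun j => ?_
      rw [psum_cons, psum_star, mul_add]
  refine h1.unique ((lp.hasSum_inner (logVec hy) (logVec hx)).congr_fun fun j => ?_)
  rw [logVec_apply, logVec_apply]
  have : ((√((j : ℝ) + 1))⁻¹ : ℝ) * ((√((j : ℝ) + 1))⁻¹ : ℝ) = ((j : ℝ) + 1)⁻¹ := by
    rw [← mul_inv, Real.mul_self_sqrt (by positivity)]
  have h2 : (((√((j : ℝ) + 1))⁻¹ : ℝ) : ℂ) * (((√((j : ℝ) + 1))⁻¹ : ℝ) : ℂ) =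
      (((j + 1 : ℕ) : ℂ))⁻¹ := by
    rw [← Complex.ofReal_mul, this]; push_cast; rfl
  simp only [RCLike.inner_apply, map_mul, Complex.conj_ofReal, Complex.star_def]
  rw [div_eq_mul_inv, ← h2]
  ring

/-- For the symbols `recip x * conj (recip y)`, the limit in Szegő's theorem is attained for all
large `n`. -/
theorem recipDet_eq_exp {x y : List ℂ} (hx : InDisk x) (hy : InDisk y) {n : ℕ}
    (hn : y.length < n) :
    recipDet n x y = Complex.exp (inner ℂ (logVec hy) (logVec hx)) := by
  rw [recipDet_eq hx hy hn, ← sum_logRecip hx hy]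
  clear hn
  induction x with
  | nil => simp
  | cons a x ih =>
    rw [List.map_cons, List.prod_cons, List.map_cons, List.sum_cons, Complex.exp_add,
      ih hx.tail, exp_logRecip hy.star hx.head.le, eval_denom, recip]
    congr 1
    clear hx ih hy
    induction y with
    | nil => simp
    | cons b y ih =>
      simp only [List.map_cons, List.prod_cons]
      rw [mul_inv, ih]

/-! ### Continuity uniform in the size of the determinants -/

/-- The exponential `exp (‖u‖² / 2)`, the norm of the exponential vector of `u`. -/
noncomputable def expNorm (u : lp (fun _ : ℕ => ℂ) 2) : ℝ := √ ‖Complex.exp (inner ℂ u u)‖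

/-- The distance between the exponential vectors of `u` and `v` in the Fock space, that is, for
the kernel `(u, v) ↦ exp ⟪u, v⟫`. -/
noncomputable def expDist (u v : lp (fun _ : ℕ => ℂ) 2) : ℝ :=
  √ ‖Complex.exp (inner ℂ u u) - Complex.exp (inner ℂ u v) - Complex.exp (inner ℂ v u) +
    Complex.exp (inner ℂ v v)‖

theorem expNorm_nonneg (u : lp (fun _ : ℕ => ℂ) 2) : 0 ≤ expNorm u := Real.sqrt_nonneg _

theorem expDist_nonneg (u v : lp (fun _ : ℕ => ℂ) 2) : 0 ≤ expDist u v := Real.sqrt_nonneg _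

theorem continuous_expNorm : Continuous expNorm := by
  unfold expNorm; fun_prop

theorem continuous_expDist : Continuous fun p : lp (fun _ : ℕ => ℂ) 2 × lp (fun _ : ℕ => ℂ) 2 =>
    expDist p.1 p.2 := by
  unfold expDist; fun_prop

theorem expDist_self (u : lp (fun _ : ℕ => ℂ) 2) : expDist u u = 0 := by simp [expDist]

theorem norm_minorVec_mono_le {n N : ℕ} (h : n ≤ N) {x y : List ℂ} (hx : InDisk x)
    (hy : InDisk y) (α β : ℂ) :
    ‖α • minorVec n hx + β • minorVec n hy‖ ≤ ‖α • minorVec N hx + β • minorVec N hy‖ := by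
  induction N, h using Nat.le_induction with
  | base => exact le_rfl
  | succ N _ ih => exact ih.trans (norm_minorVec_mono N hx hy α β)

/-- Monotonicity in `n` and the exact evaluation for large `n` bound all the vectors of minors. -/
theorem norm_minorVec_le (n : ℕ) {x : List ℂ} (hx : InDisk x) :
    ‖minorVec n hx‖ ≤ expNorm (logVec hx) := by
  have h1 := norm_minorVec_mono_le (le_max_left n (x.length + 1)) hx hx 1 0
  simp only [one_smul, zero_smul, add_zero] at h1
  refine h1.trans (Real.le_sqrt_of_sq_le ?_)
  rw [← recipDet_eq_exp hx hx (n := max n (x.length + 1)) (by omega), ← inner_minorVec _ hx hx,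
    inner_self_eq_norm_sq_to_K]
  simp

/-- Monotonicity in `n` and the exact evaluation for large `n` bound the differences of vectors of
minors, uniformly in `n`. -/
theorem norm_minorVec_sub_le (n : ℕ) {x y : List ℂ} (hx : InDisk x) (hy : InDisk y) :
    ‖minorVec n hx - minorVec n hy‖ ≤ expDist (logVec hx) (logVec hy) := by
  set N := max n (max (x.length + 1) (y.length + 1)) with hN
  have h1 := norm_minorVec_mono_le (show n ≤ N by omega) hx hy 1 (-1)
  simp only [one_smul, neg_smul, ← sub_eq_add_neg] at h1
  refine h1.trans (Real.le_sqrt_of_sq_le ?_)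
  rw [← recipDet_eq_exp hx hx (n := N) (by omega), ← recipDet_eq_exp hy hy (n := N) (by omega),
    ← recipDet_eq_exp hy hx (n := N) (by omega), ← recipDet_eq_exp hx hy (n := N) (by omega),
    ← inner_minorVec _ hx hx, ← inner_minorVec _ hy hy, ← inner_minorVec _ hx hy,
    ← inner_minorVec _ hy hx]
  have h2 : inner ℂ (minorVec N hx - minorVec N hy) (minorVec N hx - minorVec N hy) =
      inner ℂ (minorVec N hx) (minorVec N hx) - inner ℂ (minorVec N hx) (minorVec N hy) -
      inner ℂ (minorVec N hy) (minorVec N hx) + inner ℂ (minorVec N hy) (minorVec N hy) := by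
    rw [inner_sub_left, inner_sub_right, inner_sub_right]; ring
  rw [← h2, inner_self_eq_norm_sq_to_K]
  simp

/-- A modulus of continuity of the Toeplitz determinants, uniform in their size. -/
noncomputable def modulus (u v u' v' : lp (fun _ : ℕ => ℂ) 2) : ℝ :=
  expNorm v * expDist u u' + expDist v v' * expNorm u'

theorem norm_recipDet_sub_le (n : ℕ) {x y x' y' : List ℂ} (hx : InDisk x) (hy : InDisk y)
    (hx' : InDisk x') (hy' : InDisk y') :
    ‖recipDet n x y - recipDet n x' y'‖ ≤
      modulus (logVec hx) (logVec hy) (logVec hx') (logVec hy') := by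
  rw [← inner_minorVec n hx hy, ← inner_minorVec n hx' hy']
  have h : inner ℂ (minorVec n hy) (minorVec n hx) - inner ℂ (minorVec n hy') (minorVec n hx') =
      inner ℂ (minorVec n hy) (minorVec n hx - minorVec n hx') +
      inner ℂ (minorVec n hy - minorVec n hy') (minorVec n hx') := by
    rw [inner_sub_left, inner_sub_right]; ring
  rw [h]
  refine (norm_add_le _ _).trans (add_le_add ?_ ?_)
  · exact (norm_inner_le_norm _ _).trans (mul_le_mul (norm_minorVec_le n hy)
      (norm_minorVec_sub_le n hx hx') (norm_nonneg _) (expNorm_nonneg _))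
  · exact (norm_inner_le_norm _ _).trans (mul_le_mul (norm_minorVec_sub_le n hy hy')
      (norm_minorVec_le n hx') (norm_nonneg _) (expDist_nonneg _ _))

theorem tendsto_modulus {ι : Type*} {l : Filter ι} {u v u' v' : ι → lp (fun _ : ℕ => ℂ) 2}
    {a b : lp (fun _ : ℕ => ℂ) 2} (hu : Tendsto u l (𝓝 a)) (hv : Tendsto v l (𝓝 b))
    (hu' : Tendsto u' l (𝓝 a)) (hv' : Tendsto v' l (𝓝 b)) :
    Tendsto (fun i => modulus (u i) (v i) (u' i) (v' i)) l (𝓝 0) := by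
  have h1 : Tendsto (fun i => expDist (u i) (u' i)) l (𝓝 0) := by
    have := (continuous_expDist.tendsto (a, a)).comp (hu.prodMk_nhds hu')
    simpa [expDist_self, Function.comp_def] using this
  have h2 : Tendsto (fun i => expDist (v i) (v' i)) l (𝓝 0) := by
    have := (continuous_expDist.tendsto (b, b)).comp (hv.prodMk_nhds hv')
    simpa [expDist_self, Function.comp_def] using this
  have h3 := (continuous_expNorm.tendsto b).comp hv
  have h4 := (continuous_expNorm.tendsto a).comp hu'
  simpa [modulus, Function.comp_def] using (h3.mul h1).add (h2.mul h4)

/-! ### Density of the logarithm vectors -/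

/-- The list `b, bζ, bζ², …` of `N * k` terms, where `ζ` is a primitive `k`-th root of unity. -/
noncomputable def rootList (k N : ℕ) (b : ℂ) : List ℂ :=
  (List.range (N * k)).map fun i => b * Complex.exp (2 * Real.pi * Complex.I / k) ^ i

theorem inDisk_rootList {k : ℕ} (hk : k ≠ 0) (N : ℕ) {b : ℂ} (hb : ‖b‖ < 1) :
    InDisk (rootList k N b) := by
  intro x hx
  obtain ⟨i, -, rfl⟩ := List.mem_map.1 hx
  have h := (Complex.isPrimitiveRoot_exp k hk).norm'_eq_one hk
  simpa [h] using hb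

theorem psum_rootList {k : ℕ} (hk : k ≠ 0) (N : ℕ) (b : ℂ) (m : ℕ) :
    psum (rootList k N b) m = if k ∣ m + 1 then (N * k : ℕ) * b ^ (m + 1) else 0 := by
  set ζ := Complex.exp (2 * Real.pi * Complex.I / k) with hζ
  have hprim : IsPrimitiveRoot ζ k := Complex.isPrimitiveRoot_exp k hk
  have h1 : psum (rootList k N b) m =
      b ^ (m + 1) * ∑ i ∈ Finset.range (N * k), (ζ ^ (m + 1)) ^ i := by
    rw [psum, rootList, List.map_map, ← hζ, Finset.mul_sum]
    induction N * k with
    | zero => simp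
    | succ n ih =>
      rw [List.range_succ, List.map_append, List.sum_append, ih, Finset.sum_range_succ]
      simp [mul_pow, pow_right_comm]
  rw [h1]
  split_ifs with h
  · rw [(hprim.pow_eq_one_iff_dvd _).2 h]
    simp [mul_comm]
  · have h2 : ζ ^ (m + 1) - 1 ≠ 0 := by
      rw [sub_ne_zero]
      exact fun h3 => h ((hprim.pow_eq_one_iff_dvd _).1 h3)
    have h3 := mul_geom_sum (ζ ^ (m + 1)) (N * k)
    rw [← pow_mul, show (m + 1) * (N * k) = k * ((m + 1) * N) by ring, pow_mul, hprim.pow_eq_one,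
      one_pow, sub_self] at h3
    rw [(mul_eq_zero.1 h3).resolve_left h2, mul_zero]

/-- Many points close to the origin realise, up to a small error, a prescribed value of one power
sum and the value `0` for the others. -/
theorem exists_logVec_near_single (j : ℕ) (c : ℂ) {ε : ℝ} (hε : 0 < ε) :
    ∃ (l : List ℂ) (hl : InDisk l), ‖logVec hl - lp.single 2 j c‖ < ε := by
  set k := j + 1 with hk
  have hk0 : k ≠ 0 := by omega
  have hkpos : (0 : ℝ) < k := by positivity
  set C : ℝ := ‖c‖ / √(k : ℝ) with hC
  have hC0 : 0 ≤ C := by positivity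
  have t1 : ∀ a : ℝ, Tendsto (fun N : ℕ => a / N) atTop (𝓝 0) := fun a =>
    tendsto_const_div_atTop_nhds_zero_nat a
  obtain ⟨N, hN1, hN2, hN0⟩ := (((t1 C).eventually (gt_mem_nhds (show (0 : ℝ) < (1 / 2) ^ k by
    positivity))).and (((t1 (2 * k * C ^ 2)).eventually (gt_mem_nhds hε)).and
      (eventually_gt_atTop 0))).exists
  have hNpos : (0 : ℝ) < N := by exact_mod_cast hN0
  obtain ⟨b, hb⟩ := IsAlgClosed.exists_pow_nat_eq (c / (N * √(k : ℝ) : ℝ)) (Nat.pos_of_ne_zero hk0)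
  have hbk : ‖b‖ ^ k = C / N := by
    rw [← norm_pow, hb, norm_div, Complex.norm_real, Real.norm_of_nonneg (by positivity), hC]
    field_simp
  have hb2 : ‖b‖ ≤ 1 / 2 := by
    rw [← pow_le_pow_iff_left₀ (norm_nonneg b) (by norm_num) hk0, hbk]
    exact hN1.le
  have hl := inDisk_rootList hk0 N (b := b) (by linarith)
  refine ⟨_, hl, ?_⟩
  set f := logVec hl - lp.single 2 j c with hf
  have hf0 : ∀ m, m + 1 < 2 * k → f m = 0 := by
    intro m hm
    rw [hf, lp.coeFn_sub, Pi.sub_apply, logVec_apply, psum_rootList hk0]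
    by_cases hmj : m = j
    · subst hmj
      rw [lp.single_apply_self, if_pos dvd_rfl, hb, hk]
      have hs : (√((m : ℝ) + 1) : ℂ) * (√((m : ℝ) + 1) : ℂ) = (m : ℂ) + 1 := by
        rw [← Complex.ofReal_mul, Real.mul_self_sqrt (by positivity)]; push_cast; rfl
      have hs0 : (√((m : ℝ) + 1) : ℂ) ≠ 0 := by
        rw [Ne, Complex.ofReal_eq_zero]; positivity
      have hN0' : (N : ℂ) ≠ 0 := by exact_mod_cast hN0.ne'
      push_cast
      rw [← hs]
      field_simp
      ring
    · rw [lp.single_apply_ne _ _ _ hmj, if_neg, mul_zero, sub_zero]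
      rintro ⟨r, hr⟩
      have : r < 2 := by
        by_contra h
        have := Nat.mul_le_mul_left k (not_lt.1 h)
        omega
      interval_cases r <;> omega
  have hf1 : ∀ s : ℕ, ‖f (s + (2 * k - 1))‖ ^ 2 ≤ (k * C ^ 2 / N) ^ 2 * (1 / 4) ^ s := by
    intro s
    have hne : s + (2 * k - 1) ≠ j := by omega
    have hexp : s + (2 * k - 1) + 1 = 2 * k + s := by omega
    have h1 : ‖f (s + (2 * k - 1))‖ ≤ (N * k : ℕ) * ‖b‖ ^ (2 * k + s) := by
      rw [hf, lp.coeFn_sub, Pi.sub_apply, logVec_apply, lp.single_apply_ne _ _ _ hne, sub_zero]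
      refine (norm_weight_psum_le _ _).trans ?_
      rw [psum_rootList hk0, hexp]
      split_ifs
      · rw [norm_mul, norm_pow, Complex.norm_natCast]
      · rw [norm_zero]; positivity
    have h2 : ((N * k : ℕ) : ℝ) * ‖b‖ ^ (2 * k + s) ≤ k * C ^ 2 / N * (1 / 2) ^ s := by
      rw [pow_add, mul_comm 2 k, pow_mul, hbk, ← mul_assoc]
      refine mul_le_mul (le_of_eq ?_) (pow_le_pow_left₀ (norm_nonneg b) hb2 s) (by positivity)
        (by positivity)
      push_cast
      field_simp
    calc ‖f (s + (2 * k - 1))‖ ^ 2 ≤ (k * C ^ 2 / N * (1 / 2) ^ s) ^ 2 :=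
          pow_le_pow_left₀ (norm_nonneg _) (h1.trans h2) 2
      _ = _ := by rw [mul_pow, ← pow_mul, mul_comm s 2, pow_mul]; norm_num
  have h1 := (hasSum_nat_add_iff' (2 * k - 1)).2 (lp_norm_sq f)
  rw [Finset.sum_eq_zero (fun m hm => by
    rw [hf0 m (by have := Finset.mem_range.1 hm; omega)]; simp), sub_zero] at h1
  have h2 := (hasSum_geometric_of_lt_one (r := (1 / 4 : ℝ)) (by norm_num) (by norm_num)).mul_left
    ((k * C ^ 2 / N) ^ 2)
  have h3 := hasSum_le hf1 h1 h2
  have h4 : ‖f‖ ^ 2 ≤ (2 * k * C ^ 2 / N) ^ 2 := by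
    refine h3.trans ?_
    have : (2 * k * C ^ 2 / N) ^ 2 = (k * C ^ 2 / N) ^ 2 * 4 := by ring
    rw [this]
    gcongr
    norm_num
  exact lt_of_le_of_lt (abs_le_of_sq_le_sq h4 (by positivity) |> (le_abs_self _).trans) hN2

/-- The vectors `logVec` are dense: they form an additive monoid, by concatenation of lists, whose
closure contains all vectors with a single nonzero coordinate. -/
theorem exists_logVec_tendsto (u : lp (fun _ : ℕ => ℂ) 2) :
    ∃ (l : ℕ → List ℂ) (hl : ∀ N, InDisk (l N)),
      Tendsto (fun N => logVec (hl N)) atTop (𝓝 u) := by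
  let S : AddSubmonoid (lp (fun _ : ℕ => ℂ) 2) :=
    { carrier := {w | ∃ (l : List ℂ) (hl : InDisk l), logVec hl = w}
      zero_mem' := ⟨[], by simp [InDisk], logVec_nil _⟩
      add_mem' := by
        rintro _ _ ⟨l, hl, rfl⟩ ⟨l', hl', rfl⟩
        exact ⟨l ++ l', hl.append hl', logVec_append hl hl'⟩ }
  have hsingle : ∀ j c, lp.single 2 j c ∈ S.topologicalClosure := by
    intro j c
    change _ ∈ closure (S : Set (lp (fun _ : ℕ => ℂ) 2))
    refine Metric.mem_closure_iff.2 fun ε hε => ?_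
    obtain ⟨l, hl, h⟩ := exists_logVec_near_single j c hε
    exact ⟨_, ⟨l, hl, rfl⟩, by rwa [dist_comm, dist_eq_norm]⟩
  have hu : u ∈ closure (S : Set (lp (fun _ : ℕ => ℂ) 2)) := by
    have h1 := lp.hasSum_single (p := 2) (by norm_num) u
    refine (isClosed_closure : IsClosed (closure (S : Set (lp (fun _ : ℕ => ℂ) 2)))).mem_of_tendsto
      h1 (Eventually.of_forall fun s => ?_)
    exact S.topologicalClosure.sum_mem fun i _ => hsingle i _
  obtain ⟨w, hw, hlim⟩ := mem_closure_iff_seq_limit.1 hu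
  choose l hl hlw using hw
  exact ⟨l, hl, by simpa [hlw] using hlim⟩

/-! ### Uniqueness of Fourier coefficients -/

/-- If all Fourier coefficients of `W` vanish, then `W` is orthogonal to every continuous function on
the circle, by density of the trigonometric polynomials. -/
theorem integral_mul_eq_zero_of_fourierCoeff' {W : ℝ → ℂ}
    (hW : IntervalIntegrable W volume (-Real.pi) Real.pi) (h0 : ∀ ℓ, fourierCoeff' W ℓ = 0)
    (h : C(AddCircle (2 * Real.pi), ℂ)) :
    ∫ θ in (-Real.pi)..Real.pi, h (θ : AddCircle (2 * Real.pi)) * W θ = 0 := by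
  have : Fact (0 < 2 * Real.pi) := ⟨Real.two_pi_pos⟩
  have hle : -Real.pi ≤ Real.pi := by linarith [Real.pi_pos]
  have hcont : ∀ h : C(AddCircle (2 * Real.pi), ℂ),
      Continuous fun θ : ℝ => h (θ : AddCircle (2 * Real.pi)) := fun h =>
    h.continuous.comp (AddCircle.continuous_mk' _)
  have hint : ∀ h : C(AddCircle (2 * Real.pi), ℂ), IntervalIntegrable
      (fun θ : ℝ => h (θ : AddCircle (2 * Real.pi)) * W θ) volume (-Real.pi) Real.pi := fun h =>
    hW.continuousOn_mul (hcont h).continuousOn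
  let Φ : C(AddCircle (2 * Real.pi), ℂ) →ₗ[ℂ] ℂ :=
    { toFun := fun h => ∫ θ in (-Real.pi)..Real.pi, h (θ : AddCircle (2 * Real.pi)) * W θ
      map_add' := fun f g => by
        simp only [ContinuousMap.add_apply, add_mul]
        exact intervalIntegral.integral_add (hint f) (hint g)
      map_smul' := fun c f => by
        simp only [ContinuousMap.smul_apply, smul_eq_mul, mul_assoc, RingHom.id_apply]
        exact intervalIntegral.integral_const_mul c _ }
  let Ψ : C(AddCircle (2 * Real.pi), ℂ) →L[ℂ] ℂ :=
    Φ.mkContinuous (∫ θ in (-Real.pi)..Real.pi, ‖W θ‖) fun f => by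
      rw [mul_comm (∫ θ in (-Real.pi)..Real.pi, ‖W θ‖), ← intervalIntegral.integral_const_mul]
      refine intervalIntegral.norm_integral_le_of_norm_le hle
        (Eventually.of_forall fun θ _ => ?_) (hW.norm.const_mul _)
      rw [norm_mul]
      exact mul_le_mul_of_nonneg_right (f.norm_coe_le_norm _) (norm_nonneg _)
  have hker : (Submodule.span ℂ (Set.range (fourier (T := 2 * Real.pi)))).topologicalClosure ≤
      LinearMap.ker (Ψ : C(AddCircle (2 * Real.pi), ℂ) →ₗ[ℂ] ℂ) := by
    refine Submodule.topologicalClosure_minimal _ (Submodule.span_le.2 ?_) Ψ.isClosed_ker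
    rintro _ ⟨n, rfl⟩
    have h1 := h0 (-n)
    rw [fourierCoeff'_eq, mul_eq_zero] at h1
    have h2 := h1.resolve_left (by
      rw [inv_eq_zero]; exact_mod_cast Real.two_pi_pos.ne')
    change ∫ θ in (-Real.pi)..Real.pi, fourier n (θ : AddCircle (2 * Real.pi)) * W θ = 0
    rw [← h2]
    refine intervalIntegral.integral_congr fun θ _ => ?_
    congr 1
    rw [neg_neg, fourier_coe_apply, circ, ← Complex.exp_int_mul]
    congr 1
    have : (Real.pi : ℂ) ≠ 0 := by exact_mod_cast Real.pi_ne_zero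
    push_cast
    field_simp
  rw [span_fourier_closure_eq_top] at hker
  exact hker (Submodule.mem_top (x := h))

/-- An integrable function all of whose Fourier coefficients vanish is zero almost everywhere. -/
theorem ae_eq_zero_of_fourierCoeff' {W : ℝ → ℂ}
    (hW : IntervalIntegrable W volume (-Real.pi) Real.pi) (h0 : ∀ ℓ, fourierCoeff' W ℓ = 0) :
    ∀ᵐ θ ∂volume.restrict (Set.Ioc (-Real.pi) Real.pi), W θ = 0 := by
  have : Fact (0 < 2 * Real.pi) := ⟨Real.two_pi_pos⟩
  have hle : -Real.pi ≤ Real.pi := by linarith [Real.pi_pos]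
  rw [← restrict_Ioo_eq_restrict_Ioc, ae_restrict_iff' measurableSet_Ioo]
  have hWi : IntegrableOn W (Set.Ioo (-Real.pi) Real.pi) :=
    ((intervalIntegrable_iff_integrableOn_Ioc_of_le hle).1 hW).mono_set Set.Ioo_subset_Ioc_self
  refine isOpen_Ioo.ae_eq_zero_of_integral_contDiff_smul_eq_zero hWi.locallyIntegrableOn
    fun g hg _ hgs => ?_
  have hg0 : ∀ θ, θ ∉ Set.Ioo (-Real.pi) Real.pi → g θ = 0 := fun θ hθ =>
    image_eq_zero_of_notMem_tsupport fun h => hθ (hgs h)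
  have hG : Continuous (AddCircle.liftIco (2 * Real.pi) (-Real.pi) fun θ => (g θ : ℂ)) := by
    refine AddCircle.liftIco_continuous ?_ ?_
    · rw [hg0 _ (by simp), hg0 _ (fun h => by linarith [h.2])]
    · exact (Complex.continuous_ofReal.comp hg.continuous).continuousOn
  have h1 := integral_mul_eq_zero_of_fourierCoeff' hW h0 ⟨_, hG⟩
  rw [← h1, intervalIntegral.integral_of_le hle, ← restrict_Ioo_eq_restrict_Ioc]
  rw [← setIntegral_eq_integral_of_forall_compl_eq_zero (s := Set.Ioo (-Real.pi) Real.pi)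
    (fun θ hθ => by rw [hg0 θ hθ, zero_smul])]
  refine setIntegral_congr_fun measurableSet_Ioo fun θ hθ => ?_
  simp only [ContinuousMap.coe_mk]
  rw [AddCircle.liftIco_coe_apply ⟨hθ.1.le, by linarith [hθ.2]⟩, Complex.real_smul]

/-! ### Convergence in mean -/

/-- Lebesgue measure on the period interval `(-π, π]`. -/
noncomputable abbrev arc : Measure ℝ := volume.restrict (Set.Ioc (-Real.pi) Real.pi)

theorem integral_arc (f : ℝ → ℂ) :
    ∫ θ in (-Real.pi)..Real.pi, f θ = ∫ θ, f θ ∂arc :=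
  intervalIntegral.integral_of_le (by linarith [Real.pi_pos])

theorem integrable_arc_iff {f : ℝ → ℂ} :
    IntervalIntegrable f volume (-Real.pi) Real.pi ↔ Integrable f arc :=
  intervalIntegrable_iff_integrableOn_Ioc_of_le (by linarith [Real.pi_pos])

theorem integrable_arc {E : Type*} [NormedAddCommGroup E] {f : ℝ → E} (hf : Continuous f) :
    Integrable f arc :=
  (hf.integrableOn_Icc (a := -Real.pi) (b := Real.pi)).mono_set Set.Ioc_subset_Icc_self

/-- A Cauchy sequence in `L¹`, with moduli bounded by `B`, converges in mean and in measure. -/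
theorem exists_limit_of_cauchy {f : ℕ → ℝ → ℂ} (hf : ∀ N, Integrable (f N) arc)
    {B : ℕ → ℕ → ℝ} (hB : Tendsto (fun p : ℕ × ℕ => B p.1 p.2) atTop (𝓝 0))
    (hfB : ∀ N M, ∫ θ, ‖f N θ - f M θ‖ ∂arc ≤ B N M) :
    ∃ g : ℝ → ℂ, Integrable g arc ∧
      Tendsto (fun N => ∫ θ, ‖f N θ - g θ‖ ∂arc) atTop (𝓝 0) ∧ TendstoInMeasure arc f atTop g := by
  let F : ℕ → (ℝ →₁[arc] ℂ) := fun N => (hf N).toL1 (f N)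
  have hF : CauchySeq F := by
    rw [cauchySeq_iff_tendsto_dist_atTop_0]
    refine squeeze_zero (fun _ => dist_nonneg) (fun p => ?_) hB
    rw [dist_eq_norm, ← Integrable.toL1_sub _ _ (hf p.1) (hf p.2), L1.norm_of_fun_eq_integral_norm]
    exact hfB p.1 p.2
  obtain ⟨G, hG⟩ := cauchySeq_tendsto_of_complete hF
  have hGi : Integrable G arc := L1.integrable_coeFn G
  have h1 : Tendsto (fun N => ∫ θ, ‖f N θ - G θ‖ ∂arc) atTop (𝓝 0) := by
    have h2 := tendsto_iff_norm_sub_tendsto_zero.1 hG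
    refine h2.congr fun N => ?_
    conv_lhs => rw [← Integrable.toL1_coeFn G hGi]
    rw [← Integrable.toL1_sub _ _ (hf N) hGi, L1.norm_of_fun_eq_integral_norm]
    rfl
  refine ⟨G, hGi, h1, tendstoInMeasure_of_tendsto_eLpNorm one_ne_zero
    (fun N => (hf N).aestronglyMeasurable) hGi.aestronglyMeasurable ?_⟩
  have h2 := ENNReal.tendsto_ofReal h1
  rw [ENNReal.ofReal_zero] at h2
  refine h2.congr fun N => ?_
  rw [eLpNorm_one_eq_lintegral_enorm]
  exact ofReal_integral_norm_eq_lintegral_enorm ((hf N).sub hGi)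

theorem tendsto_fourierCoeff' {f : ℕ → ℝ → ℂ} {g : ℝ → ℂ} (hf : ∀ N, Integrable (f N) arc)
    (hg : Integrable g arc) (h : Tendsto (fun N => ∫ θ, ‖f N θ - g θ‖ ∂arc) atTop (𝓝 0)) (ℓ : ℤ) :
    Tendsto (fun N => fourierCoeff' (f N) ℓ) atTop (𝓝 (fourierCoeff' g ℓ)) := by
  simp only [fourierCoeff'_eq, integral_arc]
  refine Tendsto.const_mul _ ?_
  have hz : Continuous fun θ => circ θ ^ (-ℓ) :=
    continuous_circ.zpow₀ _ fun θ => Or.inl (circ_ne_zero θ)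
  have hi : ∀ {f : ℝ → ℂ}, Integrable f arc → Integrable (fun θ => circ θ ^ (-ℓ) * f θ) arc :=
    fun hf => hf.bdd_mul (c := 1) hz.aestronglyMeasurable
      (Eventually.of_forall fun θ => by simp [norm_circ])
  rw [tendsto_iff_norm_sub_tendsto_zero]
  refine squeeze_zero (fun _ => norm_nonneg _) (fun N => ?_) h
  rw [← integral_sub (hi (hf N)) (hi hg)]
  refine (norm_integral_le_integral_norm _).trans (le_of_eq ?_)
  refine integral_congr_ae (Eventually.of_forall fun θ => ?_)
  simp only
  rw [← mul_sub, norm_mul, norm_zpow, norm_circ, one_zpow, one_mul]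

/-- The Cauchy–Schwarz inequality for the normalised measure on the circle. -/
theorem integral_norm_mul_norm_le {f g : ℝ → ℂ} (hf : Continuous f) (hg : Continuous g)
    {a b : ℝ} (ha : 0 ≤ a) (hb : 0 ≤ b)
    (hfa : (2 * Real.pi)⁻¹ * ∫ θ, ‖f θ‖ ^ 2 ∂arc ≤ a ^ 2)
    (hgb : (2 * Real.pi)⁻¹ * ∫ θ, ‖g θ‖ ^ 2 ∂arc ≤ b ^ 2) :
    (2 * Real.pi)⁻¹ * ∫ θ, ‖f θ‖ * ‖g θ‖ ∂arc ≤ a * b := by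
  have hm : ∀ {f : ℝ → ℂ}, Continuous f → MemLp (fun θ => ‖f θ‖) (ENNReal.ofReal 2) arc := by
    intro f hf
    rw [show ENNReal.ofReal 2 = 2 by simp]
    exact (memLp_two_iff_integrable_sq hf.norm.aestronglyMeasurable).2
      (integrable_arc (hf.norm.pow 2))
  have h := integral_mul_le_Lp_mul_Lq_of_nonneg (μ := arc) (p := 2) (q := 2)
    ⟨by norm_num, by norm_num, by norm_num⟩
    (Eventually.of_forall fun θ => norm_nonneg (f θ))
    (Eventually.of_forall fun θ => norm_nonneg (g θ)) (hm hf) (hm hg)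
  simp only [Real.rpow_two, ← Real.sqrt_eq_rpow] at h
  have hp : 0 < (2 * Real.pi)⁻¹ := by positivity
  have h1 : √((2 * Real.pi)⁻¹ * ∫ θ, ‖f θ‖ ^ 2 ∂arc) ≤ a := Real.sqrt_le_iff.2 ⟨ha, hfa⟩
  have h2 : √((2 * Real.pi)⁻¹ * ∫ θ, ‖g θ‖ ^ 2 ∂arc) ≤ b := Real.sqrt_le_iff.2 ⟨hb, hgb⟩
  rw [Real.sqrt_mul hp.le] at h1 h2
  refine le_trans ?_ (mul_le_mul h1 h2 (by positivity) ha)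
  calc _ ≤ (2 * Real.pi)⁻¹ * (√(∫ θ, ‖f θ‖ ^ 2 ∂arc) * √(∫ θ, ‖g θ‖ ^ 2 ∂arc)) := by gcongr
    _ = (√(2 * Real.pi)⁻¹ * √(2 * Real.pi)⁻¹) *
        (√(∫ θ, ‖f θ‖ ^ 2 ∂arc) * √(∫ θ, ‖g θ‖ ^ 2 ∂arc)) := by rw [Real.mul_self_sqrt hp.le]
    _ = _ := by ring

/-! ### Mean estimates for the symbols and their logarithms -/

theorem mul_star_eq_normSq (z : ℂ) : z * star z = ((‖z‖ ^ 2 : ℝ) : ℂ) := by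
  rw [Complex.star_def, Complex.mul_conj, Complex.normSq_eq_norm_sq]

theorem ofReal_mean_sq (f : ℝ → ℂ) :
    (((2 * Real.pi)⁻¹ * ∫ θ, ‖f θ‖ ^ 2 ∂arc : ℝ) : ℂ) =
      ((2 * Real.pi : ℝ) : ℂ)⁻¹ * ∫ θ in (-Real.pi)..Real.pi, f θ * star (f θ) := by
  simp only [mul_star_eq_normSq]
  rw [integral_arc, integral_complex_ofReal]
  push_cast; rfl

/-- The case `n = 1`: the determinant is the mean of the symbol. -/
theorem inner_minorVec_one {x y : List ℂ} (hx : InDisk x) (hy : InDisk y) :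
    ((2 * Real.pi : ℝ) : ℂ)⁻¹ * ∫ θ in (-Real.pi)..Real.pi,
      recip x (circ θ) * star (recip y (circ θ)) =
    inner ℂ (minorVec 1 hy) (minorVec 1 hx) := by
  rw [inner_minorVec, recipDet, toeplitzDet]
  simp [fourierCoeff'_eq]

theorem mean_sq_recip {x : List ℂ} (hx : InDisk x) :
    (2 * Real.pi)⁻¹ * ∫ θ, ‖recip x (circ θ)‖ ^ 2 ∂arc = ‖minorVec 1 hx‖ ^ 2 := by
  rw [← Complex.ofReal_inj, ofReal_mean_sq, inner_minorVec_one hx hx, inner_self_eq_norm_sq_to_K]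
  simp

theorem mean_sq_recip_sub {x y : List ℂ} (hx : InDisk x) (hy : InDisk y) :
    (2 * Real.pi)⁻¹ * ∫ θ, ‖recip x (circ θ) - recip y (circ θ)‖ ^ 2 ∂arc =
      ‖minorVec 1 hx - minorVec 1 hy‖ ^ 2 := by
  have hcx := continuous_recip_circ hx
  have hcy := continuous_recip_circ hy
  have h1 : (((‖minorVec 1 hx - minorVec 1 hy‖ ^ 2 : ℝ)) : ℂ) =
      inner ℂ (minorVec 1 hx - minorVec 1 hy) (minorVec 1 hx - minorVec 1 hy) := by
    rw [inner_self_eq_norm_sq_to_K]; simp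
  rw [← Complex.ofReal_inj, ofReal_mean_sq (fun θ => recip x (circ θ) - recip y (circ θ)), h1,
    inner_sub_left, inner_sub_right, inner_sub_right, ← inner_minorVec_one hx hx,
    ← inner_minorVec_one hx hy, ← inner_minorVec_one hy hx, ← inner_minorVec_one hy hy]
  have hi : ∀ f g : ℝ → ℂ, Continuous f → Continuous g →
      IntervalIntegrable (fun θ => f θ * star (g θ)) volume (-Real.pi) Real.pi := fun f g hf hg =>
    (hf.mul hg.star).intervalIntegrable _ _
  have e : ∀ θ, (recip x (circ θ) - recip y (circ θ)) * star (recip x (circ θ) - recip y (circ θ)) =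
      (recip x (circ θ) * star (recip x (circ θ)) - recip y (circ θ) * star (recip x (circ θ))) -
      (recip x (circ θ) * star (recip y (circ θ)) - recip y (circ θ) * star (recip y (circ θ))) := by
    intro θ; rw [star_sub]; ring
  simp only [e]
  rw [intervalIntegral.integral_sub ((hi _ _ hcx hcx).sub (hi _ _ hcy hcx))
      ((hi _ _ hcx hcy).sub (hi _ _ hcy hcy)),
    intervalIntegral.integral_sub (hi _ _ hcx hcx) (hi _ _ hcy hcx),
    intervalIntegral.integral_sub (hi _ _ hcx hcy) (hi _ _ hcy hcy)]
  ring

/-- The modulus of continuity of the determinants also controls the symbols in mean. -/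
theorem mean_recip_mul_star_sub_le {x y x' y' : List ℂ} (hx : InDisk x) (hy : InDisk y)
    (hx' : InDisk x') (hy' : InDisk y') :
    (2 * Real.pi)⁻¹ * ∫ θ, ‖recip x (circ θ) * star (recip y (circ θ)) -
      recip x' (circ θ) * star (recip y' (circ θ))‖ ∂arc ≤
      modulus (logVec hx) (logVec hy) (logVec hx') (logVec hy') := by
  have c1 := continuous_recip_circ hx
  have c2 := continuous_recip_circ hy
  have c3 := continuous_recip_circ hx'
  have c4 := continuous_recip_circ hy'
  have h1 := integral_norm_mul_norm_le c2 (c1.sub c3) (expNorm_nonneg (logVec hy))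
    (expDist_nonneg (logVec hx) (logVec hx'))
    (by rw [mean_sq_recip hy]; exact pow_le_pow_left₀ (norm_nonneg _) (norm_minorVec_le 1 hy) 2)
    (by refine (mean_sq_recip_sub hx hx').trans_le ?_
        exact pow_le_pow_left₀ (norm_nonneg _) (norm_minorVec_sub_le 1 hx hx') 2)
  have h2 := integral_norm_mul_norm_le (c2.sub c4) c3 (expDist_nonneg (logVec hy) (logVec hy'))
    (expNorm_nonneg (logVec hx'))
    (by refine (mean_sq_recip_sub hy hy').trans_le ?_
        exact pow_le_pow_left₀ (norm_nonneg _) (norm_minorVec_sub_le 1 hy hy') 2)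
    (by rw [mean_sq_recip hx']; exact pow_le_pow_left₀ (norm_nonneg _) (norm_minorVec_le 1 hx') 2)
  refine le_trans ?_ (add_le_add h1 h2)
  rw [← mul_add, ← integral_add (integrable_arc (by fun_prop)) (integrable_arc (by fun_prop))]
  refine mul_le_mul_of_nonneg_left (integral_mono (integrable_arc (by fun_prop))
    (integrable_arc (by fun_prop)) fun θ => ?_) (by positivity)
  have e : recip x (circ θ) * star (recip y (circ θ)) - recip x' (circ θ) * star (recip y' (circ θ))
      = star (recip y (circ θ)) * (recip x (circ θ) - recip x' (circ θ)) +
        star (recip y (circ θ) - recip y' (circ θ)) * recip x' (circ θ) := by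
    rw [star_sub]; ring
  simp only [e]
  refine (norm_add_le _ _).trans ?_
  rw [norm_mul, norm_mul, norm_star, norm_star]
  exact le_rfl

/-- The Taylor coefficients of `logRecip l`; the constant one is `0` since `psum l 0 / 0 = 0`. -/
noncomputable def logCoeff (l : List ℂ) (s : ℕ) : ℂ := psum l (s - 1) / s

theorem hasSum_logCoeff {l : List ℂ} (hl : InDisk l) (θ : ℝ) :
    HasSum (fun s => logCoeff l s * circ θ ^ s) (logRecip l (circ θ)) := by
  rw [← hasSum_nat_add_iff' 1]
  simpa [logCoeff] using hasSum_logRecip hl (norm_circ θ).le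

theorem logCoeff_succ {l : List ℂ} (hl : InDisk l) (j : ℕ) :
    logCoeff l (j + 1) = (((√((j : ℝ) + 1))⁻¹ : ℝ) : ℂ) * logVec hl j := by
  have : ((√((j : ℝ) + 1))⁻¹ : ℝ) * ((√((j : ℝ) + 1))⁻¹ : ℝ) = ((j : ℝ) + 1)⁻¹ := by
    rw [← mul_inv, Real.mul_self_sqrt (by positivity)]
  rw [logVec_apply, ← mul_assoc, ← Complex.ofReal_mul, this, logCoeff]
  rw [Nat.add_sub_cancel]; push_cast; ring

theorem summable_logCoeff {l : List ℂ} (hl : InDisk l) : Summable fun s => ‖logCoeff l s‖ := by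
  rw [← summable_nat_add_iff 1]
  refine (summable_psum hl).of_nonneg_of_le (fun _ => norm_nonneg _) fun j => ?_
  rw [logCoeff, norm_div, Complex.norm_natCast, Nat.add_sub_cancel]
  exact div_le_self (norm_nonneg _) (by push_cast; linarith [(Nat.cast_nonneg j : (0 : ℝ) ≤ j)])

theorem continuous_logRecip_circ {l : List ℂ} (hl : InDisk l) :
    Continuous fun θ => logRecip l (circ θ) :=
  continuous_of_series _ (summable_logCoeff hl) _ (hasSum_logCoeff hl)

theorem mean_logRecip_sub_le {x y : List ℂ} (hx : InDisk x) (hy : InDisk y) :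
    (2 * Real.pi)⁻¹ * ∫ θ, ‖logRecip x (circ θ) - logRecip y (circ θ)‖ ∂arc ≤
      ‖logVec hx - logVec hy‖ := by
  have hcx := continuous_logRecip_circ hx
  have hcy := continuous_logRecip_circ hy
  have hs : Summable fun s => ‖logCoeff x s - logCoeff y s‖ :=
    ((summable_logCoeff hx).add (summable_logCoeff hy)).of_nonneg_of_le (fun _ => norm_nonneg _)
      fun s => norm_sub_le _ _
  have hg : ∀ θ, HasSum (fun s => (logCoeff x s - logCoeff y s) * circ θ ^ s)
      (logRecip x (circ θ) - logRecip y (circ θ)) := fun θ =>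
    ((hasSum_logCoeff hx θ).sub (hasSum_logCoeff hy θ)).congr_fun fun s => by ring
  have h1 := integral_series_mul_star _ _ hs hs _ _ hg hg (hcx.sub hcy)
  rw [← ofReal_mean_sq (fun θ => logRecip x (circ θ) - logRecip y (circ θ))] at h1
  simp only [mul_star_eq_normSq] at h1
  rw [Complex.hasSum_ofReal, ← hasSum_nat_add_iff' 1] at h1
  simp only [Finset.range_one, Finset.sum_singleton] at h1
  have h0 : logCoeff x 0 - logCoeff y 0 = 0 := by simp [logCoeff]
  rw [h0, norm_zero, zero_pow two_ne_zero, sub_zero] at h1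
  have h2 : (2 * Real.pi)⁻¹ * ∫ θ, ‖logRecip x (circ θ) - logRecip y (circ θ)‖ ^ 2 ∂arc ≤
      ‖logVec hx - logVec hy‖ ^ 2 := by
    refine hasSum_le (fun j => ?_) h1 (lp_norm_sq (logVec hx - logVec hy))
    refine pow_le_pow_left₀ (norm_nonneg _) ?_ 2
    rw [logCoeff_succ hx, logCoeff_succ hy, ← mul_sub, norm_mul, Complex.norm_real,
      Real.norm_of_nonneg (by positivity), lp.coeFn_sub, Pi.sub_apply]
    refine mul_le_of_le_one_left (norm_nonneg _) (inv_le_one_of_one_le₀ ?_)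
    rw [Real.one_le_sqrt]
    linarith [(Nat.cast_nonneg j : (0 : ℝ) ≤ j)]
  have hpi : (2 * Real.pi) ≠ 0 := by positivity
  have h3 := integral_norm_mul_norm_le (hcx.sub hcy) (continuous_const (y := (1 : ℂ)))
    (norm_nonneg _) zero_le_one h2 (b := 1) (by
      simp only [norm_one, one_pow, integral_const, smul_eq_mul, mul_one, Measure.real,
        Measure.restrict_apply_univ, Real.volume_Ioc, sub_neg_eq_add, ← two_mul]
      rw [ENNReal.toReal_ofReal (by positivity), inv_mul_cancel₀ hpi])
  simpa using h3

theorem fourierCoeff'_logRecip {l : List ℂ} (hl : InDisk l) (ℓ : ℤ) :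
    fourierCoeff' (fun θ => logRecip l (circ θ)) ℓ =
      if 0 < ℓ then logCoeff l ℓ.toNat else 0 := by
  have hz : Continuous fun θ => circ θ ^ (-ℓ) :=
    continuous_circ.zpow₀ _ fun θ => Or.inl (circ_ne_zero θ)
  have h1 := integral_series_mul _ (summable_logCoeff hl) _ _ (hasSum_logCoeff hl) hz
  have e : ∀ s : ℕ, logCoeff l s * (((2 * Real.pi : ℝ) : ℂ)⁻¹ *
      ∫ θ in (-Real.pi)..Real.pi, circ θ ^ s * circ θ ^ (-ℓ)) =
      if (s : ℤ) = ℓ then logCoeff l s else 0 := by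
    intro s
    have h2 := integral_circ_zpow ((s : ℤ) - ℓ)
    simp only [sub_eq_add_neg, zpow_add₀ (circ_ne_zero _), zpow_natCast] at h2
    rw [h2]
    simp only [← sub_eq_add_neg, sub_eq_zero, mul_ite, mul_one, mul_zero]
  simp only [e] at h1
  rw [fourierCoeff'_eq]
  simp only [mul_comm (circ _ ^ (-ℓ))]
  refine h1.unique ?_
  by_cases hℓ : 0 < ℓ
  · rw [if_pos hℓ]
    have h3 := hasSum_single (f := fun s : ℕ => if (s : ℤ) = ℓ then logCoeff l s else 0) ℓ.toNat
      (fun s hs => if_neg (by omega))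
    simpa [Int.toNat_of_nonneg hℓ.le] using h3
  · rw [if_neg hℓ]
    have : (fun s : ℕ => if (s : ℤ) = ℓ then logCoeff l s else 0) = fun _ => 0 := by
      funext s
      split_ifs with h
      · have : s = 0 := by omega
        simp [this, logCoeff]
      · rfl
    rw [this]
    exact hasSum_zero

/-! ### Fourier coefficients and Toeplitz determinants of integrable functions -/

theorem fourierCoeff'_add {f g : ℝ → ℂ} (hf : Continuous f) (hg : Continuous g) (ℓ : ℤ) :
    fourierCoeff' (fun θ => f θ + g θ) ℓ = fourierCoeff' f ℓ + fourierCoeff' g ℓ := by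
  have hz : Continuous fun θ => circ θ ^ (-ℓ) :=
    continuous_circ.zpow₀ _ fun θ => Or.inl (circ_ne_zero θ)
  simp only [fourierCoeff'_eq, mul_add]
  have h1 : IntervalIntegrable (fun θ => circ θ ^ (-ℓ) * f θ) volume (-Real.pi) Real.pi :=
    (hz.mul hf).intervalIntegrable _ _
  have h2 : IntervalIntegrable (fun θ => circ θ ^ (-ℓ) * g θ) volume (-Real.pi) Real.pi :=
    (hz.mul hg).intervalIntegrable _ _
  rw [intervalIntegral.integral_add h1 h2, mul_add]

theorem fourierCoeff'_const (c : ℂ) (ℓ : ℤ) :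
    fourierCoeff' (fun _ => c) ℓ = if ℓ = 0 then c else 0 := by
  rw [fourierCoeff'_eq, intervalIntegral.integral_mul_const, ← mul_assoc, integral_circ_zpow]
  simp

theorem fourierCoeff'_star (f : ℝ → ℂ) (ℓ : ℤ) :
    fourierCoeff' (fun θ => star (f θ)) ℓ = star (fourierCoeff' f (-ℓ)) := by
  rw [fourierCoeff'_eq, fourierCoeff'_eq, star_mul']
  congr 1
  · rw [← Complex.ofReal_inv, Complex.star_def, Complex.conj_ofReal]
  · rw [Complex.star_def, ← intervalIntegral.intervalIntegral_conj]
    refine intervalIntegral.integral_congr fun θ _ => ?_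
    simp only [← Complex.star_def]
    rw [star_mul', star_zpow₀, star_circ, inv_zpow', neg_neg]

theorem fourierCoeff'_const_mul (c : ℂ) (f : ℝ → ℂ) (ℓ : ℤ) :
    fourierCoeff' (fun θ => c * f θ) ℓ = c * fourierCoeff' f ℓ := by
  simp only [fourierCoeff'_eq, mul_left_comm _ c]
  rw [intervalIntegral.integral_const_mul, mul_left_comm]

theorem fourierCoeff'_congr_ae {f g : ℝ → ℂ} (h : f =ᵐ[arc] g) (ℓ : ℤ) :
    fourierCoeff' f ℓ = fourierCoeff' g ℓ := by
  simp only [fourierCoeff'_eq, integral_arc]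
  congr 1
  refine integral_congr_ae ?_
  filter_upwards [h] with θ hθ
  rw [hθ]

theorem toeplitzDet_const_mul (c : ℂ) (f : ℝ → ℂ) (n : ℕ) :
    toeplitzDet (fun θ => c * f θ) n = c ^ n * toeplitzDet f n := by
  have : (Matrix.of fun j k : Fin n => fourierCoeff' (fun θ => c * f θ) ((j : ℤ) - (k : ℤ))) =
      c • Matrix.of fun j k : Fin n => fourierCoeff' f ((j : ℤ) - (k : ℤ)) := by
    ext j k
    simp [fourierCoeff'_const_mul]
  rw [toeplitzDet, this, Matrix.det_smul, toeplitzDet, Fintype.card_fin]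

theorem toeplitzDet_congr_ae {f g : ℝ → ℂ} (h : f =ᵐ[arc] g) (n : ℕ) :
    toeplitzDet f n = toeplitzDet g n := by
  simp only [toeplitzDet, fourierCoeff'_congr_ae h]

theorem tendsto_toeplitzDet {f : ℕ → ℝ → ℂ} {g : ℝ → ℂ} (hf : ∀ N, Integrable (f N) arc)
    (hg : Integrable g arc) (h : Tendsto (fun N => ∫ θ, ‖f N θ - g θ‖ ∂arc) atTop (𝓝 0)) (n : ℕ) :
    Tendsto (fun N => toeplitzDet (f N) n) atTop (𝓝 (toeplitzDet g n)) := by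
  refine ((continuous_id.matrix_det).tendsto _).comp ?_
  refine tendsto_pi_nhds.2 fun j => tendsto_pi_nhds.2 fun k => ?_
  exact tendsto_fourierCoeff' hf hg h _

/-! ### Passage to the limit -/

theorem tendsto_lp_apply {u : ℕ → lp (fun _ : ℕ => ℂ) 2} {a : lp (fun _ : ℕ => ℂ) 2}
    (h : Tendsto u atTop (𝓝 a)) (j : ℕ) : Tendsto (fun N => u N j) atTop (𝓝 (a j)) := by
  rw [tendsto_iff_norm_sub_tendsto_zero] at h ⊢
  refine squeeze_zero (fun _ => norm_nonneg _) (fun N => ?_) h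
  rw [← Pi.sub_apply, ← lp.coeFn_sub]
  exact lp.norm_apply_le_norm two_ne_zero _ j

/-- The vector with coordinates `√k c_k`, where `k = j + 1`. -/
noncomputable def weighted (c : ℕ → ℂ) (hc : Summable fun j : ℕ => ((j : ℝ) + 1) * ‖c j‖ ^ 2) :
    lp (fun _ : ℕ => ℂ) 2 :=
  ⟨fun j => ((√((j : ℝ) + 1) : ℝ) : ℂ) * c j, memℓp_gen (by
    refine hc.congr fun j => ?_
    simp only [ENNReal.toReal_ofNat, Real.rpow_two, norm_mul, Complex.norm_real, mul_pow,
      Real.norm_eq_abs, sq_abs]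
    rw [Real.sq_sqrt (by positivity)])⟩

theorem weighted_apply (c : ℕ → ℂ) (hc : Summable fun j : ℕ => ((j : ℝ) + 1) * ‖c j‖ ^ 2)
    (j : ℕ) : weighted c hc j = ((√((j : ℝ) + 1) : ℝ) : ℂ) * c j := rfl

theorem tendsto_logCoeff {l : ℕ → List ℂ} (hl : ∀ N, InDisk (l N)) {c : ℕ → ℂ}
    {hc : Summable fun j : ℕ => ((j : ℝ) + 1) * ‖c j‖ ^ 2}
    (h : Tendsto (fun N => logVec (hl N)) atTop (𝓝 (weighted c hc))) (j : ℕ) :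
    Tendsto (fun N => logCoeff (l N) (j + 1)) atTop (𝓝 (c j)) := by
  have h1 := (tendsto_lp_apply h j).const_mul (((√((j : ℝ) + 1))⁻¹ : ℝ) : ℂ)
  rw [weighted_apply, ← mul_assoc, ← Complex.ofReal_mul, inv_mul_cancel₀ (by positivity),
    Complex.ofReal_one, one_mul] at h1
  exact h1.congr fun N => (logCoeff_succ (hl N) j).symm

theorem hasSum_inner_weighted {a b : ℕ → ℂ} (ha : Summable fun j : ℕ => ((j : ℝ) + 1) * ‖a j‖ ^ 2)
    (hb : Summable fun j : ℕ => ((j : ℝ) + 1) * ‖star (b j)‖ ^ 2) :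
    HasSum (fun j : ℕ => ((j + 1 : ℕ) : ℂ) * a j * b j)
      (inner ℂ (weighted (fun j => star (b j)) hb) (weighted a ha)) := by
  refine (lp.hasSum_inner _ _).congr_fun fun j => ?_
  have h2 : (√((j : ℝ) + 1) : ℂ) * (√((j : ℝ) + 1) : ℂ) = ((j + 1 : ℕ) : ℂ) := by
    rw [← Complex.ofReal_mul, Real.mul_self_sqrt (by positivity)]; push_cast; rfl
  rw [weighted_apply, weighted_apply, ← h2]
  simp only [RCLike.inner_apply, map_mul, Complex.conj_ofReal, Complex.star_def, Complex.conj_conj]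
  ring

/-- If the vectors `logVec` of `x N`, `y N` converge to `a`, `b` and the determinants of each size
converge to `D n`, then the latter convergence is uniform in `n`, so that the limits in `N` and `n`
may be exchanged. -/
theorem tendsto_toeplitzDet_of_approx {x y : ℕ → List ℂ} (hx : ∀ N, InDisk (x N))
    (hy : ∀ N, InDisk (y N)) {a b : lp (fun _ : ℕ => ℂ) 2}
    (ha : Tendsto (fun N => logVec (hx N)) atTop (𝓝 a))
    (hb : Tendsto (fun N => logVec (hy N)) atTop (𝓝 b)) {D : ℕ → ℂ}
    (hD : ∀ n, Tendsto (fun N => recipDet n (x N) (y N)) atTop (𝓝 (D n))) :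
    Tendsto D atTop (𝓝 (Complex.exp (inner ℂ b a))) := by
  have hmod : Tendsto (fun p : ℕ × ℕ => modulus (logVec (hx p.1)) (logVec (hy p.1))
      (logVec (hx p.2)) (logVec (hy p.2))) (atTop ×ˢ atTop) (𝓝 0) :=
    tendsto_modulus (ha.comp tendsto_fst) (hb.comp tendsto_fst) (ha.comp tendsto_snd)
      (hb.comp tendsto_snd)
  have hunif : TendstoUniformly (fun N n => recipDet n (x N) (y N)) D atTop := by
    rw [Metric.tendstoUniformly_iff]
    intro ε hε
    have h1 := (hmod.eventually (gt_mem_nhds (half_pos hε))).curry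
    filter_upwards [h1] with N hN n
    rw [dist_comm, dist_eq_norm]
    refine lt_of_le_of_lt ?_ (half_lt_self hε)
    refine le_of_tendsto ((tendsto_const_nhds.sub (hD n)).norm) ?_
    filter_upwards [hN] with M hM
    exact (norm_recipDet_sub_le n (hx N) (hy N) (hx M) (hy M)).trans hM.le
  refine hunif.tendsto_of_eventually_tendsto
    (L := fun N => Complex.exp (inner ℂ (logVec (hy N)) (logVec (hx N))))
    (Eventually.of_forall fun N => ?_) ?_
  · refine tendsto_const_nhds.congr' ?_
    filter_upwards [eventually_gt_atTop (y N).length] with n hn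
    exact (recipDet_eq_exp (hx N) (hy N) hn).symm
  · exact (Complex.continuous_exp.tendsto _).comp (hb.inner ha)

/-- If the logarithms of the approximating symbols have Fourier coefficients converging to those of
`V` and converge in weighted `ℓ²`, then the approximating symbols converge in mean to
`exp (V - V_0)`. -/
theorem exists_limit_symbol {V : ℝ → ℂ}
    (hint : IntervalIntegrable V volume (-Real.pi) Real.pi)
    {x y : ℕ → List ℂ} (hx : ∀ N, InDisk (x N)) (hy : ∀ N, InDisk (y N))
    {a b : lp (fun _ : ℕ => ℂ) 2}
    (ha : Tendsto (fun N => logVec (hx N)) atTop (𝓝 a))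
    (hb : Tendsto (fun N => logVec (hy N)) atTop (𝓝 b))
    (hxV : ∀ j : ℕ, Tendsto (fun N => logCoeff (x N) (j + 1)) atTop
      (𝓝 (fourierCoeff' V ((j : ℤ) + 1))))
    (hyV : ∀ j : ℕ, Tendsto (fun N => logCoeff (y N) (j + 1)) atTop
      (𝓝 (star (fourierCoeff' V (-((j : ℤ) + 1)))))) :
    ∃ E : ℝ → ℂ, Integrable E arc ∧
      Tendsto (fun N => ∫ θ, ‖recip (x N) (circ θ) * star (recip (y N) (circ θ)) - E θ‖ ∂arc)
        atTop (𝓝 0) ∧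
      (fun θ => Complex.exp (V θ)) =ᵐ[arc] fun θ => Complex.exp (fourierCoeff' V 0) * E θ := by
  set V0 := fourierCoeff' V 0 with hV0
  have hpi : (0 : ℝ) < 2 * Real.pi := Real.two_pi_pos
  let u : ℕ → ℝ → ℂ := fun N θ =>
    (V0 + logRecip (x N) (circ θ)) + star (logRecip (y N) (circ θ))
  have cx := fun N => continuous_logRecip_circ (hx N)
  have cy := fun N => continuous_logRecip_circ (hy N)
  have hu : ∀ N, Integrable (u N) arc := fun N =>
    integrable_arc ((continuous_const.add (cx N)).add (cy N).star)
  -- The approximating logarithms form a Cauchy sequence in the mean.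
  have hB : Tendsto (fun p : ℕ × ℕ => 2 * Real.pi * (‖logVec (hx p.1) - logVec (hx p.2)‖ +
      ‖logVec (hy p.1) - logVec (hy p.2)‖)) atTop (𝓝 0) := by
    rw [← prod_atTop_atTop_eq]
    have h1 := ((ha.comp tendsto_fst).sub (ha.comp (tendsto_snd (f := atTop (α := ℕ))))).norm
    have h2 := ((hb.comp tendsto_fst).sub (hb.comp (tendsto_snd (f := atTop (α := ℕ))))).norm
    simpa [Function.comp_def] using (h1.add h2).const_mul (2 * Real.pi)
  obtain ⟨U, hU, hU1, hUm⟩ := exists_limit_of_cauchy hu (B := fun N M =>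
    2 * Real.pi * (‖logVec (hx N) - logVec (hx M)‖ + ‖logVec (hy N) - logVec (hy M)‖)) hB (by
      intro N M
      have h1 := mean_logRecip_sub_le (hx N) (hx M)
      have h2 := mean_logRecip_sub_le (hy N) (hy M)
      have h3 := add_le_add h1 h2
      rw [← mul_add, inv_mul_le_iff₀ hpi] at h3
      refine le_trans ?_ h3
      have c1 : Integrable (fun θ => ‖logRecip (x N) (circ θ) - logRecip (x M) (circ θ)‖) arc :=
        integrable_arc ((cx N).sub (cx M)).norm
      have c2 : Integrable (fun θ => ‖logRecip (y N) (circ θ) - logRecip (y M) (circ θ)‖) arc :=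
        integrable_arc ((cy N).sub (cy M)).norm
      rw [← integral_add c1 c2]
      refine integral_mono ((hu N).sub (hu M)).norm (c1.add c2) fun θ => ?_
      have e : u N θ - u M θ = (logRecip (x N) (circ θ) - logRecip (x M) (circ θ)) +
          star (logRecip (y N) (circ θ) - logRecip (y M) (circ θ)) := by
        simp only [u, star_sub]; ring
      simp only [e]
      refine (norm_add_le _ _).trans ?_
      rw [norm_star])
  -- Their limit has the Fourier coefficients of `V`.
  have hcoef : ∀ ℓ, fourierCoeff' U ℓ = fourierCoeff' V ℓ := by
    intro ℓ
    refine tendsto_nhds_unique (tendsto_fourierCoeff' hu hU hU1 ℓ) ?_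
    have e : ∀ N, fourierCoeff' (u N) ℓ = (if ℓ = 0 then V0 else 0) +
        (if 0 < ℓ then logCoeff (x N) ℓ.toNat else 0) +
        star (if 0 < -ℓ then logCoeff (y N) (-ℓ).toNat else 0) := by
      intro N
      rw [fourierCoeff'_add (f := fun θ => V0 + logRecip (x N) (circ θ))
          (g := fun θ => star (logRecip (y N) (circ θ)))
          (continuous_const.add (cx N)) (cy N).star,
        fourierCoeff'_add (f := fun _ => V0) (g := fun θ => logRecip (x N) (circ θ))
          continuous_const (cx N), fourierCoeff'_const,
        fourierCoeff'_star, fourierCoeff'_logRecip (hx N), fourierCoeff'_logRecip (hy N)]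
    simp only [e]
    rcases lt_trichotomy ℓ 0 with h | rfl | h
    · obtain ⟨j, rfl⟩ : ∃ j : ℕ, ℓ = -((j : ℤ) + 1) := ⟨(-ℓ - 1).toNat, by omega⟩
      have e1 : (- -((j : ℤ) + 1)).toNat = j + 1 := by omega
      simp only [h.ne, not_lt_of_gt h, if_false, neg_pos.2 h, if_true, zero_add, e1]
      simpa using (hyV j).star
    · simp [hV0]
    · obtain ⟨j, rfl⟩ : ∃ j : ℕ, ℓ = (j : ℤ) + 1 := ⟨(ℓ - 1).toNat, by omega⟩
      have e1 : ((j : ℤ) + 1).toNat = j + 1 := by omega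
      have e2 : ¬ 0 < -((j : ℤ) + 1) := by omega
      simp only [h.ne', h, e2, if_false, if_true, zero_add, e1, star_zero, add_zero]
      exact hxV j
  have hVi := integrable_arc_iff.1 hint
  have hUV : ∀ᵐ θ ∂arc, U θ - V θ = 0 := by
    refine ae_eq_zero_of_fourierCoeff' (integrable_arc_iff.2 (hU.sub hVi)) fun ℓ => ?_
    have h1 := hcoef ℓ
    have hz : Continuous fun θ => circ θ ^ (-ℓ) :=
      continuous_circ.zpow₀ _ fun θ => Or.inl (circ_ne_zero θ)
    have hi : ∀ {f : ℝ → ℂ}, Integrable f arc → Integrable (fun θ => circ θ ^ (-ℓ) * f θ) arc :=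
      fun hf => hf.bdd_mul (c := 1) hz.aestronglyMeasurable
        (Eventually.of_forall fun θ => by simp [norm_circ])
    simp only [fourierCoeff'_eq, integral_arc] at h1 ⊢
    simp only [mul_sub]
    rw [integral_sub (hi hU) (hi hVi), mul_sub, h1, sub_self]
  -- The approximating symbols also converge in mean, and both limits are also limits almost
  -- everywhere along a common subsequence.
  have cg : ∀ N, Continuous fun θ => recip (x N) (circ θ) * star (recip (y N) (circ θ)) :=
    fun N => (continuous_recip_circ (hx N)).mul (continuous_recip_circ (hy N)).star
  obtain ⟨E, hE, hE1, hEm⟩ := exists_limit_of_cauchy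
    (f := fun N θ => recip (x N) (circ θ) * star (recip (y N) (circ θ))) (fun N => integrable_arc (cg N))
    (B := fun N M => 2 * Real.pi * modulus (logVec (hx N)) (logVec (hy N)) (logVec (hx M))
      (logVec (hy M))) (by
      rw [← prod_atTop_atTop_eq]
      simpa using (tendsto_modulus (ha.comp tendsto_fst) (hb.comp tendsto_fst)
        (ha.comp (tendsto_snd (f := atTop (α := ℕ))))
        (hb.comp tendsto_snd)).const_mul (2 * Real.pi)) (by
      intro N M
      have h1 := mean_recip_mul_star_sub_le (hx N) (hy N) (hx M) (hy M)
      rwa [inv_mul_le_iff₀ hpi] at h1)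
  refine ⟨E, hE, hE1, ?_⟩
  obtain ⟨ns, hns, h1⟩ := hUm.exists_seq_tendsto_ae
  obtain ⟨ms, hms, h2⟩ := (hEm.comp hns.tendsto_atTop).exists_seq_tendsto_ae
  filter_upwards [h1, h2, hUV] with θ h1 h2 h3
  have h4 := ((Complex.continuous_exp.tendsto _).comp h1).comp hms.tendsto_atTop
  rw [sub_eq_zero.1 h3] at h4
  refine tendsto_nhds_unique h4 ((h2.const_mul (Complex.exp V0)).congr fun i => ?_)
  simp only [Function.comp_apply, u, Complex.exp_add]
  rw [exp_logRecip (hx _) (norm_circ θ).le, Complex.star_def, Complex.exp_conj,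
    exp_logRecip (hy _) (norm_circ θ).le, mul_assoc]

/-- **Johansson's Strong Szegő Limit Theorem for complex symbols.** If `V ∈ L¹(S¹)`
(possibly complex-valued) has Fourier coefficients with `∑_k |k| |V_k|² < ∞`, then
`∑_{k≥1} k V_k V_{-k}` converges absolutely and
`D_n(e^V)/exp(n V_0) → exp(∑_{k≥1} k V_k V_{-k})`. -/
theorem johansson_strong_szego
    (V : ℝ → ℂ) (hper : Function.Periodic V (2 * Real.pi))
    (hint : IntervalIntegrable V volume (-Real.pi) Real.pi)
    (hsum : Summable (fun k : ℤ => (|k| : ℝ) * ‖fourierCoeff' V k‖ ^ 2)) :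
    Summable (fun k : ℕ => ‖((k + 1 : ℕ) : ℂ) * fourierCoeff' V ((k : ℤ) + 1) *
        fourierCoeff' V (-((k : ℤ) + 1))‖) ∧
    Tendsto (fun n : ℕ =>
        toeplitzDet (fun θ => Complex.exp (V θ)) n /
          Complex.exp ((n : ℂ) * fourierCoeff' V 0))
      atTop
      (𝓝 (Complex.exp (∑' k : ℕ, ((k + 1 : ℕ) : ℂ) * fourierCoeff' V ((k : ℤ) + 1) *
        fourierCoeff' V (-((k : ℤ) + 1))))) := by
  have ha : Summable fun j : ℕ => ((j : ℝ) + 1) * ‖fourierCoeff' V ((j : ℤ) + 1)‖ ^ 2 := by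
    refine (hsum.comp_injective (i := fun j : ℕ => (j : ℤ) + 1) fun i j h => by
      simpa using h).congr fun j => ?_
    simp only [Function.comp_apply]
    push_cast
    rw [abs_of_nonneg (by positivity)]
  have hb : Summable fun j : ℕ =>
      ((j : ℝ) + 1) * ‖star (fourierCoeff' V (-((j : ℤ) + 1)))‖ ^ 2 := by
    refine (hsum.comp_injective (i := fun j : ℕ => -((j : ℤ) + 1)) fun i j h => by
      simpa using h).congr fun j => ?_
    simp only [Function.comp_apply, norm_star]
    push_cast
    rw [abs_neg, abs_of_nonneg (by positivity)]
  have hS := hasSum_inner_weighted ha hb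
  refine ⟨hS.summable.norm, ?_⟩
  rw [hS.tsum_eq]
  obtain ⟨x, hx, hxlim⟩ := exists_logVec_tendsto (weighted _ ha)
  obtain ⟨y, hy, hylim⟩ := exists_logVec_tendsto (weighted _ hb)
  obtain ⟨E, hE, hE1, hVE⟩ := exists_limit_symbol hint hx hy hxlim hylim
    (tendsto_logCoeff hx hxlim) (tendsto_logCoeff hy hylim)
  refine (tendsto_toeplitzDet_of_approx hx hy hxlim hylim fun n =>
    tendsto_toeplitzDet (f := fun N θ => recip (x N) (circ θ) * star (recip (y N) (circ θ)))
      (fun N => integrable_arc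
      ((continuous_recip_circ (hx N)).mul (continuous_recip_circ (hy N)).star)) hE hE1 n).congr
    fun n => ?_
  rw [toeplitzDet_congr_ae hVE, toeplitzDet_const_mul, Complex.exp_nat_mul,
    mul_div_cancel_left₀ _ (pow_ne_zero _ (Complex.exp_ne_zero _))]
end
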